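/- Let G be a connected planar graph on n ≥ 5 vertices and let r ∈ V(G) be a vertex of degree exactly 4 such that at most one neighbour of r has degree greater than 5. Then sn₂(G, r) > n/6 − 1. -/

import Mathlib

/-- The set of vertices on fire after `t` fire-spread rounds, when the fire breaks out
at `v` and the firefighters protect the vertices of `P s` in round `s + 1` (protection
happens just before the `s`-th spread step and is permanent). -/
def burnedSet {V : Type*} (G : SimpleGraph V) (v : V) (P : ℕ → Set V) : ℕ → Set V
  | 0 => {v}
  | t + 1 => burnedSet G v P t ∪
      {w | (∃ u ∈ burnedSet G v P t, G.Adj u w) ∧ ∀ s ≤ t, w ∉ P s}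

/-- A strategy `P` is valid for the per-round budgets `b` if in each round it protects
at most `b t` vertices, none of which are already on fire. -/
def ValidStrategy {V : Type*} (G : SimpleGraph V) (b : ℕ → ℕ) (v : V) (P : ℕ → Set V) : Prop :=
  ∀ t, (P t).Finite ∧ (P t).ncard ≤ b t ∧ Disjoint (P t) (burnedSet G v P t)

/-- `sn G b v` is the maximum number of vertices that can be saved (i.e. that never
catch fire) when the fire breaks out at `v` and the firefighters may protect at most
`b t` vertices in round `t + 1`. -/
noncomputable def sn {V : Type*} (G : SimpleGraph V) (b : ℕ → ℕ) (v : V) : ℕ :=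
  sSup {m | ∃ P, ValidStrategy G b v P ∧
    m = Nat.card {w : V | ∀ t, w ∉ burnedSet G v P t}}

/-- The surviving rate of `G` with per-round budgets `b` : the expected fraction of
vertices that can be saved when the starting vertex is chosen uniformly at random. -/
noncomputable def survivingRate {V : Type*} [Fintype V] (G : SimpleGraph V) (b : ℕ → ℕ) : ℝ :=
  (∑ v : V, (sn G b v : ℝ)) / (Fintype.card V : ℝ) ^ 2

/-- A plane embedding of a simple graph: vertices are points of the plane and edges are
simple arcs between their endpoints, such that arcs avoid all other vertices and two
arcs of distinct edges meet only in common endpoints. -/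
structure PlaneEmbedding {V : Type*} (G : SimpleGraph V) where
  pos : V → ℝ × ℝ
  arc : V → V → ℝ → ℝ × ℝ
  pos_inj : Function.Injective pos
  arc_cont : ∀ ⦃u v⦄, G.Adj u v → Continuous (arc u v)
  arc_injOn : ∀ ⦃u v⦄, G.Adj u v → Set.InjOn (arc u v) (Set.Icc 0 1)
  arc_zero : ∀ ⦃u v⦄, G.Adj u v → arc u v 0 = pos u
  arc_one : ∀ ⦃u v⦄, G.Adj u v → arc u v 1 = pos v
  arc_symm : ∀ ⦃u v⦄, G.Adj u v → ∀ t, arc v u t = arc u v (1 - t)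
  arc_avoid : ∀ ⦃u v⦄, G.Adj u v → ∀ w : V, pos w ∉ arc u v '' Set.Ioo 0 1
  arc_meet : ∀ ⦃u v x y⦄, G.Adj u v → G.Adj x y → s(u, v) ≠ s(x, y) →
      arc u v '' Set.Icc 0 1 ∩ arc x y '' Set.Icc 0 1 ⊆
        ({pos u, pos v} : Set (ℝ × ℝ)) ∩ {pos x, pos y}

/-- A graph is planar if it admits a plane embedding. -/
def IsPlanar {V : Type*} (G : SimpleGraph V) : Prop :=
  Nonempty (PlaneEmbedding G)


namespace FF

theorem exists_log {X : Type} [TopologicalSpace X] [LocallyPathConnectedSpace X]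
    [SimplyConnectedSpace X] (g : X → ℂ) (hg : Continuous g) (h0 : ∀ x, g x ≠ 0) :
    ∃ f : X → ℂ, Continuous f ∧ ∀ x, Complex.exp (f x) = g x := by
  have hne : Nonempty X := inferInstance
  obtain ⟨x0⟩ := hne
  obtain ⟨F, ⟨-, hF⟩, -⟩ := Complex.isCoveringMapOn_exp.existsUnique_continuousMap_lifts
    ⟨g, hg⟩ (a₀ := x0) (Complex.exp_log (h0 x0)) (fun x => by simpa using h0 x)
  exact ⟨F, F.continuous, fun x => congrFun hF x⟩

theorem log_unique (f f' : ℝ → ℂ) (hf : Continuous f) (hf' : Continuous f')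
    (h : ∀ x, Complex.exp (f x) = Complex.exp (f' x)) (x y : ℝ) : f x - f y = f' x - f' y := by
  obtain ⟨k, hk⟩ := Complex.exp_eq_exp_iff_exists_int.1 (h y)
  obtain ⟨F, -, hu⟩ := Complex.isCoveringMapOn_exp.existsUnique_continuousMap_lifts
    (⟨fun x => Complex.exp (f x), by fun_prop⟩ : C(ℝ, ℂ)) (a₀ := y) (e₀ := f y) rfl
    (fun x => by simp)
  have h1 := hu ⟨f, hf⟩ ⟨rfl, rfl⟩
  have h2 := hu ⟨fun x => f' x + k * (2 * Real.pi * Complex.I), by fun_prop⟩ ⟨by simp [hk], by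
    ext x
    simp only [Function.comp_apply, ContinuousMap.coe_mk]
    rw [h x, Complex.exp_eq_exp_iff_exists_int]
    exact ⟨k, rfl⟩⟩
  have h3 := congrArg (fun q : C(ℝ, ℂ) => q x) (h1.trans h2.symm)
  simp only [ContinuousMap.coe_mk] at h3
  rw [h3, hk]; ring

open Classical in
noncomputable def dlog (g : ℝ → ℂ) : ℂ :=
  if h : ∃ f : ℝ → ℂ, Continuous f ∧ ∀ x, Complex.exp (f x) = g x then h.choose 1 - h.choose 0
  else 0

theorem dlog_eq (g f : ℝ → ℂ) (hf : Continuous f) (h : ∀ x, Complex.exp (f x) = g x) :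
    dlog g = f 1 - f 0 := by
  have hh : ∃ f : ℝ → ℂ, Continuous f ∧ ∀ x, Complex.exp (f x) = g x := ⟨f, hf, h⟩
  unfold dlog
  rw [dif_pos hh]
  exact log_unique _ _ hh.choose_spec.1 hf (fun x => by rw [hh.choose_spec.2, h]) _ _

theorem exp_dlog (g : ℝ → ℂ) (hg : Continuous g) (h0 : ∀ x, g x ≠ 0) :
    Complex.exp (dlog g) = g 1 / g 0 := by
  obtain ⟨f, hf, h⟩ := exists_log g hg h0
  rw [dlog_eq g f hf h, Complex.exp_sub, h, h]

theorem dlog_square (e f : ℝ → ℂ) (he : Continuous e) (hf : Continuous f)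
    (h0 : ∀ s t, e s ≠ f t) :
    dlog (fun s => e s - f 0) + dlog (fun t => f t - e 1) - dlog (fun s => e s - f 1)
      - dlog (fun t => f t - e 0) = 0 := by
  obtain ⟨H, hH, hh⟩ := exists_log (fun x : ℝ × ℝ => e x.1 - f x.2) (by fun_prop)
    (fun x => sub_ne_zero.2 (h0 _ _))
  have k1 : ∀ c, dlog (fun s => e s - f c) = H (1, c) - H (0, c) := fun c =>
    dlog_eq _ (fun s => H (s, c)) (by fun_prop) (fun s => hh (s, c))
  have k2 : ∀ c, dlog (fun t => f t - e c) = H (c, 1) - H (c, 0) := fun c => by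
    rw [dlog_eq _ (fun t => H (c, t) + Real.pi * Complex.I) (by fun_prop) (fun t => ?_)]
    · ring
    · rw [Complex.exp_add, hh, Complex.exp_pi_mul_I]; simp
  rw [k1, k1, k2, k2]; ring

def tau {ι : Type} [LinearOrder ι] (a b : ι) : ℤ := if a < b then 1 else -1

theorem exists_winding {ι : Type} [LinearOrder ι] (p : ι → ℂ) (E : ι → ι → Prop)
    (γ : ι → ι → ℝ → ℂ)
    (hp : ∀ a b, a ≠ b → p a ≠ p b)
    (hc : ∀ a b, E a b → Continuous (γ a b))
    (h0 : ∀ a b, E a b → γ a b 0 = p a) (h1 : ∀ a b, E a b → γ a b 1 = p b)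
    (hI : ∀ a b c d, E a b → E c d → a ≠ c → a ≠ d → b ≠ c → b ≠ d → ∀ s t, γ a b s ≠ γ c d t) :
    ∃ n : ι → ι → ι → ℤ, ∀ a b c d, E a b → E c d → a ≠ c → a ≠ d → b ≠ c → b ≠ d →
      2 * (n c a b + n b c d - n d a b - n a c d) + (tau b c + tau d b + tau a d + tau c a) = 0 := by
  classical
  let Θ : ι → ι → ℂ := fun v w =>
    if v < w then Complex.log (p w - p v) else Complex.log (p v - p w) + Real.pi * Complex.I
  have hΘ : ∀ v w, v ≠ w → Complex.exp (Θ v w) = p w - p v := by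
    intro v w hvw
    simp only [Θ]
    split_ifs with h
    · exact Complex.exp_log (sub_ne_zero.2 (hp _ _ hvw.symm))
    · rw [Complex.exp_add, Complex.exp_log (sub_ne_zero.2 (hp _ _ hvw)), Complex.exp_pi_mul_I]
      ring
  have hτ : ∀ v w, v ≠ w → Θ w v - Θ v w = (tau v w : ℂ) * (Real.pi * Complex.I) := by
    intro v w hvw
    simp only [Θ, tau]
    rcases lt_or_gt_of_ne hvw with h | h
    · rw [if_pos h, if_neg h.not_gt, if_pos h]; push_cast; ring
    · rw [if_pos h, if_neg h.not_gt, if_neg h.not_gt]; push_cast; ring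
  have key : ∀ v a b, ∃ k : ℤ, E a b → v ≠ a → v ≠ b → (∀ t, γ a b t ≠ p v) →
      dlog (fun t => γ a b t - p v) = Θ v b - Θ v a + k * (2 * Real.pi * Complex.I) := by
    intro v a b
    by_cases hE : E a b ∧ v ≠ a ∧ v ≠ b ∧ ∀ t, γ a b t ≠ p v
    · obtain ⟨hE, hva, hvb, ht⟩ := hE
      have := exp_dlog (fun t => γ a b t - p v) ((hc a b hE).sub continuous_const)
        (fun t => sub_ne_zero.2 (ht t))
      simp only [h0 a b hE, h1 a b hE] at this
      rw [← hΘ v b hvb, ← hΘ v a hva, ← Complex.exp_sub,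
        Complex.exp_eq_exp_iff_exists_int] at this
      obtain ⟨k, hk⟩ := this
      exact ⟨k, fun _ _ _ _ => hk⟩
    · exact ⟨0, fun q1 q2 q3 q4 => absurd ⟨q1, q2, q3, q4⟩ hE⟩
  choose n hn using key
  refine ⟨n, fun a b c d hab hcd hac had hbc hbd => ?_⟩
  have hI' := hI a b c d hab hcd hac had hbc hbd
  have sq := dlog_square _ _ (hc a b hab) (hc c d hcd) hI'
  rw [h0 a b hab, h1 a b hab, h0 c d hcd, h1 c d hcd] at sq
  rw [hn c a b hab hac.symm hbc.symm (fun t => by rw [← h0 c d hcd]; exact hI' _ _),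
    hn d a b hab had.symm hbd.symm (fun t => by rw [← h1 c d hcd]; exact hI' _ _),
    hn a c d hcd hac had (fun t => by rw [← h0 a b hab]; exact (hI' _ _).symm),
    hn b c d hcd hbc hbd (fun t => by rw [← h1 a b hab]; exact (hI' _ _).symm)] at sq
  have e1 := hτ b c hbc
  have e2 := hτ d b hbd.symm
  have e3 := hτ a d had
  have e4 := hτ c a hac.symm
  have : ((2 * (n c a b + n b c d - n d a b - n a c d) +
      (tau b c + tau d b + tau a d + tau c a) : ℤ) : ℂ) * (Real.pi * Complex.I) = 0 := by
    push_cast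
    linear_combination sq - e1 - e2 - e3 - e4
  have hpi : (Real.pi * Complex.I : ℂ) ≠ 0 := by simp [Real.pi_ne_zero]
  exact_mod_cast (mul_eq_zero.1 this).resolve_right hpi

theorem no_K33_drawing (p : Fin 6 → ℂ) (γ : Fin 6 → Fin 6 → ℝ → ℂ)
    (hp : ∀ a b, a ≠ b → p a ≠ p b)
    (hc : ∀ a b : Fin 6, a < 3 → 3 ≤ b → Continuous (γ a b))
    (h0 : ∀ a b : Fin 6, a < 3 → 3 ≤ b → γ a b 0 = p a)
    (h1 : ∀ a b : Fin 6, a < 3 → 3 ≤ b → γ a b 1 = p b)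
    (hI : ∀ a b c d : Fin 6, a < 3 → 3 ≤ b → c < 3 → 3 ≤ d → a ≠ c → b ≠ d →
      ∀ s t, γ a b s ≠ γ c d t) : False := by
  obtain ⟨n, hn⟩ := exists_winding p (fun a b => a < 3 ∧ 3 ≤ b) γ hp
    (fun a b h => hc a b h.1 h.2) (fun a b h => h0 a b h.1 h.2) (fun a b h => h1 a b h.1 h.2)
    (fun a b c d h h' k _ _ k' => hI a b c d h.1 h.2 h'.1 h'.2 k k')
  have H : ∀ a b c d : Fin 6, a < 3 → 3 ≤ b → c < 3 → 3 ≤ d → a < c → b ≠ d →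
      2 * (n c a b + n b c d - n d a b - n a c d) +
        (tau b c + tau d b + tau a d + tau c a) = 0 := by
    intro a b c d h1 h2 h3 h4 h5 h6
    exact hn a b c d ⟨h1, h2⟩ ⟨h3, h4⟩ (by omega) (by omega) (by omega) h6
  have q : ∀ a c : Fin 6, a < 3 → c < 3 → a < c → ∀ b d : Fin 6, 3 ≤ b → 3 ≤ d → b < d → 
      2 * (n c a b + n b c d - n d a b - n a c d) - 2 = 0 ∧
      2 * (n c a d + n d c b - n b a d - n a c b) + 0 = 0 := by
    intro a c h1 h2 h3 b d h4 h5 h6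
    have A := H a b c d h1 h4 h2 h5 h3 h6.ne
    have B := H a d c b h1 h5 h2 h4 h3 h6.ne'
    simp only [tau] at A B
    rw [if_neg (by omega), if_neg (by omega), if_pos (by omega), if_neg (by omega)] at A
    rw [if_neg (by omega), if_pos (by omega), if_pos (by omega), if_neg (by omega)] at B
    constructor <;> omega
  have q1 := q 0 1 (by decide) (by decide) (by decide)
  have q2 := q 0 2 (by decide) (by decide) (by decide)
  have q3 := q 1 2 (by decide) (by decide) (by decide)
  have a1 := q1 3 4 (by decide) (by decide) (by decide)
  have a2 := q1 3 5 (by decide) (by decide) (by decide)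
  have a3 := q1 4 5 (by decide) (by decide) (by decide)
  have b1 := q2 3 4 (by decide) (by decide) (by decide)
  have b2 := q2 3 5 (by decide) (by decide) (by decide)
  have b3 := q2 4 5 (by decide) (by decide) (by decide)
  have c1 := q3 3 4 (by decide) (by decide) (by decide)
  have c2 := q3 3 5 (by decide) (by decide) (by decide)
  have c3 := q3 4 5 (by decide) (by decide) (by decide)
  clear q q1 q2 q3 H hn
  omega

theorem no_K5_drawing (p : Fin 5 → ℂ) (γ : Fin 5 → Fin 5 → ℝ → ℂ)
    (hp : ∀ a b, a ≠ b → p a ≠ p b)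
    (hc : ∀ a b : Fin 5, a < b → Continuous (γ a b))
    (h0 : ∀ a b : Fin 5, a < b → γ a b 0 = p a)
    (h1 : ∀ a b : Fin 5, a < b → γ a b 1 = p b)
    (hI : ∀ a b c d : Fin 5, a < b → c < d → a ≠ c → a ≠ d → b ≠ c → b ≠ d →
      ∀ s t, γ a b s ≠ γ c d t) : False := by
  obtain ⟨n, hn⟩ := exists_winding p (fun a b => a < b) γ hp
    hc h0 h1 hI
  have H : ∀ a b c d : Fin 5, a < b → b < c → c < d →
      2 * (n c a b + n b c d - n d a b - n a c d) = 0 ∧ 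
      2 * (n b a c + n c b d - n d a c - n a b d) - 2 = 0 ∧
      2 * (n b a d + n d b c - n c a d - n a b c) + 0 = 0 := by
    intro a b c d h1 h2 h3
    have A := hn a b c d (by omega) (by omega) (by omega) (by omega) (by omega) (by omega)
    have B := hn a c b d (by omega) (by omega) (by omega) (by omega) (by omega) (by omega)
    have C := hn a d b c (by omega) (by omega) (by omega) (by omega) (by omega) (by omega)
    simp only [tau] at A B C
    rw [if_pos (by omega), if_neg (by omega), if_pos (by omega), if_neg (by omega)] at A
    rw [if_neg (by omega), if_neg (by omega), if_pos (by omega), if_neg (by omega)] at B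
    rw [if_neg (by omega), if_pos (by omega), if_pos (by omega), if_neg (by omega)] at C
    refine ⟨?_, ?_, ?_⟩ <;> omega
  have q1 := H 0 1 2 3 (by decide) (by decide) (by decide)
  have q2 := H 0 1 2 4 (by decide) (by decide) (by decide)
  have q3 := H 0 1 3 4 (by decide) (by decide) (by decide)
  have q4 := H 0 2 3 4 (by decide) (by decide) (by decide)
  have q5 := H 1 2 3 4 (by decide) (by decide) (by decide)
  clear H hn
  omega

end FF


namespace FF

/-- `S` is a nonempty connected set of vertices. -/
def Cn {V : Type} (G : SimpleGraph V) (S : Set V) : Prop :=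
  S.Nonempty ∧ ∀ A : Set V, (A ∩ S).Nonempty →
    (∀ a ∈ A ∩ S, ∀ b ∈ S, G.Adj a b → b ∈ A) → S ⊆ A

/-- There is an edge between `S` and `T`. -/
def Tch {V : Type} (G : SimpleGraph V) (S T : Set V) : Prop :=
  ∃ a ∈ S, ∃ b ∈ T, G.Adj a b

section lib
variable {V : Type} {G : SimpleGraph V} {S T S' T' : Set V}

theorem Tch.symm (h : Tch G S T) : Tch G T S := by
  obtain ⟨a, ha, b, hb, hab⟩ := h
  exact ⟨b, hb, a, ha, hab.symm⟩

theorem Tch.mono (h : Tch G S T) (hS : S ⊆ S') (hT : T ⊆ T') : Tch G S' T' := by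
  obtain ⟨a, ha, b, hb, hab⟩ := h
  exact ⟨a, hS ha, b, hT hb, hab⟩

theorem Cn.singleton (v : V) : Cn G {v} := by
  refine ⟨⟨v, rfl⟩, ?_⟩
  rintro A ⟨w, hw, rfl⟩ -
  simpa using hw

theorem Cn.union_of_inter (hS : Cn G S) (hT : Cn G T) (h : (S ∩ T).Nonempty) :
    Cn G (S ∪ T) := by
  refine ⟨hS.1.mono Set.subset_union_left, ?_⟩
  rintro A ⟨w, hwA, hw⟩ hcl
  obtain ⟨z, hzS, hzT⟩ := h
  have h1 : (A ∩ S).Nonempty → S ⊆ A := fun hne => hS.2 A hne fun a ha b hb hab =>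
    hcl a ⟨ha.1, Or.inl ha.2⟩ b (Or.inl hb) hab
  have h2 : (A ∩ T).Nonempty → T ⊆ A := fun hne => hT.2 A hne fun a ha b hb hab =>
    hcl a ⟨ha.1, Or.inr ha.2⟩ b (Or.inr hb) hab
  rcases hw with hw | hw
  · have := h1 ⟨w, hwA, hw⟩
    exact Set.union_subset this (h2 ⟨z, this hzS, hzT⟩)
  · have := h2 ⟨w, hwA, hw⟩
    exact Set.union_subset (h1 ⟨z, this hzT, hzS⟩) this

theorem Cn.union (hS : Cn G S) (hT : Cn G T) (h : Tch G S T) : Cn G (S ∪ T) := by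
  refine ⟨hS.1.mono Set.subset_union_left, ?_⟩
  rintro A ⟨w, hwA, hw⟩ hcl
  obtain ⟨a, haS, b, hbT, hab⟩ := h
  have h1 : (A ∩ S).Nonempty → S ⊆ A := fun hne => hS.2 A hne fun a ha b hb hab =>
    hcl a ⟨ha.1, Or.inl ha.2⟩ b (Or.inl hb) hab
  have h2 : (A ∩ T).Nonempty → T ⊆ A := fun hne => hT.2 A hne fun a ha b hb hab =>
    hcl a ⟨ha.1, Or.inr ha.2⟩ b (Or.inr hb) hab
  rcases hw with hw | hw
  · have := h1 ⟨w, hwA, hw⟩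
    exact Set.union_subset this (h2 ⟨b, hcl a ⟨this haS, Or.inl haS⟩ b (Or.inr hbT) hab, hbT⟩)
  · have := h2 ⟨w, hwA, hw⟩
    exact Set.union_subset
      (h1 ⟨a, hcl b ⟨this hbT, Or.inr hbT⟩ a (Or.inl haS) hab.symm, haS⟩) this

end lib

section real
variable {V : Type} {G : SimpleGraph V} (D : PlaneEmbedding G)

def Rlz (S : Set V) : Set (ℝ × ℝ) :=
  {x | (∃ a ∈ S, x = D.pos a) ∨
    ∃ a ∈ S, ∃ b ∈ S, G.Adj a b ∧ ∃ t ∈ Set.Icc (0 : ℝ) 1, x = D.arc a b t}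

theorem pos_arc {u v w : V} (h : G.Adj u v) {t : ℝ} (ht : t ∈ Set.Icc (0 : ℝ) 1)
    (he : D.pos w = D.arc u v t) : w = u ∨ w = v := by
  rcases eq_or_lt_of_le ht.1 with h0 | h0
  · subst h0
    rw [D.arc_zero h] at he
    exact Or.inl (D.pos_inj he)
  rcases eq_or_lt_of_le ht.2 with h1 | h1
  · subst h1
    rw [D.arc_one h] at he
    exact Or.inr (D.pos_inj he)
  · exact absurd ⟨t, ⟨h0, h1⟩, he.symm⟩ (D.arc_avoid h w)

theorem real_disj {S T : Set V} (h : Disjoint S T) {x y : ℝ × ℝ} (hx : x ∈ Rlz D S)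
    (hy : y ∈ Rlz D T) : x ≠ y := by
  rintro rfl
  have hd : ∀ a, a ∈ S → a ∈ T → False := fun a h1 h2 => Set.disjoint_left.1 h h1 h2
  rcases hx with ⟨a, ha, rfl⟩ | ⟨a, ha, b, hb, hab, t, ht, rfl⟩
  · rcases hy with ⟨c, hc, hac⟩ | ⟨c, hc, d, hd', hcd, t', ht', hac⟩
    · exact hd a ha (D.pos_inj hac ▸ hc)
    · rcases pos_arc D hcd ht' hac with rfl | rfl
      · exact hd _ ha hc
      · exact hd _ ha hd'
  · rcases hy with ⟨c, hc, hac⟩ | ⟨c, hc, d, hd', hcd, t', ht', hac⟩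
    · rcases pos_arc D hab ht hac.symm with rfl | rfl
      · exact hd _ ha hc
      · exact hd _ hb hc
    · have hne : s(a, b) ≠ s(c, d) := by
        intro h
        rw [Sym2.eq_iff] at h
        rcases h with ⟨rfl, -⟩ | ⟨rfl, -⟩
        · exact hd _ ha hc
        · exact hd _ ha hd'
      have := (D.arc_meet hab hcd hne ⟨⟨t, ht, rfl⟩, ⟨t', ht', hac.symm⟩⟩).1
      have key : ∀ w, D.arc a b t = D.pos w → w ∈ S → False := by
        intro w hw hwS
        rw [hac] at hw
        rcases pos_arc D hcd ht' hw.symm with rfl | rfl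
        · exact hd _ hwS hc
        · exact hd _ hwS hd'
      rcases this with h | h
      · exact key a h ha
      · exact key b h hb

theorem real_joined {V : Type} {G : SimpleGraph V} (D : PlaneEmbedding G) {S : Set V} (hS : Cn G S) {a b : V} (ha : a ∈ S) (hb : b ∈ S) :
    JoinedIn (Rlz D S) (D.pos a) (D.pos b) := by
  have := hS.2 {c | JoinedIn (Rlz D S) (D.pos a) (D.pos c)}
    ⟨a, JoinedIn.refl (Or.inl ⟨a, ha, rfl⟩), ha⟩ (by
      rintro c ⟨hc, hcS⟩ d hd hcd
      refine hc.trans (JoinedIn.ofLine (f := D.arc c d) (D.arc_cont hcd).continuousOn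
        (D.arc_zero hcd) (D.arc_one hcd) ?_)
      rintro _ ⟨t, ht, rfl⟩
      exact Or.inr ⟨c, hcS, d, hd, hcd, t, ht, rfl⟩)
  exact this hb

theorem exists_drawing {V : Type} {G : SimpleGraph V} (D : PlaneEmbedding G) {n : ℕ} (X : Fin n → Set V) (E : Fin n → Fin n → Prop)
    (hX : ∀ i, Cn G (X i)) (hd : ∀ i j, i ≠ j → Disjoint (X i) (X j))
    (hE : ∀ i j, E i j → Tch G (X i) (X j)) :
    ∃ (p : Fin n → ℂ) (γ : Fin n → Fin n → ℝ → ℂ), (∀ a b, a ≠ b → p a ≠ p b) ∧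
      (∀ a b, E a b → Continuous (γ a b)) ∧ (∀ a b, E a b → γ a b 0 = p a) ∧
      (∀ a b, E a b → γ a b 1 = p b) ∧
      (∀ a b c d, E a b → E c d → a ≠ c → a ≠ d → b ≠ c → b ≠ d →
        ∀ s t, γ a b s ≠ γ c d t) := by
  classical
  choose q hq using fun i => (hX i).1
  have hJ : ∀ i j, E i j → JoinedIn (Rlz D (X i ∪ X j)) (D.pos (q i)) (D.pos (q j)) :=
    fun i j h => real_joined D ((hX i).union (hX j) (hE i j h)) (Or.inl (hq i)) (Or.inr (hq j))
  have hinj := Complex.equivRealProdCLM.symm.injective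
  refine ⟨fun i => Complex.equivRealProdCLM.symm (D.pos (q i)), fun i j t =>
    if h : E i j then Complex.equivRealProdCLM.symm ((hJ i j h).somePath.extend t) else 0,
    ?_, ?_, ?_, ?_, ?_⟩
  · intro a b hab h
    have := D.pos_inj (hinj h)
    exact Set.disjoint_left.1 (hd a b hab) (hq a) (this ▸ hq b)
  · intro a b h
    simp only [h, dif_pos]
    exact Complex.equivRealProdCLM.symm.continuous.comp (Path.continuous_extend _)
  · intro a b h
    simp [h]
  · intro a b h
    simp [h]
  · intro a b c d h h' n1 n2 n3 n4 s t he
    simp only [h, h', dif_pos] at he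
    have hmem : ∀ i j (h : E i j) t, (hJ i j h).somePath.extend t ∈ Rlz D (X i ∪ X j) := by
      intro i j h t
      have : (hJ i j h).somePath.extend t ∈ Set.range (hJ i j h).somePath.extend := ⟨t, rfl⟩
      rw [Path.extend_range] at this
      obtain ⟨u, hu⟩ := this
      rw [← hu]
      exact (hJ i j h).somePath_mem u
    refine real_disj D ?_ (hmem a b h s) (hmem c d h' t) (hinj he)
    rw [Set.disjoint_union_left, Set.disjoint_union_right, Set.disjoint_union_right]
    exact ⟨⟨hd _ _ n1, hd _ _ n2⟩, ⟨hd _ _ n3, hd _ _ n4⟩⟩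

end real

/-- no `K_{3,3}` minor -/
def NoK33 {V : Type} (G : SimpleGraph V) : Prop :=
  ∀ X1 X2 X3 Y1 Y2 Y3 : Set V, Cn G X1 → Cn G X2 → Cn G X3 → Cn G Y1 → Cn G Y2 → Cn G Y3 →
    [X1, X2, X3, Y1, Y2, Y3].Pairwise Disjoint →
    Tch G X1 Y1 → Tch G X1 Y2 → Tch G X1 Y3 → Tch G X2 Y1 → Tch G X2 Y2 → Tch G X2 Y3 →
    Tch G X3 Y1 → Tch G X3 Y2 → Tch G X3 Y3 → False

/-- no `K_5` minor -/
def NoK5 {V : Type} (G : SimpleGraph V) : Prop :=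
  ∀ X1 X2 X3 X4 X5 : Set V, Cn G X1 → Cn G X2 → Cn G X3 → Cn G X4 → Cn G X5 →
    [X1, X2, X3, X4, X5].Pairwise Disjoint →
    Tch G X1 X2 → Tch G X1 X3 → Tch G X1 X4 → Tch G X1 X5 → Tch G X2 X3 → Tch G X2 X4 →
    Tch G X2 X5 → Tch G X3 X4 → Tch G X3 X5 → Tch G X4 X5 → False

theorem pairwise_vec {α : Type} {n : ℕ} (X : Fin n → α) (R : α → α → Prop)
    (hs : ∀ a b, R a b → R b a)
    (h : (List.ofFn X).Pairwise R) : ∀ i j, i ≠ j → R (X i) (X j) := by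
  rw [List.pairwise_ofFn] at h
  intro i j hij
  rcases lt_or_gt_of_ne hij with h1 | h1
  · exact h h1
  · exact hs _ _ (h h1)

theorem noK33_of_planar {V : Type} {G : SimpleGraph V} (D : PlaneEmbedding G) : NoK33 G := by
  intro X1 X2 X3 Y1 Y2 Y3 c1 c2 c3 d1 d2 d3 hp t1 t2 t3 t4 t5 t6 t7 t8 t9
  obtain ⟨p, γ, h1, h2, h3, h4, h5⟩ := exists_drawing D ![X1, X2, X3, Y1, Y2, Y3]
    (fun a b => a < 3 ∧ 3 ≤ b)
    (by intro i; fin_cases i <;> assumption)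
    (pairwise_vec _ _ (fun _ _ h => h.symm) (by simpa using hp))
    (by
      rintro i j ⟨hi, hj⟩
      fin_cases i <;> fin_cases j <;> first | assumption | (exact absurd hi (by decide)) | (exact absurd hj (by decide)))
  exact no_K33_drawing p γ h1 (fun a b h h' => h2 a b ⟨h, h'⟩) (fun a b h h' => h3 a b ⟨h, h'⟩)
    (fun a b h h' => h4 a b ⟨h, h'⟩)
    (fun a b c d q1 q2 q3 q4 q5 q6 => h5 a b c d ⟨q1, q2⟩ ⟨q3, q4⟩ q5 (by omega) (by omega) q6)

theorem noK5_of_planar {V : Type} {G : SimpleGraph V} (D : PlaneEmbedding G) : NoK5 G := by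
  intro X1 X2 X3 X4 X5 c1 c2 c3 c4 c5 hp t1 t2 t3 t4 t5 t6 t7 t8 t9 t10
  obtain ⟨p, γ, h1, h2, h3, h4, h5⟩ := exists_drawing D ![X1, X2, X3, X4, X5]
    (fun a b => a < b)
    (by intro i; fin_cases i <;> assumption)
    (pairwise_vec _ _ (fun _ _ h => h.symm) (by simpa using hp))
    (by
      rintro i j hi
      fin_cases i <;> fin_cases j <;> first | assumption | (exact absurd hi (by decide)))
  exact no_K5_drawing p γ h1 h2 h3 h4 h5

end FF


namespace FF

/-- `K` is a connected component of `G - X`. -/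
def IsComp {V : Type} (G : SimpleGraph V) (X K : Set V) : Prop :=
  Cn G K ∧ (∀ a ∈ K, a ∉ X) ∧ ∀ a ∈ K, ∀ b, G.Adj a b → b ∉ X → b ∈ K

theorem exists_comp {V : Type} (G : SimpleGraph V) (X : Set V) (v : V) (hv : v ∉ X) :
    ∃ K, IsComp G X K ∧ v ∈ K := by
  let R : V → V → Prop := fun a b => G.Adj a b ∧ a ∉ X ∧ b ∉ X
  have hsymm : ∀ a b, Relation.ReflTransGen R a b → Relation.ReflTransGen R b a := by
    intro a b h
    induction h with
    | refl => exact .refl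
    | tail _ h2 ih => exact (Relation.ReflTransGen.single ⟨h2.1.symm, h2.2.2, h2.2.1⟩).trans ih
  have hX : ∀ a ∈ {w | Relation.ReflTransGen R v w}, a ∉ X := by
    intro a ha
    rcases Relation.ReflTransGen.cases_tail ha with rfl | ⟨b, -, h⟩
    · exact hv
    · exact h.2.2
  refine ⟨{w | Relation.ReflTransGen R v w}, ⟨⟨⟨v, .refl⟩, ?_⟩, hX, ?_⟩, .refl⟩
  · rintro A ⟨a, haA, ha⟩ hcl b hb
    have hab : Relation.ReflTransGen R a b := (hsymm _ _ ha).trans hb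
    clear hb
    induction hab with
    | refl => exact haA
    | @tail p q h1 h2 ih =>
      have hp : Relation.ReflTransGen R v p := Relation.ReflTransGen.trans ha h1
      exact hcl _ ⟨ih, hp⟩ _ (hp.tail h2) h2.1
  · intro a ha b hab hb
    exact Relation.ReflTransGen.tail ha ⟨hab, hX a ha, hb⟩

section
variable {V : Type} {G : SimpleGraph V} {X K K' S : Set V}

theorem IsComp.sub (hK : IsComp G X K) (hS : Cn G S) (hd : ∀ a ∈ S, a ∉ X)
    (h : (S ∩ K).Nonempty) : S ⊆ K := by
  obtain ⟨w, hwS, hwK⟩ := h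
  exact hS.2 K ⟨w, hwK, hwS⟩ fun a ha b hb hab => hK.2.2 a ha.1 b hab (hd b hb)

theorem IsComp.eq (hK : IsComp G X K) (hK' : IsComp G X K') (h : (K ∩ K').Nonempty) : K = K' :=
  (hK'.sub hK.1 hK.2.1 h).antisymm (hK.sub hK'.1 hK'.2.1 (by rwa [Set.inter_comm]))

theorem IsComp.eq_of_mem (hK : IsComp G X K) (hK' : IsComp G X K') {v : V} (h : v ∈ K)
    (h' : v ∈ K') : K = K' := hK.eq hK' ⟨v, h, h'⟩

theorem IsComp.sub_of_tch (hK : IsComp G X K) (hS : Cn G S) (hd : ∀ a ∈ S, a ∉ X)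
    (h : Tch G S K) : S ⊆ K := by
  obtain ⟨a, ha, b, hb, hab⟩ := h
  exact hK.sub hS hd ⟨a, ha, hK.2.2 b hb a hab.symm (hd a ha)⟩

end

/-- geodesics through `w` -/
inductive Via {V : Type} (G : SimpleGraph V) (lev : V → ℕ) (w : V) : V → Prop
  | base : Via G lev w w
  | step (u v : V) : Via G lev w u → G.Adj u v → lev v = lev u + 1 → Via G lev w v

/-- The whole setting: a planar graph, a rooted BFS tree, and the bound on saveable sets. -/
structure Ctx (V : Type) [Fintype V] where
  G : SimpleGraph V
  r : V
  N : ℕ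
  lev : V → ℕ
  par : V → V
  rank : V → ℕ
  k33 : NoK33 G
  k5 : NoK5 G
  lev_r : lev r = 0
  par_r : par r = r
  lev_pos : ∀ v, v ≠ r → 0 < lev v
  par_adj : ∀ v, v ≠ r → G.Adj (par v) v
  lev_par : ∀ v, v ≠ r → lev (par v) + 1 = lev v
  lev_adj : ∀ a b, G.Adj a b → lev b ≤ lev a + 1
  four : {w | G.Adj r w}.ncard = 4
  rank_inj : ∀ a b, G.Adj r a → G.Adj r b → rank a = rank b → a = b
  deg : ∀ a b, G.Adj r a → G.Adj r b → rank a < rank b → {w | G.Adj a w}.ncard ≤ 5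
  pref : ∀ v w, v ≠ r → G.Adj r w → Via G lev w v → rank (par^[lev v - 1] v) ≤ rank w
  save : ∀ f : ℕ → Set V, (∀ t, (f t).ncard ≤ 2) →
    (∀ t, Disjoint (f t) (burnedSet G r f t)) → ∀ S : Set V,
    (∀ s ∈ S, ∀ t, s ∉ burnedSet G r f t) → S.ncard ≤ N
  big : 6 * N + 1 < Fintype.card V

namespace Ctx
variable {V : Type} [Fintype V] (c : Ctx V)

/-- ancestors of `v` (including `v` and the root) -/
def P (v : V) : Set V := {a | ∃ k, c.par^[k] v = a}

theorem P_self (v : V) : v ∈ c.P v := ⟨0, rfl⟩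

theorem P_trans {a v : V} (h : a ∈ c.P v) : c.P a ⊆ c.P v := by
  obtain ⟨k, rfl⟩ := h
  rintro _ ⟨j, rfl⟩
  exact ⟨j + k, by rw [Function.iterate_add_apply]⟩

theorem P_par {a v : V} (h : a ∈ c.P v) : c.par a ∈ c.P v :=
  c.P_trans h ⟨1, rfl⟩

theorem lev_eq_zero {v : V} : c.lev v = 0 ↔ v = c.r := by
  constructor
  · intro h
    by_contra h'
    have := c.lev_pos v h'
    omega
  · rintro rfl
    exact c.lev_r

theorem lev_iter (v : V) (k : ℕ) : c.lev (c.par^[k] v) = c.lev v - k := by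
  induction k generalizing v with
  | zero => rfl
  | succ k ih =>
    rw [Function.iterate_succ_apply, ih]
    by_cases h : v = c.r
    · subst h; rw [c.par_r, c.lev_r]; simp
    · have := c.lev_par v h; omega

theorem exists_lev {v : V} {m : ℕ} (h : m ≤ c.lev v) : ∃ a ∈ c.P v, c.lev a = m :=
  ⟨_, ⟨c.lev v - m, rfl⟩, by rw [c.lev_iter]; omega⟩

theorem r_mem (v : V) : c.r ∈ c.P v := by
  obtain ⟨a, ha, h⟩ := c.exists_lev (Nat.zero_le (c.lev v))
  rwa [c.lev_eq_zero.1 h] at ha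

theorem P_lev {a v : V} (h : a ∈ c.P v) : c.lev a ≤ c.lev v := by
  obtain ⟨k, rfl⟩ := h
  rw [c.lev_iter]; omega

theorem par_iter_r (k : ℕ) : c.par^[k] c.r = c.r := by
  induction k with
  | zero => rfl
  | succ k ih => rw [Function.iterate_succ_apply, c.par_r, ih]

theorem P_chain {a b v : V} (ha : a ∈ c.P v) (hb : b ∈ c.P v) (h : c.lev a ≤ c.lev b) :
    a ∈ c.P b := by
  obtain ⟨k, rfl⟩ := ha
  obtain ⟨j, rfl⟩ := hb
  rcases le_total j k with hjk | hjk
  · exact ⟨k - j, by rw [← Function.iterate_add_apply]; congr 1; omega⟩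
  · rw [c.lev_iter, c.lev_iter] at h
    by_cases hk : j = k
    · subst hk; exact c.P_self _
    · have : c.lev (c.par^[k] v) = 0 := by rw [c.lev_iter]; omega
      rw [c.lev_eq_zero.1 this]
      exact c.r_mem _

theorem P_eq_of_lev {a v : V} (ha : a ∈ c.P v) (h : c.lev v ≤ c.lev a) : a = v := by
  obtain ⟨k, rfl⟩ := ha
  rw [c.lev_iter] at h
  by_cases hv : c.lev v = 0
  · rw [c.lev_eq_zero.1 hv, c.par_iter_r]
  · have : k = 0 := by omega
    subst this; rfl

theorem P_inj {a b v : V} (ha : a ∈ c.P v) (hb : b ∈ c.P v) (h : c.lev a = c.lev b) : a = b :=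
  c.P_eq_of_lev (c.P_chain ha hb h.le) h.ge

theorem P_cases {a v : V} (h : a ∈ c.P v) : a = v ∨ (v ≠ c.r ∧ a ∈ c.P (c.par v)) := by
  obtain ⟨k, rfl⟩ := h
  cases k with
  | zero => exact Or.inl rfl
  | succ k =>
    by_cases hv : v = c.r
    · left; subst hv; exact c.par_iter_r _
    · right; exact ⟨hv, k, by rw [Function.iterate_succ_apply]⟩

theorem P_r {a : V} (h : a ∈ c.P c.r) : a = c.r := by
  obtain ⟨k, rfl⟩ := h
  exact c.par_iter_r k

/-- intervals in `P v` are connected -/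
theorem Cn_seg {v : V} {S : Set V} (hS : ∀ a ∈ S, a ∈ c.P v) (hne : S.Nonempty)
    (hconv : ∀ a ∈ S, ∀ b ∈ S, ∀ d ∈ c.P v, c.lev a ≤ c.lev d → c.lev d ≤ c.lev b → d ∈ S) :
    Cn c.G S := by
  refine ⟨hne, ?_⟩
  rintro A ⟨a, haA, haS⟩ hcl
  have up : ∀ k, ∀ d ∈ S, c.lev d = c.lev a + k → d ∈ A := by
    intro k
    induction k with
    | zero => intro d hd h; rw [c.P_inj (hS d hd) (hS a haS) h]; exact haA
    | succ k ih =>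
      intro d hd h
      have hdr : d ≠ c.r := by rintro rfl; rw [c.lev_r] at h; omega
      have hl := c.lev_par d hdr
      have hp : c.par d ∈ S := hconv a haS d hd _ (c.P_par (hS d hd)) (by omega) (by omega)
      exact hcl _ ⟨ih _ hp (by omega), hp⟩ d hd (c.par_adj d hdr)
  have down : ∀ k, ∀ d ∈ S, c.lev d + k = c.lev a → d ∈ A := by
    intro k
    induction k with
    | zero => intro d hd h; rw [c.P_inj (hS d hd) (hS a haS) h]; exact haA
    | succ k ih =>
      intro d hd h
      obtain ⟨e, he, hel⟩ := c.exists_lev (v := a) (m := c.lev d + 1) (by omega)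
      have hev := c.P_trans (hS a haS) he
      have heS : e ∈ S := hconv d hd a haS e hev (by omega) (by omega)
      have her : e ≠ c.r := by rintro rfl; rw [c.lev_r] at hel; omega
      have : c.par e = d := c.P_inj (c.P_par hev) (hS d hd) (by have := c.lev_par e her; omega)
      have hadj := c.par_adj e her
      rw [this] at hadj
      exact hcl e ⟨ih e heS (by omega), heS⟩ d hd hadj.symm
  intro d hd
  rcases le_total (c.lev a) (c.lev d) with h | h
  · exact up (c.lev d - c.lev a) d hd (by omega)
  · exact down (c.lev a - c.lev d) d hd (by omega)

/-- ancestor at level one -/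
def lab (v : V) : V := c.par^[c.lev v - 1] v

theorem lab_mem (v : V) : c.lab v ∈ c.P v := ⟨_, rfl⟩

theorem lab_lev {v : V} (hv : v ≠ c.r) : c.lev (c.lab v) = 1 := by
  have := c.lev_pos v hv
  unfold lab
  rw [c.lev_iter]; omega

theorem adj_r {v : V} : c.G.Adj c.r v ↔ c.lev v = 1 := by
  constructor
  · intro h
    have h1 := c.lev_adj _ _ h
    have h2 := c.lev_pos v h.ne'
    rw [c.lev_r] at h1
    omega
  · intro h
    have hv : v ≠ c.r := by rintro rfl; rw [c.lev_r] at h; omega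
    have h1 := c.lev_par v hv
    have h2 := c.par_adj v hv
    rwa [c.lev_eq_zero.1 (by omega : c.lev (c.par v) = 0)] at h2

theorem lab_adj {v : V} (hv : v ≠ c.r) : c.G.Adj c.r (c.lab v) := c.adj_r.2 (c.lab_lev hv)

theorem eq_lab {a v : V} (ha : a ∈ c.P v) (h : c.lev a = 1) : a = c.lab v := by
  have hv : v ≠ c.r := by
    rintro rfl
    have := c.P_lev ha
    rw [c.lev_r] at this; omega
  exact c.P_inj ha (c.lab_mem v) (by rw [h, c.lab_lev hv])

theorem lab_eq {a v : V} (ha : a ∈ c.P v) (h : a ≠ c.r) : c.lab a = c.lab v :=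
  c.eq_lab (c.P_trans ha (c.lab_mem a)) (c.lab_lev h)

theorem ne_r_of_lev {v : V} (h : 0 < c.lev v) : v ≠ c.r := by
  rintro rfl; rw [c.lev_r] at h; omega

/-! ### strategies -/

theorem burned_mono (f : ℕ → Set V) {s t : ℕ} (h : s ≤ t) :
    burnedSet c.G c.r f s ⊆ burnedSet c.G c.r f t := by
  induction t, h using Nat.le_induction with
  | base => exact subset_rfl
  | succ t _ ih => exact ih.trans Set.subset_union_left

theorem burned_lev (f : ℕ → Set V) (t : ℕ) : ∀ w ∈ burnedSet c.G c.r f t, c.lev w ≤ t := by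
  induction t with
  | zero =>
    intro w hw
    have : w = c.r := hw
    rw [this, c.lev_r]
  | succ t ih =>
    rintro w (hw | ⟨⟨u, hu, huw⟩, -⟩)
    · have := ih w hw; omega
    · have := ih u hu
      have := c.lev_adj _ _ huw
      omega

theorem prot_not_burned (f : ℕ → Set V) (hd : ∀ t, Disjoint (f t) (burnedSet c.G c.r f t))
    (w : V) (s : ℕ) (hw : w ∈ f s) (t : ℕ) : w ∉ burnedSet c.G c.r f t := by
  induction t with
  | zero =>
    intro h
    exact Set.disjoint_left.1 (hd s) hw (c.burned_mono f (Nat.zero_le s) h)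
  | succ t ih =>
    intro h
    by_cases hst : s ≤ t
    · rcases h with h | ⟨-, h⟩
      · exact ih h
      · exact h s hst hw
    · exact Set.disjoint_left.1 (hd s) hw (c.burned_mono f (by omega) h)

theorem SL (f : ℕ → Set V) (h2 : ∀ t, (f t).ncard ≤ 2)
    (hd : ∀ t, Disjoint (f t) (burnedSet c.G c.r f t)) (S : Set V) (hr : c.r ∉ S)
    (hS : ∀ s ∈ S, (∃ t, s ∈ f t) ∨ ∀ w, c.G.Adj s w → w ∈ S ∨ ∃ t, w ∈ f t) :
    S.ncard ≤ c.N := by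
  refine c.save f h2 hd S ?_
  have key : ∀ t, ∀ s ∈ S, s ∉ burnedSet c.G c.r f t := by
    intro t
    induction t with
    | zero => intro s hs h; exact hr ((show s = c.r from h) ▸ hs)
    | succ t ih =>
      intro s hs h
      rcases hS s hs with ⟨q, hq⟩ | h'
      · exact c.prot_not_burned f hd s q hq _ h
      · rcases h with h | ⟨⟨u, hu, hus⟩, -⟩
        · exact ih s hs h
        · rcases h' u hus.symm with h'' | ⟨q, hq⟩
          · exact ih u h'' hu
          · exact c.prot_not_burned f hd u q hq _ hu
  exact fun s hs t => key t s hs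

theorem ncard_le_two {α : Type} {S T₁ T₂ : Set α} (hST : S ⊆ T₁ ∪ T₂) (h1 : T₁.Subsingleton)
    (h2 : T₂.Subsingleton) : S.ncard ≤ 2 := by
  have f1 := h1.finite
  have f2 := h2.finite
  have e1 : T₁.ncard ≤ 1 := (Set.ncard_le_one f1).2 fun a ha b hb => h1 ha hb
  have e2 : T₂.ncard ≤ 1 := (Set.ncard_le_one f2).2 fun a ha b hb => h2 ha hb
  calc S.ncard ≤ (T₁ ∪ T₂).ncard := Set.ncard_le_ncard hST (f1.union f2)
    _ ≤ T₁.ncard + T₂.ncard := Set.ncard_union_le _ _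
    _ ≤ 2 := by omega

/-- level strategy: `Q` is a union of two level-injective sets -/
theorem S1 (Q₁ Q₂ S : Set V) (hr1 : c.r ∉ Q₁) (hr2 : c.r ∉ Q₂)
    (h1 : ∀ a ∈ Q₁, ∀ b ∈ Q₁, c.lev a = c.lev b → a = b)
    (h2 : ∀ a ∈ Q₂, ∀ b ∈ Q₂, c.lev a = c.lev b → a = b) (hr : c.r ∉ S)
    (hS : ∀ s ∈ S, s ∈ Q₁ ∪ Q₂ ∨ ∀ w, c.G.Adj s w → w ∈ S ∪ (Q₁ ∪ Q₂)) : S.ncard ≤ c.N := by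
  have hmem : ∀ w, w ∈ Q₁ ∪ Q₂ → ∃ t, w ∈ (fun t => {a | a ∈ Q₁ ∪ Q₂ ∧ c.lev a = t + 1}) t := by
    intro w hw
    have hwr : w ≠ c.r := by rintro rfl; exact hw.elim hr1 hr2
    have := c.lev_pos w hwr
    exact ⟨c.lev w - 1, hw, by omega⟩
  refine c.SL (fun t => {a | a ∈ Q₁ ∪ Q₂ ∧ c.lev a = t + 1}) ?_ ?_ S hr ?_
  · intro t
    refine ncard_le_two (T₁ := {a | a ∈ Q₁ ∧ c.lev a = t + 1})
      (T₂ := {a | a ∈ Q₂ ∧ c.lev a = t + 1}) ?_ ?_ ?_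
    · rintro a ⟨ha | ha, hl⟩
      · exact Or.inl ⟨ha, hl⟩
      · exact Or.inr ⟨ha, hl⟩
    · rintro a ⟨ha, hl⟩ b ⟨hb, hl'⟩; exact h1 a ha b hb (by omega)
    · rintro a ⟨ha, hl⟩ b ⟨hb, hl'⟩; exact h2 a ha b hb (by omega)
  · intro t
    rw [Set.disjoint_left]
    rintro a ⟨-, hl⟩ hb
    have := c.burned_lev _ t a hb
    omega
  · intro s hs
    rcases hS s hs with h | h
    · exact Or.inl (hmem s h)
    · right
      intro w hw
      rcases h w hw with h | h
      · exact Or.inl h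
      · exact Or.inr (hmem w h)

end Ctx
end FF


namespace FF
namespace Ctx
variable {V : Type} [Fintype V] (c : Ctx V)

theorem nbr4 {a b d e : V} (ha : c.lev a = 1) (hb : c.lev b = 1) (hd : c.lev d = 1)
    (he : c.lev e = 1) (h1 : a ≠ b) (h2 : a ≠ d) (h3 : a ≠ e) (h4 : b ≠ d) (h5 : b ≠ e)
    (h6 : d ≠ e) : ∀ w, c.lev w = 1 → w = a ∨ w = b ∨ w = d ∨ w = e := by
  classical
  have hs : ({a, b, d, e} : Set V) ⊆ {w | c.G.Adj c.r w} := by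
    intro w hw
    simp only [Set.mem_insert_iff, Set.mem_singleton_iff] at hw
    rw [Set.mem_ofPred_eq, c.adj_r]
    rcases hw with rfl | rfl | rfl | rfl <;> assumption
  have hcard : ({a, b, d, e} : Set V).ncard = 4 := by
    have : ({a, b, d, e} : Set V) = (({a, b, d, e} : Finset V) : Set V) := by simp
    rw [this, Set.ncard_coe_finset]
    simp [h1, h2, h3, h4, h5, h6]
  have := Set.eq_of_subset_of_ncard_le hs (by rw [c.four, hcard]) (Set.toFinite _)
  intro w hw
  have hw' : w ∈ {w | c.G.Adj c.r w} := c.adj_r.2 hw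
  rw [← this] at hw'
  simpa using hw'

/-- pair strategy -/
theorem pairS (x z : V) (S : Set V) (hr : c.r ∉ S)
    (hS : ∀ s ∈ S, s ∉ c.P x ∪ c.P z → c.lev s ≠ 1 ∧
      ∀ w, c.G.Adj s w → w ∈ S ∪ (c.P x ∪ c.P z)) : S.ncard ≤ c.N := by
  refine c.S1 (c.P x \ {c.r}) (c.P z \ {c.r}) S (by simp) (by simp)
    (fun a ha b hb h => c.P_inj ha.1 hb.1 h) (fun a ha b hb h => c.P_inj ha.1 hb.1 h) hr ?_
  intro s hs
  have hsr : s ≠ c.r := fun h => hr (h ▸ hs)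
  by_cases hC : s ∈ c.P x ∪ c.P z
  · left
    rcases hC with h | h
    · exact Or.inl ⟨h, hsr⟩
    · exact Or.inr ⟨h, hsr⟩
  · right
    intro w hw
    obtain ⟨h1, h2⟩ := hS s hs hC
    have hwr : w ≠ c.r := by
      rintro rfl
      exact h1 (c.adj_r.1 hw.symm)
    rcases h2 w hw with h | h | h
    · exact Or.inl h
    · exact Or.inr (Or.inl ⟨h, hwr⟩)
    · exact Or.inr (Or.inr ⟨h, hwr⟩)

/-- pair strategy with one extra neighbour of the root -/
theorem one_v (x z v : V) (S : Set V) (hr : c.r ∉ S) (hv : c.lev v = 1)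
    (hS : ∀ s ∈ S, s ∉ c.P x ∪ c.P z → (c.lev s = 1 → s = v) ∧
      ∀ w, c.G.Adj s w → w ∈ S ∪ (c.P x ∪ c.P z))
    (h : c.lab x = c.lab z ∨ (c.lab x ∉ S ∧
      ∀ s ∈ S, s ∉ c.P x ∪ c.P z → ¬ c.G.Adj s (c.lab x))) : S.ncard ≤ c.N := by
  have hvr : v ≠ c.r := c.ne_r_of_lev (by omega)
  have key : ∀ a b, a ∈ (c.P x \ {c.r, c.lab x}) → b = v → c.lev a = c.lev b → False := by
    rintro a b ⟨ha, ha'⟩ rfl hl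
    exact ha' (Or.inr (c.eq_lab ha (by omega)))
  refine c.S1 ((c.P x \ {c.r, c.lab x}) ∪ {v}) (c.P z \ {c.r}) S (by simp [hvr.symm]) (by simp)
    ?_ (fun a ha b hb h => c.P_inj ha.1 hb.1 h) hr ?_
  · rintro a (ha | ha) b (hb | hb) hl
    · exact c.P_inj ha.1 hb.1 hl
    · exact (key a b ha hb hl).elim
    · exact (key b a hb ha hl.symm).elim
    · exact (show a = v from ha).trans (show b = v from hb).symm
  have cov : ∀ w, w ∈ c.P x ∪ c.P z → w ≠ c.r → (w = c.lab x → c.lab x = c.lab z) →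
      w ∈ ((c.P x \ {c.r, c.lab x}) ∪ {v}) ∪ (c.P z \ {c.r}) := by
    intro w hw hwr hwl
    rcases hw with hw | hw
    · by_cases hwe : w = c.lab x
      · right
        refine ⟨?_, hwr⟩
        rw [hwe, hwl hwe]
        exact c.lab_mem z
      · exact Or.inl (Or.inl ⟨hw, by simp [hwr, hwe]⟩)
    · exact Or.inr ⟨hw, hwr⟩
  intro s hs
  have hsr : s ≠ c.r := fun h => hr (h ▸ hs)
  by_cases hC : s ∈ c.P x ∪ c.P z
  · left
    refine cov s hC hsr fun hsl => ?_
    rcases h with h | h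
    · exact h
    · exact absurd (hsl ▸ hs) h.1
  · by_cases hsv : s = v
    · exact Or.inl (Or.inl (Or.inr hsv))
    right
    intro w hw
    obtain ⟨h1, h2⟩ := hS s hs hC
    have hwr : w ≠ c.r := by
      rintro rfl
      exact hsv (h1 (c.adj_r.1 hw.symm))
    rcases h2 w hw with h' | h'
    · exact Or.inl h'
    · right
      refine cov w h' hwr fun hwl => ?_
      rcases h with h | h
      · exact h
      · exact absurd (hwl ▸ hw) (h.2 s hs hC)

def PathTo (C : Set V) (v q : V) : Prop :=
  ∃ R : Set V, Cn c.G R ∧ v ∈ R ∧ q ∈ R ∧ (∀ a ∈ R, a ∉ C) ∧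
    (∀ a ∈ R, ∀ b ∈ R, c.lev a = c.lev b → a = b) ∧ ∀ a ∈ R, 1 ≤ c.lev a ∧ c.lev a ≤ c.lev q

theorem via_lab {z a : V} (ha : a ∈ c.P z) (har : a ≠ c.r) : Via c.G c.lev (c.lab z) a := by
  have key : ∀ k, ∀ a ∈ c.P z, c.lev a = k + 1 → Via c.G c.lev (c.lab z) a := by
    intro k
    induction k with
    | zero => intro a ha h; rw [c.eq_lab ha h]; exact Via.base
    | succ k ih =>
      intro a ha h
      have har : a ≠ c.r := c.ne_r_of_lev (by omega)
      have := c.lev_par a har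
      exact Via.step _ _ (ih (c.par a) (c.P_par ha) (by omega)) (c.par_adj a har) (by omega)
  have := c.lev_pos a har
  exact key (c.lev a - 1) a ha (by omega)

theorem trick (x z vk vl : V) (hx : x ≠ c.r) (hz : z ≠ c.r)
    (hrank : c.rank (c.lab z) < c.rank (c.lab x)) (K : Set V)
    (hK : IsComp c.G (c.P x ∪ c.P z) K) (hvk : vk ∈ K) (hlk : c.lev vk = 1)
    (hll : c.lev vl = 1) (hvlK : vl ∉ K) (hvlC : vl ∉ c.P x ∪ c.P z)
    (hnb : ∀ w, c.lev w = 1 → w = c.lab x ∨ w = c.lab z ∨ w = vk ∨ w = vl)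
    (L : ℕ)
    (hL : ∀ p ∈ c.P x, (∃ q, c.PathTo (c.P x ∪ c.P z) vl q ∧ c.G.Adj q p ∧
      c.lev p = c.lev q + 1) → L ≤ c.lev p)
    (hadj : ∀ s ∈ K, ∀ a ∈ c.P x, L ≤ c.lev a → ¬ c.G.Adj s a)
    (hT : {w | c.G.Adj (c.lab z) w ∧ (w ∈ K ∨ w ∈ c.P z) ∧ w ≠ c.r ∧ w ≠ vk}.ncard ≤ 2) :
    K.ncard ≤ c.N := by
  set T := {w | c.G.Adj (c.lab z) w ∧ (w ∈ K ∨ w ∈ c.P z) ∧ w ≠ c.r ∧ w ≠ vk} with hTdef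
  have hKr : c.r ∉ K := fun h => hK.2.1 _ h (Or.inl (c.r_mem x))
  have hlx := c.lab_lev hx
  have hlz := c.lab_lev hz
  have hKlev1 : ∀ w ∈ K, c.lev w = 1 → w = vk := by
    intro w hw h1
    rcases hnb w h1 with rfl | rfl | rfl | rfl
    · exact absurd (Or.inl (c.lab_mem x)) (hK.2.1 _ hw)
    · exact absurd (Or.inr (c.lab_mem z)) (hK.2.1 _ hw)
    · rfl
    · exact absurd hw hvlK
  have hTlev : ∀ w ∈ T, c.lev w = 2 := by
    rintro w ⟨h1, h2, h3, h4⟩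
    have l1 := c.lev_adj _ _ h1
    have l2 := c.lev_pos w h3
    by_contra hne
    have l3 : c.lev w = 1 := by omega
    rcases h2 with h2 | h2
    · exact h4 (hKlev1 w h2 l3)
    · rw [c.eq_lab h2 l3] at h1
      exact h1.ne rfl
  let f : ℕ → Set V := fun t =>
    if t = 0 then {c.lab x, vk} else if t = 1 then T else
      {a | a ∈ c.P z ∧ c.lev a = t + 1} ∪ {a | a ∈ c.P x ∧ c.lev a = t ∧ c.lev a < L}
  have f0 : f 0 = {c.lab x, vk} := rfl
  have f1 : f 1 = T := rfl
  have f2 : ∀ t, 2 ≤ t → f t =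
      {a | a ∈ c.P z ∧ c.lev a = t + 1} ∪ {a | a ∈ c.P x ∧ c.lev a = t ∧ c.lev a < L} := by
    intro t ht
    simp only [f]
    rw [if_neg (by omega), if_neg (by omega)]
  have inv : ∀ t, ∀ w ∈ burnedSet c.G c.r f (t + 1), c.lev w = t + 1 →
      Via c.G c.lev (c.lab z) w ∨ (w ∉ c.P x ∪ c.P z ∧ c.PathTo (c.P x ∪ c.P z) vl w) ∨
        L ≤ c.lev w := by
    intro t
    induction t with
    | zero =>
      intro w hw hl
      rcases hw with hw | ⟨⟨u, hu, huw⟩, hp⟩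
      · have := c.burned_lev f 0 w hw; omega
      · have hp0 := hp 0 le_rfl
        rw [f0] at hp0
        simp only [Set.mem_insert_iff, Set.mem_singleton_iff, not_or] at hp0
        rcases hnb w hl with h | h | h | h
        · exact absurd h hp0.1
        · left; rw [h]; exact Via.base
        · exact absurd h hp0.2
        · right; left
          subst h
          refine ⟨hvlC, {w}, Cn.singleton w, rfl, rfl, ?_, ?_, ?_⟩
          · rintro a rfl; exact hvlC
          · rintro a rfl b rfl _; rfl
          · rintro a rfl; exact ⟨hl.ge, le_rfl⟩
    | succ t ih =>
      intro w hw hl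
      rcases hw with hw | ⟨⟨u, hu, huw⟩, -⟩
      · have := c.burned_lev f (t + 1) w hw; omega
      · have l1 := c.burned_lev f (t + 1) u hu
        have l2 := c.lev_adj _ _ huw
        rcases ih u hu (by omega) with h | ⟨hC, R, hR1, hR2, hR3, hR4, hR5, hR6⟩ | h
        · exact Or.inl (Via.step _ _ h huw (by omega))
        · by_cases hwz : w ∈ c.P z
          · exact Or.inl (c.via_lab hwz (c.ne_r_of_lev (by omega)))
          by_cases hwx : w ∈ c.P x
          · right; right
            exact hL w hwx ⟨u, ⟨R, hR1, hR2, hR3, hR4, hR5, hR6⟩, huw, by omega⟩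
          right; left
          have hwC : w ∉ c.P x ∪ c.P z := by rintro (h | h) <;> contradiction
          have hlR : ∀ a ∈ R, c.lev a < c.lev w := fun a ha => by have := (hR6 a ha).2; omega
          refine ⟨hwC, R ∪ {w}, hR1.union (Cn.singleton w) ⟨u, hR3, w, rfl, huw⟩,
            Or.inl hR2, Or.inr rfl, ?_, ?_, ?_⟩
          · rintro a (ha | rfl)
            · exact hR4 a ha
            · exact hwC
          · rintro a (ha | rfl) b (hb | rfl) hab
            · exact hR5 a ha b hb hab
            · have := hlR a ha; omega
            · have := hlR b hb; omega
            · rfl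
          · rintro a (ha | rfl)
            · exact ⟨(hR6 a ha).1, (hlR a ha).le⟩
            · omega
        · right; right; omega
  refine c.SL f ?_ ?_ K hKr ?_
  · intro t
    rcases t with _ | _ | t
    · rw [f0]
      refine ncard_le_two (T₁ := {c.lab x}) (T₂ := {vk}) ?_ (by simp) (by simp)
      rintro a (h | h)
      · exact Or.inl h
      · exact Or.inr h
    · exact hT
    · rw [f2 _ (by omega)]
      refine ncard_le_two subset_rfl ?_ ?_
      · rintro a ⟨ha, hl⟩ b ⟨hb, hl'⟩; exact c.P_inj ha hb (by omega)
      · rintro a ⟨ha, hl, -⟩ b ⟨hb, hl', -⟩; exact c.P_inj ha hb (by omega)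
  · intro t
    rw [Set.disjoint_left]
    intro a ha hb
    have hlb := c.burned_lev f t a hb
    rcases t with _ | _ | t
    · rw [f0] at ha
      rcases ha with rfl | ha
      · omega
      · have : a = vk := ha
        subst this; omega
    · have := hTlev a ha; omega
    · rw [f2 _ (by omega)] at ha
      rcases ha with ⟨-, hl⟩ | ⟨hax, hl, hlL⟩
      · omega
      · have har : a ≠ c.r := c.ne_r_of_lev (by omega)
        rcases inv _ a hb hl with h | h | h
        · have := c.pref a (c.lab z) har (c.lab_adj hz) h
          change c.rank (c.lab a) ≤ _ at this
          rw [c.lab_eq hax har] at this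
          omega
        · exact h.1 (Or.inl hax)
        · omega
  · intro s hs
    by_cases hsk : s = vk
    · left; refine ⟨0, ?_⟩; rw [f0, hsk]; exact Or.inr rfl
    by_cases hsz : c.G.Adj s (c.lab z)
    · left; refine ⟨1, ?_⟩; rw [f1]
      exact ⟨hsz.symm, Or.inl hs, fun h => hKr (h ▸ hs), hsk⟩
    right
    intro w hw
    have hwr : w ≠ c.r := by
      rintro rfl
      exact hsk (hKlev1 s hs (c.adj_r.1 hw.symm))
    have hwpos := c.lev_pos w hwr
    by_cases hwC : w ∈ c.P x ∪ c.P z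
    · right
      by_cases hwz : w ∈ c.P z
      · by_cases h1 : c.lev w = 1
        · exact absurd (c.eq_lab hwz h1 ▸ hw) hsz
        by_cases h2 : c.lev w = 2
        · refine ⟨1, ?_⟩
          rw [f1]
          have e1 := c.lev_par w hwr
          have e2 := c.eq_lab (c.P_par hwz) (by omega)
          have e3 := c.par_adj w hwr
          rw [e2] at e3
          exact ⟨e3, Or.inr hwz, hwr, fun h => by rw [h] at h2; omega⟩
        · refine ⟨c.lev w - 1, ?_⟩
          rw [f2 _ (by omega)]
          exact Or.inl ⟨hwz, by omega⟩
      · have hwx : w ∈ c.P x := hwC.resolve_right hwz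
        by_cases h1 : c.lev w = 1
        · refine ⟨0, ?_⟩; rw [f0, c.eq_lab hwx h1]; exact Or.inl rfl
        · refine ⟨c.lev w, ?_⟩
          rw [f2 _ (by omega)]
          refine Or.inr ⟨hwx, rfl, ?_⟩
          by_contra hge
          exact hadj s hs w hwx (by omega) hw
    · exact Or.inl (hK.2.2 s hs w hw hwC)

end Ctx
end FF


namespace FF

theorem pw6 {V : Type} {A B C D E F : Set V} (h1 : ∀ a ∈ A, a ∉ B) (h2 : ∀ a ∈ A, a ∉ C)
    (h3 : ∀ a ∈ A, a ∉ D) (h4 : ∀ a ∈ A, a ∉ E) (h5 : ∀ a ∈ A, a ∉ F)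
    (h6 : ∀ a ∈ B, a ∉ C) (h7 : ∀ a ∈ B, a ∉ D) (h8 : ∀ a ∈ B, a ∉ E) (h9 : ∀ a ∈ B, a ∉ F)
    (h10 : ∀ a ∈ C, a ∉ D) (h11 : ∀ a ∈ C, a ∉ E) (h12 : ∀ a ∈ C, a ∉ F)
    (h13 : ∀ a ∈ D, a ∉ E) (h14 : ∀ a ∈ D, a ∉ F) (h15 : ∀ a ∈ E, a ∉ F) :
    [A, B, C, D, E, F].Pairwise Disjoint := by
  have k : ∀ {S T : Set V}, (∀ a ∈ S, a ∉ T) → Disjoint S T := fun h => Set.disjoint_left.2 @h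
  simp only [List.pairwise_cons, List.mem_cons, List.not_mem_nil, or_false, forall_eq_or_imp,
    forall_eq, List.Pairwise.nil, and_true, false_imp_iff, implies_true]
  exact ⟨⟨k h1, k h2, k h3, k h4, k h5⟩, ⟨k h6, k h7, k h8, k h9⟩, ⟨k h10, k h11, k h12⟩,
    ⟨k h13, k h14⟩, k h15⟩

theorem pw5 {V : Type} {A B C D E : Set V} (h1 : ∀ a ∈ A, a ∉ B) (h2 : ∀ a ∈ A, a ∉ C)
    (h3 : ∀ a ∈ A, a ∉ D) (h4 : ∀ a ∈ A, a ∉ E)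
    (h6 : ∀ a ∈ B, a ∉ C) (h7 : ∀ a ∈ B, a ∉ D) (h8 : ∀ a ∈ B, a ∉ E)
    (h10 : ∀ a ∈ C, a ∉ D) (h11 : ∀ a ∈ C, a ∉ E)
    (h13 : ∀ a ∈ D, a ∉ E) :
    [A, B, C, D, E].Pairwise Disjoint := by
  have k : ∀ {S T : Set V}, (∀ a ∈ S, a ∉ T) → Disjoint S T := fun h => Set.disjoint_left.2 @h
  simp only [List.pairwise_cons, List.mem_cons, List.not_mem_nil, or_false, forall_eq_or_imp,
    forall_eq, List.Pairwise.nil, and_true, false_imp_iff, implies_true]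
  exact ⟨⟨k h1, k h2, k h3, k h4⟩, ⟨k h6, k h7, k h8⟩, ⟨k h10, k h11⟩, k h13⟩

namespace Ctx
variable {V : Type} [Fintype V] (c : Ctx V)

theorem P_inter_of_lab {x z a : V} (h : c.lab x ≠ c.lab z) (ha : a ∈ c.P x) (hb : a ∈ c.P z) :
    a = c.r := by
  by_contra hr
  exact h ((c.lab_eq ha hr).symm.trans (c.lab_eq hb hr))

theorem lemC_aux (x z vk vl : V) (hx : x ≠ c.r) (hz : z ≠ c.r)
    (hrank : c.rank (c.lab z) < c.rank (c.lab x)) (K Kl : Set V)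
    (hK : IsComp c.G (c.P x ∪ c.P z) K) (hKl : IsComp c.G (c.P x ∪ c.P z) Kl)
    (hvk : vk ∈ K) (hlk : c.lev vk = 1) (hvl : vl ∈ Kl)
    (hll : c.lev vl = 1) (hd : ∀ a ∈ K, a ∉ Kl)
    (hnb : ∀ w, c.lev w = 1 → w = c.lab x ∨ w = c.lab z ∨ w = vk ∨ w = vl)
    (ht1 : Tch c.G K {c.lab z}) (ht2 : Tch c.G Kl {c.lab z})
    (hT : {w | c.G.Adj (c.lab z) w ∧ (w ∈ K ∨ w ∈ c.P z) ∧ w ≠ c.r ∧ w ≠ vk}.ncard ≤ 2) :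
    K.ncard ≤ c.N ∨ {w | w ≠ c.r ∧ w ∉ K}.ncard ≤ 2 * c.N := by
  classical
  have hlab : c.lab x ≠ c.lab z := fun h => by rw [h] at hrank; omega
  have hxz : ∀ a, a ∈ c.P x → a ∈ c.P z → a = c.r := fun a => c.P_inter_of_lab hlab
  have hvlK : vl ∉ K := fun h => hd _ h hvl
  have hvlC := hKl.2.1 vl hvl
  by_cases hNK : K.ncard ≤ c.N
  · exact Or.inl hNK
  right
  have trk := fun L hL hadj => hNK (c.trick x z vk vl hx hz hrank K hK hvk hlk hll hvlK hvlC hnb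
    L hL hadj hT)
  -- the set Rch is nonempty
  have hex : ∃ m, ∃ p ∈ c.P x, c.lev p = m ∧ ∃ q, c.PathTo (c.P x ∪ c.P z) vl q ∧ c.G.Adj q p ∧
      c.lev p = c.lev q + 1 := by
    by_contra hno
    refine trk (c.lev x + 1) ?_ ?_
    · intro p hp hq
      exact absurd ⟨c.lev p, p, hp, rfl, hq⟩ hno
    · intro s _ a ha hl
      have := c.P_lev ha
      omega
  obtain ⟨p, hp, hpm, q, ⟨R, hR1, hR2, hR3, hR4, hR5, hR6⟩, hqp, hlpq⟩ := Nat.find_spec hex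
  have hmin : ∀ p' ∈ c.P x, (∃ q, c.PathTo (c.P x ∪ c.P z) vl q ∧ c.G.Adj q p' ∧
      c.lev p' = c.lev q + 1) → c.lev p ≤ c.lev p' := by
    intro p' hp' hq'
    rw [hpm]
    exact Nat.find_min' hex ⟨p', hp', rfl, hq'⟩
  have hKY : Tch c.G K {a | a ∈ c.P x ∧ c.lev p ≤ c.lev a} := by
    by_contra hno
    refine trk (c.lev p) hmin ?_
    intro s hs a ha hl hsa
    exact hno ⟨s, hs, a, ⟨ha, hl⟩, hsa⟩
  clear trk hmin hex hpm
  set Y := {a | a ∈ c.P x ∧ c.lev p ≤ c.lev a} with hY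
  set X1 := {a | a ∈ c.P x ∧ 1 ≤ c.lev a ∧ c.lev a < c.lev p} with hX1
  set Q := {a | a ∈ c.P z ∧ 1 ≤ c.lev a} with hQ
  have hlq := (hR6 q hR3).1
  have hRKl : R ⊆ Kl := hKl.sub hR1 hR4 ⟨vl, hR2, hvl⟩
  have hrl := c.lev_r
  have hKr : ∀ a ∈ K, a ∉ c.P x ∧ a ∉ c.P z ∧ a ≠ c.r := by
    intro a ha
    have := hK.2.1 a ha
    exact ⟨fun h => this (Or.inl h), fun h => this (Or.inr h),
      fun h => this (Or.inl (h ▸ c.r_mem x))⟩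
  have hKlr : ∀ a ∈ Kl, a ∉ c.P x ∧ a ∉ c.P z ∧ a ≠ c.r := by
    intro a ha
    have := hKl.2.1 a ha
    exact ⟨fun h => this (Or.inl h), fun h => this (Or.inr h),
      fun h => this (Or.inl (h ▸ c.r_mem x))⟩
  have hlx := c.lab_lev hx
  have hlz := c.lab_lev hz
  have vX1 : c.lab x ∈ X1 := ⟨c.lab_mem x, by omega, by omega⟩
  have vQ : c.lab z ∈ Q := ⟨c.lab_mem z, by omega⟩
  have cY : Cn c.G Y := c.Cn_seg (fun a ha => ha.1) ⟨p, hp, le_rfl⟩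
    (fun a ha b hb d hd h1 h2 => ⟨hd, ha.2.trans h1⟩)
  have cX1 : Cn c.G X1 := c.Cn_seg (fun a ha => ha.1) ⟨_, vX1⟩
    (fun a ha b hb d hd h1 h2 => ⟨hd, by have := ha.2; omega, by have := hb.2; omega⟩)
  have cQ : Cn c.G Q := c.Cn_seg (fun a ha => ha.1) ⟨_, vQ⟩
    (fun a ha b hb d hd h1 h2 => ⟨hd, by have := ha.2; omega⟩)
  have hpr : p ≠ c.r := c.ne_r_of_lev (by omega)
  have hlpp := c.lev_par p hpr
  have tYX1 : Tch c.G X1 Y := ⟨c.par p, ⟨c.P_par hp, by omega, by omega⟩, p, ⟨hp, le_rfl⟩,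
    c.par_adj p hpr⟩
  have tKQ : Tch c.G K Q := ht1.mono subset_rfl (by simpa using vQ)
  have tKlQ : Tch c.G Kl Q := ht2.mono subset_rfl (by simpa using vQ)
  set X0 : Set V := c.P x ∪ c.P z ∪ R ∪ K with hX0
  -- neighbours of components of `G - X0`
  have hnbL : ∀ L, IsComp c.G X0 L → ∀ s ∈ L, ∀ w, c.G.Adj s w →
      w ≠ c.r ∧ (w ∈ L ∨ w ∈ c.P x ∨ w ∈ c.P z ∨ w ∈ R) := by
    intro L hL s hs w hw
    have hs0 := hL.2.1 s hs
    constructor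
    · rintro rfl
      apply hs0
      rcases hnb s (c.adj_r.1 hw.symm) with rfl | rfl | rfl | rfl
      · exact Or.inl (Or.inl (Or.inl (c.lab_mem x)))
      · exact Or.inl (Or.inl (Or.inr (c.lab_mem z)))
      · exact Or.inr hvk
      · exact Or.inl (Or.inr hR2)
    · by_cases hw0 : w ∈ X0
      · rcases hw0 with ((h | h) | h) | h
        · exact Or.inr (Or.inl h)
        · exact Or.inr (Or.inr (Or.inl h))
        · exact Or.inr (Or.inr (Or.inr h))
        · exact absurd (Or.inr (hK.2.2 w h s hw.symm
            (fun h' => hs0 (Or.inl (Or.inl h'))))) hs0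
      · exact Or.inl (hL.2.2 s hs w hw hw0)
  have main : ∀ L, IsComp c.G X0 L → Tch c.G L Q → Tch c.G L X1 → False := by
    intro L hL tLQ tLX
    have hL0 : ∀ a ∈ L, a ∉ c.P x ∧ a ∉ c.P z ∧ a ∉ R ∧ a ∉ K ∧ a ≠ c.r := by
      intro a ha
      have := hL.2.1 a ha
      exact ⟨fun h => this (Or.inl (Or.inl (Or.inl h))), fun h => this (Or.inl (Or.inl (Or.inr h))),
        fun h => this (Or.inl (Or.inr h)), fun h => this (Or.inr h),
        fun h => this (Or.inl (Or.inl (Or.inl (h ▸ c.r_mem x))))⟩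
    by_cases tLR : Tch c.G L R
    · refine c.k33 L {c.r} (K ∪ Y) X1 Q R hL.1 (Cn.singleton _) (hK.1.union cY hKY) cX1 cQ hR1
        ?_ tLX tLQ tLR ⟨c.r, rfl, _, vX1, c.lab_adj hx⟩ ⟨c.r, rfl, _, vQ, c.lab_adj hz⟩
        ⟨c.r, rfl, vl, hR2, c.adj_r.2 hll⟩ (tYX1.symm.mono Set.subset_union_right subset_rfl)
        (tKQ.mono Set.subset_union_left subset_rfl) ⟨p, Or.inr ⟨hp, le_rfl⟩, q, hR3, hqp.symm⟩
      apply pw6 <;> intro a ha hb <;>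
        (try simp only [hY, hX1, hQ, Set.mem_ofPred_eq, Set.mem_union, Set.mem_singleton_iff] at ha) <;>
        (try simp only [hY, hX1, hQ, Set.mem_ofPred_eq, Set.mem_union, Set.mem_singleton_iff] at hb) <;>
        grind
    · have hLKl : ∀ a ∈ L, a ∉ Kl := by
        intro a ha haK
        have := hKl.1.2 L ⟨a, ha, haK⟩ (by
          rintro b ⟨hbL, hbK⟩ e heK hbe
          rcases (hnbL L hL b hbL e hbe).2 with h | h | h | h
          · exact h
          · exact absurd h (hKlr e heK).1
          · exact absurd h (hKlr e heK).2.1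
          · exact absurd ⟨b, hbL, e, h, hbe⟩ tLR)
        exact (hL0 vl (this hvl)).2.2.1 hR2
      refine c.k33 K Kl X1 {c.r} Y (Q ∪ L) hK.1 hKl.1 cX1 (Cn.singleton _) cY
        (cQ.union hL.1 tLQ.symm) ?_ ⟨vk, hvk, c.r, rfl, (c.adj_r.2 hlk).symm⟩ hKY
        (tKQ.mono subset_rfl Set.subset_union_left) ⟨vl, hvl, c.r, rfl, (c.adj_r.2 hll).symm⟩
        ⟨q, hRKl hR3, p, ⟨hp, le_rfl⟩, hqp⟩ (tKlQ.mono subset_rfl Set.subset_union_left)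
        ⟨_, vX1, c.r, rfl, (c.lab_adj hx).symm⟩ tYX1
        (tLX.symm.mono subset_rfl Set.subset_union_right)
      apply pw6 <;> intro a ha hb <;>
        (try simp only [hY, hX1, hQ, Set.mem_ofPred_eq, Set.mem_union, Set.mem_singleton_iff] at ha) <;>
        (try simp only [hY, hX1, hQ, Set.mem_ofPred_eq, Set.mem_union, Set.mem_singleton_iff] at hb) <;>
        grind
  -- two strategies
  let S1 : Set V := (c.P x \ {c.r}) ∪ R ∪ {w | ∃ L, IsComp c.G X0 L ∧ w ∈ L ∧ ¬ Tch c.G L Q}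
  let S2 : Set V := (R ∪ Y) ∪ (c.P z \ {c.r}) ∪ {w | ∃ L, IsComp c.G X0 L ∧ w ∈ L ∧ ¬ Tch c.G L X1}
  have hrR : c.r ∉ R := fun h => (hKlr _ (hRKl h)).2.2 rfl
  have hrY : c.r ∉ Y := fun h => by have := h.2; omega
  have hrL : ∀ L, IsComp c.G X0 L → c.r ∉ L :=
    fun L hL h => hL.2.1 _ h (Or.inl (Or.inl (Or.inl (c.r_mem x))))
  have e1 : S1.ncard ≤ c.N := by
    refine c.S1 (c.P x \ {c.r}) R S1 (by simp) hrR (fun a ha b hb h => c.P_inj ha.1 hb.1 h) hR5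
      ?_ ?_
    · rintro (h | ⟨L, hL, h, -⟩)
      · rcases h with h | h
        · exact h.2 rfl
        · exact hrR h
      · exact hrL L hL h
    · rintro s (hs | ⟨L, hL, hs, hLQ⟩)
      · exact Or.inl hs
      · right
        intro w hw
        obtain ⟨hwr, h | h | h | h⟩ := hnbL L hL s hs w hw
        · exact Or.inl (Or.inr ⟨L, hL, h, hLQ⟩)
        · exact Or.inr (Or.inl ⟨h, hwr⟩)
        · exact absurd ⟨s, hs, w, ⟨h, c.lev_pos w hwr⟩, hw⟩ hLQ
        · exact Or.inr (Or.inr h)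
  have e2 : S2.ncard ≤ c.N := by
    refine c.S1 (R ∪ Y) (c.P z \ {c.r}) S2 ?_ (by simp) ?_
      (fun a ha b hb h => c.P_inj ha.1 hb.1 h) ?_ ?_
    · rintro (h | h)
      · exact hrR h
      · exact hrY h
    · rintro a (ha | ha) b (hb | hb) hab
      · exact hR5 a ha b hb hab
      · have := (hR6 a ha).2; have := hb.2; omega
      · have := (hR6 b hb).2; have := ha.2; omega
      · exact c.P_inj ha.1 hb.1 hab
    · rintro (h | ⟨L, hL, h, -⟩)
      · rcases h with (h | h) | h
        · exact hrR h
        · exact hrY h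
        · exact h.2 rfl
      · exact hrL L hL h
    · rintro s (hs | ⟨L, hL, hs, hLQ⟩)
      · exact Or.inl hs
      · right
        intro w hw
        obtain ⟨hwr, h | h | h | h⟩ := hnbL L hL s hs w hw
        · exact Or.inl (Or.inr ⟨L, hL, h, hLQ⟩)
        · right; left; right
          refine ⟨h, ?_⟩
          by_contra hlt
          exact hLQ ⟨s, hs, w, ⟨h, c.lev_pos w hwr, by omega⟩, hw⟩
        · exact Or.inr (Or.inr ⟨h, hwr⟩)
        · exact Or.inr (Or.inl (Or.inl h))
  have hsub : {w | w ≠ c.r ∧ w ∉ K} ⊆ S1 ∪ S2 := by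
    rintro w ⟨hwr, hwK⟩
    by_cases hw0 : w ∈ X0
    · rcases hw0 with ((h | h) | h) | h
      · exact Or.inl (Or.inl (Or.inl ⟨h, hwr⟩))
      · exact Or.inr (Or.inl (Or.inr ⟨h, hwr⟩))
      · exact Or.inl (Or.inl (Or.inr h))
      · exact absurd h hwK
    · obtain ⟨L, hL, hwL⟩ := exists_comp c.G X0 w hw0
      by_cases h1 : Tch c.G L Q
      · exact Or.inr (Or.inr ⟨L, hL, hwL, fun h2 => main L hL h1 h2⟩)
      · exact Or.inl (Or.inr ⟨L, hL, hwL, h1⟩)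
  calc _ ≤ (S1 ∪ S2).ncard := Set.ncard_le_ncard hsub (Set.toFinite _)
    _ ≤ S1.ncard + S2.ncard := Set.ncard_union_le _ _
    _ ≤ 2 * c.N := by omega

theorem lemC_aux2 (x z vk vl : V) (hx : x ≠ c.r) (hz : z ≠ c.r)
    (hrank : c.rank (c.lab z) < c.rank (c.lab x)) (K Kl : Set V)
    (hK : IsComp c.G (c.P x ∪ c.P z) K) (hKl : IsComp c.G (c.P x ∪ c.P z) Kl)
    (hvk : vk ∈ K) (hlk : c.lev vk = 1) (hvl : vl ∈ Kl)
    (hll : c.lev vl = 1) (hd : ∀ a ∈ K, a ∉ Kl)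
    (hnb : ∀ w, c.lev w = 1 → w = c.lab x ∨ w = c.lab z ∨ w = vk ∨ w = vl) :
    {w | w ≠ c.r ∧ w ∉ K}.ncard ≤ 2 * c.N ∨ {w | w ≠ c.r ∧ w ∉ Kl}.ncard ≤ 2 * c.N := by
  classical
  have hd' : ∀ a ∈ Kl, a ∉ K := fun a h1 h2 => hd a h2 h1
  have hA : {w | w ≠ c.r ∧ w ∉ K ∧ w ∉ Kl}.ncard ≤ c.N := by
    refine c.pairS x z _ (by simp) ?_
    rintro s ⟨hsr, hsK, hsL⟩ hsC
    constructor
    · intro h1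
      rcases hnb s h1 with rfl | rfl | rfl | rfl
      · exact hsC (Or.inl (c.lab_mem x))
      · exact hsC (Or.inr (c.lab_mem z))
      · exact hsK hvk
      · exact hsL hvl
    · intro w hw
      by_cases hwC : w ∈ c.P x ∪ c.P z
      · exact Or.inr hwC
      · left
        refine ⟨fun h => hwC (Or.inl (h ▸ c.r_mem x)), fun h => ?_, fun h => ?_⟩
        · exact hsK (hK.2.2 w h s hw.symm hsC)
        · exact hsL (hKl.2.2 w h s hw.symm hsC)
  have cov1 : K.ncard ≤ c.N → {w | w ≠ c.r ∧ w ∉ Kl}.ncard ≤ 2 * c.N := by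
    intro h
    calc _ ≤ ({w | w ≠ c.r ∧ w ∉ K ∧ w ∉ Kl} ∪ K).ncard := by
          refine Set.ncard_le_ncard ?_ (Set.toFinite _)
          rintro w ⟨h1, h2⟩
          by_cases h3 : w ∈ K
          · exact Or.inr h3
          · exact Or.inl ⟨h1, h3, h2⟩
      _ ≤ _ := Set.ncard_union_le _ _
      _ ≤ _ := by omega
  have cov2 : Kl.ncard ≤ c.N → {w | w ≠ c.r ∧ w ∉ K}.ncard ≤ 2 * c.N := by
    intro h
    calc _ ≤ ({w | w ≠ c.r ∧ w ∉ K ∧ w ∉ Kl} ∪ Kl).ncard := by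
          refine Set.ncard_le_ncard ?_ (Set.toFinite _)
          rintro w ⟨h1, h2⟩
          by_cases h3 : w ∈ Kl
          · exact Or.inr h3
          · exact Or.inl ⟨h1, h2, h3⟩
      _ ≤ _ := Set.ncard_union_le _ _
      _ ≤ _ := by omega
  have single : ∀ (K Kl : Set V) (vk vl : V), IsComp c.G (c.P x ∪ c.P z) K →
      (∀ a ∈ Kl, a ∉ K) → vl ∈ Kl → c.lev vk = 1 →
      (∀ w, c.lev w = 1 → w = c.lab x ∨ w = c.lab z ∨ w = vk ∨ w = vl) →
      ¬ Tch c.G K {c.lab z} → K.ncard ≤ c.N := by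
    intro K Kl vk vl hK hd hvl hlk hnb hno
    rw [Set.union_comm] at hK
    refine c.one_v z x vk K (fun h => hK.2.1 _ h (Or.inl (c.r_mem z))) hlk ?_
      (Or.inr ⟨fun h => hK.2.1 _ h (Or.inl (c.lab_mem z)), fun s hs _ h =>
        hno ⟨s, hs, _, rfl, h⟩⟩)
    intro s hs hsC
    constructor
    · intro h1
      rcases hnb s h1 with rfl | rfl | rfl | rfl
      · exact absurd (Or.inr (c.lab_mem x)) hsC
      · exact absurd (Or.inl (c.lab_mem z)) hsC
      · rfl
      · exact absurd hs (hd _ hvl)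
    · intro w hw
      by_cases hwC : w ∈ c.P z ∪ c.P x
      · exact Or.inr hwC
      · exact Or.inl (hK.2.2 s hs w hw hwC)
  have hnb' : ∀ w, c.lev w = 1 → w = c.lab x ∨ w = c.lab z ∨ w = vl ∨ w = vk := by
    intro w hw
    rcases hnb w hw with h | h | h | h <;> simp [h]
  by_cases ht1 : Tch c.G K {c.lab z}
  swap
  · exact Or.inr (cov1 (single K Kl vk vl hK hd' hvl hlk hnb ht1))
  by_cases ht2 : Tch c.G Kl {c.lab z}
  swap
  · exact Or.inl (cov2 (single Kl K vl vk hKl hd hvk hll hnb' ht2))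
  set T1 := {w | c.G.Adj (c.lab z) w ∧ (w ∈ K ∨ w ∈ c.P z) ∧ w ≠ c.r ∧ w ≠ vk} with hT1
  set T2 := {w | c.G.Adj (c.lab z) w ∧ (w ∈ Kl ∨ w ∈ c.P z) ∧ w ≠ c.r ∧ w ≠ vl} with hT2
  have hsum : T1.ncard + T2.ncard ≤ 5 := by
    rw [← Set.ncard_union_add_ncard_inter _ _ (Set.toFinite _) (Set.toFinite _)]
    have h1 : (T1 ∩ T2).ncard ≤ 1 := by
      rw [Set.ncard_le_one (Set.toFinite _)]
      have key : ∀ a ∈ T1 ∩ T2, a ∈ c.P z ∧ c.lev a = 2 := by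
        rintro a ⟨⟨h1, h2, h3, h4⟩, ⟨-, h2', -, -⟩⟩
        have haz : a ∈ c.P z := by
          rcases h2 with h2 | h2
          · rcases h2' with h2' | h2'
            · exact absurd h2' (hd a h2)
            · exact h2'
          · exact h2
        refine ⟨haz, ?_⟩
        have l1 := c.lev_adj _ _ h1
        have l2 := c.lev_pos a h3
        have l3 := c.lab_lev hz
        by_contra hne
        rw [c.eq_lab haz (by omega)] at h1
        exact h1.ne rfl
      intro a ha b hb
      exact c.P_inj (key a ha).1 (key b hb).1 (by rw [(key a ha).2, (key b hb).2])
    have h2 : (T1 ∪ T2).ncard + 1 ≤ 5 := by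
      have hr : c.r ∉ T1 ∪ T2 := by
        rintro (h | h)
        · exact h.2.2.1 rfl
        · exact h.2.2.1 rfl
      rw [← Set.ncard_insert_of_notMem hr (Set.toFinite _)]
      refine le_trans (Set.ncard_le_ncard ?_ (Set.toFinite _))
        (c.deg (c.lab z) (c.lab x) (c.lab_adj hz) (c.lab_adj hx) hrank)
      rintro w (rfl | h | h)
      · exact (c.lab_adj hz).symm
      · exact h.1
      · exact h.1
    omega
  by_cases h2 : T1.ncard ≤ 2
  · rcases c.lemC_aux x z vk vl hx hz hrank K Kl hK hKl hvk hlk hvl hll hd hnb ht1 ht2 h2 with h | h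
    · exact Or.inr (cov1 h)
    · exact Or.inl h
  · rcases c.lemC_aux x z vl vk hx hz hrank Kl K hKl hK hvl hll hvk hlk hd' hnb' ht2 ht1
      (show T2.ncard ≤ 2 by omega) with h | h
    · exact Or.inl (cov2 h)
    · exact Or.inr h

theorem lemC (x z vk vl : V) (hx : x ≠ c.r) (hz : z ≠ c.r)
    (hlab : c.lab x ≠ c.lab z) (K Kl : Set V)
    (hK : IsComp c.G (c.P x ∪ c.P z) K) (hKl : IsComp c.G (c.P x ∪ c.P z) Kl)
    (hvk : vk ∈ K) (hlk : c.lev vk = 1) (hvl : vl ∈ Kl)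
    (hll : c.lev vl = 1) (hne : K ≠ Kl) :
    {w | w ≠ c.r ∧ w ∉ K}.ncard ≤ 2 * c.N ∨ {w | w ≠ c.r ∧ w ∉ Kl}.ncard ≤ 2 * c.N := by
  have hd : ∀ a ∈ K, a ∉ Kl := fun a h1 h2 => hne (hK.eq_of_mem hKl h1 h2)
  have hkC := hK.2.1 _ hvk
  have hlC := hKl.2.1 _ hvl
  have hnb := c.nbr4 (c.lab_lev hx) (c.lab_lev hz) hlk hll hlab
    (fun h => hkC (Or.inl (h ▸ c.lab_mem x))) (fun h => hlC (Or.inl (h ▸ c.lab_mem x)))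
    (fun h => hkC (Or.inr (h ▸ c.lab_mem z))) (fun h => hlC (Or.inr (h ▸ c.lab_mem z)))
    (fun h => hd _ hvk (h ▸ hvl))
  rcases lt_trichotomy (c.rank (c.lab z)) (c.rank (c.lab x)) with h | h | h
  · exact c.lemC_aux2 x z vk vl hx hz h K Kl hK hKl hvk hlk hvl hll hd hnb
  · exact absurd (c.rank_inj _ _ (c.lab_adj hz) (c.lab_adj hx) h) hlab.symm
  · rw [Set.union_comm] at hK hKl
    exact c.lemC_aux2 z x vk vl hz hx h K Kl hK hKl hvk hlk hvl hll hd
      (fun w hw => by rcases hnb w hw with h | h | h | h <;> simp [h])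

end Ctx
end FF


namespace FF
namespace Ctx
variable {V : Type} [Fintype V] (c : Ctx V)

/-- vertices other than the root whose component contains no neighbour of the root -/
def Ac (x z : V) : Set V :=
  {w | w ≠ c.r ∧ ∀ K, IsComp c.G (c.P x ∪ c.P z) K → w ∈ K → ∀ v ∈ K, c.lev v ≠ 1}

def Bad (x z : V) (K : Set V) : Prop :=
  (c.lab x = c.lab z → ∃ v ∈ K, ∃ w ∈ K, v ≠ w ∧ c.lev v = 1 ∧ c.lev w = 1) ∧
  (c.lab x ≠ c.lab z → (∃ v ∈ K, c.lev v = 1) ∧ 2 * c.N < (K ∪ c.Ac x z).ncard)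

theorem no_five {a b d e f : V} (ha : c.lev a = 1) (hb : c.lev b = 1) (hd : c.lev d = 1)
    (he : c.lev e = 1) (hf : c.lev f = 1) (h : [a, b, d, e, f].Nodup) : False := by
  simp only [List.nodup_cons, List.mem_cons, List.not_mem_nil, or_false, not_or] at h
  obtain ⟨⟨h1, h2, h3, h4⟩, ⟨h5, h6, h7⟩, ⟨h8, h9⟩, h10, -⟩ := h
  rcases c.nbr4 ha hb hd he h1 h2 h3 h5 h6 h8 f hf with h | h | h | h
  · exact h4 h.symm
  · exact h7 h.symm
  · exact h9 h.symm
  · exact h10 h.symm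

theorem bad_unique {x z : V} (hx : x ≠ c.r) (hz : z ≠ c.r) {K K' : Set V}
    (hK : IsComp c.G (c.P x ∪ c.P z) K) (hK' : IsComp c.G (c.P x ∪ c.P z) K')
    (h : c.Bad x z K) (h' : c.Bad x z K') : K = K' := by
  by_contra hne
  have hd : ∀ a ∈ K, a ∉ K' := fun a h1 h2 => hne (hK.eq_of_mem hK' h1 h2)
  by_cases hl : c.lab x = c.lab z
  · obtain ⟨v1, m1, v2, m2, n1, l1, l2⟩ := h.1 hl
    obtain ⟨v3, m3, v4, m4, n2, l3, l4⟩ := h'.1 hl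
    have hC : c.lab x ∈ c.P x ∪ c.P z := Or.inl (c.lab_mem x)
    refine c.no_five l1 l2 l3 l4 (c.lab_lev hx) ?_
    have e1 := hK.2.1
    have e2 := hK'.2.1
    simp only [List.nodup_cons, List.mem_cons, List.not_mem_nil, or_false, not_or]
    grind
  · obtain ⟨⟨v, hv, lv⟩, hb⟩ := h.2 hl
    obtain ⟨⟨v', hv', lv'⟩, hb'⟩ := h'.2 hl
    have e1 := hK.2.1
    have e2 := hK'.2.1
    have r1 : c.r ∉ K := fun h => e1 _ h (Or.inl (c.r_mem x))
    have r2 : c.r ∉ K' := fun h => e2 _ h (Or.inl (c.r_mem x))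
    rcases c.lemC x z v v' hx hz hl K K' hK hK' hv lv hv' lv' hne with h | h
    · have : (K' ∪ c.Ac x z).ncard ≤ {w | w ≠ c.r ∧ w ∉ K}.ncard := by
        refine Set.ncard_le_ncard ?_ (Set.toFinite _)
        rintro w (hw | hw)
        · exact ⟨fun h => r2 (h ▸ hw), fun h => hd _ h hw⟩
        · exact ⟨hw.1, fun h => hw.2 K hK h v hv lv⟩
      omega
    · have : (K ∪ c.Ac x z).ncard ≤ {w | w ≠ c.r ∧ w ∉ K'}.ncard := by
        refine Set.ncard_le_ncard ?_ (Set.toFinite _)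
        rintro w (hw | hw)
        · exact ⟨fun h => r1 (h ▸ hw), fun h => hd _ hw h⟩
        · exact ⟨hw.1, fun h => hw.2 K' hK' h v' hv' lv'⟩
      omega

theorem card_ne_r : {w | w ≠ c.r}.ncard + 1 = Fintype.card V := by
  have : {w | w ≠ c.r} = {c.r}ᶜ := by ext; simp
  rw [this]
  have h := Set.ncard_add_ncard_compl ({c.r} : Set V)
  rw [Set.ncard_singleton, Nat.card_eq_fintype_card] at h
  omega

theorem cover {Q : Set V} (h : ∀ w, w ≠ c.r → w ∈ Q) : 6 * c.N < Q.ncard := by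
  have h1 : {w | w ≠ c.r}.ncard ≤ Q.ncard := Set.ncard_le_ncard (fun w hw => h w hw) (Set.toFinite _)
  have := c.card_ne_r
  have := c.big
  omega

theorem exists_third (a b d : V) : ∃ w, c.lev w = 1 ∧ w ≠ a ∧ w ≠ b ∧ w ≠ d := by
  by_contra hno
  push Not at hno
  have : {w | c.G.Adj c.r w} ⊆ {a, b, d} := by
    intro w hw
    have := hno w (c.adj_r.1 hw)
    simp only [Set.mem_insert_iff, Set.mem_singleton_iff]
    tauto
  have h1 := Set.ncard_le_ncard this (Set.toFinite _)
  rw [c.four] at h1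
  have h2 : ({a, b, d} : Set V).ncard ≤ 3 := by
    refine (Set.ncard_insert_le _ _).trans ?_
    have := Set.ncard_insert_le b {d}
    rw [Set.ncard_singleton] at this
    omega
  omega

theorem comp_closed {x z : V} {K : Set V} (hK : IsComp c.G (c.P x ∪ c.P z) K) {s w : V}
    (hs : s ∈ K) (hw : c.G.Adj s w) : w ∈ K ∨ w ∈ c.P x ∪ c.P z := by
  by_cases h : w ∈ c.P x ∪ c.P z
  · exact Or.inr h
  · exact Or.inl (hK.2.2 s hs w hw h)

theorem bound {x z : V} (hx : x ≠ c.r) (hz : z ≠ c.r) (Q : Set V) (hr : c.r ∉ Q)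
    (hQ : ∀ K, IsComp c.G (c.P x ∪ c.P z) K → (K ∩ Q).Nonempty → K ⊆ Q ∧ ¬ c.Bad x z K) :
    Q.ncard ≤ c.N ∨ (Q.ncard ≤ 2 * c.N ∧ c.lab x ≠ c.lab z ∧
      ∃ v ∈ Q, v ∉ c.P x ∪ c.P z ∧ c.lev v = 1) := by
  by_cases hno : ∀ v ∈ Q, v ∉ c.P x ∪ c.P z → c.lev v ≠ 1
  · left
    refine c.pairS x z Q hr ?_
    intro s hs hC
    refine ⟨hno s hs hC, ?_⟩
    obtain ⟨K, hK, hsK⟩ := exists_comp c.G _ s hC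
    intro w hw
    have := (hQ K hK ⟨s, hsK, hs⟩).1
    rcases c.comp_closed hK hsK hw with h | h
    · exact Or.inl (this h)
    · exact Or.inr h
  push Not at hno
  obtain ⟨v, hv, hvC, hlv⟩ := hno
  obtain ⟨K, hK, hvK⟩ := exists_comp c.G _ v hvC
  obtain ⟨hKQ, hKb⟩ := hQ K hK ⟨v, hvK, hv⟩
  by_cases hlab : c.lab x = c.lab z
  · left
    have hbad : ∀ K, ¬ c.Bad x z K → ∀ v ∈ K, ∀ w ∈ K, c.lev v = 1 → c.lev w = 1 → v = w := by
      intro K hK v hv w hw h1 h2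
      by_contra hne
      exact hK ⟨fun _ => ⟨v, hv, w, hw, hne, h1, h2⟩, fun h => absurd hlab h⟩
    by_cases hone : ∀ w ∈ Q, w ∉ c.P x ∪ c.P z → c.lev w = 1 → w = v
    · refine c.one_v x z v Q hr hlv ?_ (Or.inl hlab)
      intro s hs hC
      refine ⟨hone s hs hC, ?_⟩
      obtain ⟨K, hK, hsK⟩ := exists_comp c.G _ s hC
      intro w hw
      have := (hQ K hK ⟨s, hsK, hs⟩).1
      rcases c.comp_closed hK hsK hw with h | h
      · exact Or.inl (this h)
      · exact Or.inr h
    exfalso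
    push Not at hone
    obtain ⟨v2, hv2, hv2C, hlv2, hne⟩ := hone
    obtain ⟨K2, hK2, hvK2⟩ := exists_comp c.G _ v2 hv2C
    obtain ⟨hKQ2, hKb2⟩ := hQ K2 hK2 ⟨v2, hvK2, hv2⟩
    obtain ⟨v3, l3, n1, n2, n3⟩ := c.exists_third (c.lab x) v v2
    have hlC : c.lab x ∈ c.P x ∪ c.P z := Or.inl (c.lab_mem x)
    have h4 := c.nbr4 (c.lab_lev hx) hlv hlv2 l3 (fun h => hvC (h ▸ hlC))
      (fun h => hv2C (h ▸ hlC)) n1.symm hne.symm n2.symm n3.symm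
    have hd : ∀ a ∈ K, a ∉ K2 := fun a h1 h2 => by
      have := hK.eq_of_mem hK2 h1 h2
      exact hne (hbad K hKb v2 (this ▸ hvK2) v hvK hlv2 hlv)
    have g1 : ∀ K, IsComp c.G (c.P x ∪ c.P z) K → ¬ c.Bad x z K → ∀ v ∈ K, c.lev v = 1 →
        K.ncard ≤ c.N := by
      intro K hK hb v hv hlv
      refine c.one_v x z v K (fun h => hK.2.1 _ h (Or.inl (c.r_mem x))) hlv ?_ (Or.inl hlab)
      intro s hs _
      refine ⟨fun h => hbad K hb s hs v hv h hlv, fun w hw => c.comp_closed hK hs hw⟩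
    have b1 := g1 K hK hKb v hvK hlv
    have b2 := g1 K2 hK2 hKb2 v2 hvK2 hlv2
    have b3 : {w | w ≠ c.r ∧ w ∉ K ∧ w ∉ K2}.ncard ≤ c.N := by
      refine c.one_v x z v3 _ (fun h => h.1 rfl) l3 ?_ (Or.inl hlab)
      rintro s ⟨-, hs1, hs2⟩ hC
      refine ⟨fun h => ?_, fun w hw => ?_⟩
      · rcases h4 s h with rfl | rfl | rfl | rfl
        · exact absurd hlC hC
        · exact absurd hvK hs1
        · exact absurd hvK2 hs2
        · rfl
      · by_cases hwC : w ∈ c.P x ∪ c.P z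
        · exact Or.inr hwC
        refine Or.inl ⟨fun h => hwC (h ▸ Or.inl (c.r_mem x)), fun h => ?_, fun h => ?_⟩
        · exact hs1 (hK.2.2 w h s hw.symm hC)
        · exact hs2 (hK2.2.2 w h s hw.symm hC)
    have := c.cover (Q := K ∪ K2 ∪ {w | w ≠ c.r ∧ w ∉ K ∧ w ∉ K2}) (by
      intro w hw
      by_cases h1 : w ∈ K
      · exact Or.inl (Or.inl h1)
      by_cases h2 : w ∈ K2
      · exact Or.inl (Or.inr h2)
      exact Or.inr ⟨hw, h1, h2⟩)
    have i1 := Set.ncard_union_le (K ∪ K2) {w | w ≠ c.r ∧ w ∉ K ∧ w ∉ K2}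
    have i2 := Set.ncard_union_le K K2
    omega
  · right
    refine ⟨?_, hlab, v, hv, hvC, hlv⟩
    have hgood : ∀ K, ¬ c.Bad x z K → ∀ v ∈ K, c.lev v = 1 → (K ∪ c.Ac x z).ncard ≤ 2 * c.N := by
      intro K hK v hv h
      by_contra hlt
      exact hK ⟨fun h => absurd h hlab, fun _ => ⟨⟨v, hv, h⟩, by omega⟩⟩
    have b1 := hgood K hKb v hvK hlv
    by_cases hone : ∀ w ∈ Q, w ∉ c.P x ∪ c.P z → c.lev w = 1 → w ∈ K
    · refine le_trans (Set.ncard_le_ncard ?_ (Set.toFinite _)) b1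
      intro w hw
      by_cases hwK : w ∈ K
      · exact Or.inl hwK
      right
      refine ⟨fun h => hr (h ▸ hw), fun K' hK' hwK' v' hv' hl => ?_⟩
      have := hone v' ((hQ K' hK' ⟨w, hwK', hw⟩).1 hv') (hK'.2.1 v' hv') hl
      exact hwK (hK.eq_of_mem hK' this hv' ▸ hwK')
    exfalso
    push Not at hone
    obtain ⟨v2, hv2, hv2C, hlv2, hne⟩ := hone
    obtain ⟨K2, hK2, hvK2⟩ := exists_comp c.G _ v2 hv2C
    obtain ⟨hKQ2, hKb2⟩ := hQ K2 hK2 ⟨v2, hvK2, hv2⟩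
    have b2 := hgood K2 hKb2 v2 hvK2 hlv2
    have hlx : c.lab x ∈ c.P x ∪ c.P z := Or.inl (c.lab_mem x)
    have hlz : c.lab z ∈ c.P x ∪ c.P z := Or.inr (c.lab_mem z)
    have h4 := c.nbr4 (c.lab_lev hx) (c.lab_lev hz) hlv hlv2 hlab (fun h => hvC (h ▸ hlx))
      (fun h => hv2C (h ▸ hlx)) (fun h => hvC (h ▸ hlz))
      (fun h => hv2C (h ▸ hlz)) (fun h => hne (h ▸ hvK))
    have := c.cover (Q := (K ∪ c.Ac x z) ∪ (K2 ∪ c.Ac x z)) (by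
      intro w hw
      by_cases h1 : w ∈ K
      · exact Or.inl (Or.inl h1)
      by_cases h2 : w ∈ K2
      · exact Or.inr (Or.inl h2)
      refine Or.inl (Or.inr ⟨hw, fun K' hK' hwK' v' hv' hl => ?_⟩)
      rcases h4 v' hl with rfl | rfl | rfl | rfl
      · exact hK'.2.1 _ hv' hlx
      · exact hK'.2.1 _ hv' hlz
      · exact h1 (hK.eq_of_mem hK' hvK hv' ▸ hwK')
      · exact h2 (hK2.eq_of_mem hK' hvK2 hv' ▸ hwK'))
    have i1 := Set.ncard_union_le (K ∪ c.Ac x z) (K2 ∪ c.Ac x z)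
    omega

theorem bound_out {x z : V} (hx : x ≠ c.r) (hz : z ≠ c.r) {B : Set V}
    (hB : IsComp c.G (c.P x ∪ c.P z) B) (hbad : c.Bad x z B) :
    {w | w ≠ c.r ∧ w ∉ B}.ncard ≤ c.N ∨ ({w | w ≠ c.r ∧ w ∉ B}.ncard ≤ 2 * c.N ∧
      c.lab x ≠ c.lab z ∧ ∃ v ∈ {w | w ≠ c.r ∧ w ∉ B}, v ∉ c.P x ∪ c.P z ∧ c.lev v = 1) := by
  refine c.bound hx hz _ (fun h => h.1 rfl) ?_
  rintro K hK ⟨w, hwK, hwr, hwB⟩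
  refine ⟨fun a ha => ⟨fun h => hK.2.1 a ha (h ▸ Or.inl (c.r_mem x)), fun h => ?_⟩, fun h => ?_⟩
  · exact hwB (hK.eq_of_mem hB ha h ▸ hwK)
  · exact hwB (c.bad_unique hx hz hK hB h hbad ▸ hwK)

theorem exists_bad {x : V} (hx : x ≠ c.r) : ∃ B, IsComp c.G (c.P x ∪ c.P x) B ∧ c.Bad x x B := by
  by_contra hno
  push Not at hno
  have := c.cover (Q := {w | w ≠ c.r}) (fun w hw => hw)
  rcases c.bound hx hx {w | w ≠ c.r} (fun h => h rfl) (fun K hK _ =>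
    ⟨fun a ha h => hK.2.1 a ha (h ▸ Or.inl (c.r_mem x)), hno K hK⟩) with h | h
  · omega
  · exact h.2.1 rfl

/-- closed state -/
structure Cl (x z s : V) (Z B : Set V) : Prop where
  hx : x ≠ c.r
  hz : z ≠ c.r
  comp : IsComp c.G (c.P x ∪ c.P z) B
  sx : s ∈ c.P x
  sz : s ∈ c.P z
  nb : ∀ a ∈ B, ∀ b, c.G.Adj a b → b ∉ B → c.lev s ≤ c.lev b
  ZB : ∀ a ∈ Z, a ∉ B
  Zp : ∀ a ∈ Z, a ∈ c.P x ∪ c.P z → c.lev a < c.lev s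
  Zc : (Z = ∅ ∧ (x = z ∨ c.G.Adj x z)) ∨ (Cn c.G Z ∧ Tch c.G Z {x} ∧ Tch c.G Z {z})

/-- minimal bad closed state -/
structure Mn (x z s : V) (Z B : Set V) : Prop extends c.Cl x z s Z B where
  bad : c.Bad x z B
  min : ∀ x' z' s' Z' B', c.Cl x' z' s' Z' B' → c.Bad x' z' B' → B.ncard ≤ B'.ncard

theorem exists_Mn : ∃ x z s Z B, c.Mn x z s Z B := by
  classical
  have hex : ∃ m, ∃ x z s Z B, c.Cl x z s Z B ∧ c.Bad x z B ∧ B.ncard = m := by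
    obtain ⟨v, hv, -⟩ := c.exists_third c.r c.r c.r
    have hvr : v ≠ c.r := c.ne_r_of_lev (by omega)
    obtain ⟨B, hB, hbad⟩ := c.exists_bad hvr
    exact ⟨_, v, v, c.r, ∅, B, ⟨hvr, hvr, hB, c.r_mem v, c.r_mem v,
      fun a _ b _ _ => by rw [c.lev_r]; omega, by simp, by simp, Or.inl ⟨rfl, Or.inl rfl⟩⟩,
      hbad, rfl⟩
  obtain ⟨x, z, s, Z, B, h1, h2, h3⟩ := Nat.find_spec hex
  refine ⟨x, z, s, Z, B, { h1 with bad := h2, min := ?_ }⟩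
  intro x' z' s' Z' B' h1' h2'
  rw [h3]
  exact Nat.find_min' hex ⟨x', z', s', Z', B', h1', h2', rfl⟩

end Ctx
end FF


namespace FF
namespace Ctx
variable {V : Type} [Fintype V] (c : Ctx V)

/-- `e` is where the tree path of `d` leaves `B` -/
def Ex (B : Set V) (d e : V) : Prop :=
  e ∈ c.P d ∧ (∀ a ∈ c.P d, a ∈ c.P e ∨ (a ∈ B ∧ c.lev e < c.lev a)) ∧ e ∉ B ∧
    (d = e ∨ (d ∈ B ∧ ∃ a ∈ c.P d, a ∈ B ∧ c.G.Adj a e))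

theorem exists_Ex (B : Set V) (hr : c.r ∉ B) (d : V) (hd : d ∈ B) :
    ∃ e, c.Ex B d e ∧ ∃ a ∈ c.P d, a ∈ B ∧ c.G.Adj a e := by
  have key : ∀ k, ∀ d ∈ B, c.lev d = k → ∃ e, c.Ex B d e ∧ ∃ a ∈ c.P d, a ∈ B ∧ c.G.Adj a e := by
    intro k
    induction k with
    | zero => intro d hd h; exact absurd (c.lev_eq_zero.1 h ▸ hd) hr
    | succ k ih =>
      intro d hd h
      have hdr : d ≠ c.r := fun h => hr (h ▸ hd)
      have hl := c.lev_par d hdr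
      have hpd : c.par d ∈ c.P d := ⟨1, rfl⟩
      by_cases hp : c.par d ∈ B
      · obtain ⟨e, ⟨h1, h2, h3, h4⟩, a, ha, haB, hae⟩ := ih (c.par d) hp (by omega)
        have hle : c.lev e ≤ c.lev (c.par d) := c.P_lev h1
        refine ⟨e, ⟨c.P_trans hpd h1, ?_, h3, Or.inr ⟨hd, a, c.P_trans hpd ha, haB, hae⟩⟩,
          a, c.P_trans hpd ha, haB, hae⟩
        intro q hq
        rcases c.P_cases hq with rfl | ⟨-, hq⟩
        · exact Or.inr ⟨hd, by omega⟩
        · exact h2 q hq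
      · refine ⟨c.par d, ⟨hpd, ?_, hp, Or.inr ⟨hd, d, c.P_self d, hd, (c.par_adj d hdr).symm⟩⟩,
          d, c.P_self d, hd, (c.par_adj d hdr).symm⟩
        intro q hq
        rcases c.P_cases hq with rfl | ⟨-, hq⟩
        · exact Or.inr ⟨hd, by omega⟩
        · exact Or.inl hq
  exact key _ d hd rfl

theorem Ex_self {B : Set V} {d : V} (hd : d ∉ B) : c.Ex B d d :=
  ⟨c.P_self d, fun _ h => Or.inl h, hd, Or.inl rfl⟩

section
variable {c} {x z s : V} {Z B : Set V}

theorem Cl.nB (h : c.Cl x z s Z B) {a : V} (ha : a ∈ B) : a ∉ c.P x ∧ a ∉ c.P z :=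
  ⟨fun h' => h.comp.2.1 a ha (Or.inl h'), fun h' => h.comp.2.1 a ha (Or.inr h')⟩

theorem Cl.rB (h : c.Cl x z s Z B) : c.r ∉ B := fun h' => (h.nB h').1 (c.r_mem x)

theorem Cl.nbC (h : c.Cl x z s Z B) {a b : V} (ha : a ∈ B) (hab : c.G.Adj a b) (hb : b ∉ B) :
    b ∈ c.P x ∪ c.P z := by
  by_contra h'
  exact hb (h.comp.2.2 a ha b hab h')

theorem Mn.single (h : c.Mn x z s Z B) (y0 : V)
    (hN : ∀ a ∈ B, ∀ b, c.G.Adj a b → b ∉ B → b ∈ c.P y0) : False := by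
  classical
  have hr := h.rB
  obtain ⟨⟨y, y1⟩, ⟨hy, hy1, hadj⟩, hmax⟩ := Set.exists_max_image
    {p : V × V | p.1 ∈ B ∧ p.2 ∉ B ∧ c.G.Adj p.1 p.2} (fun p => c.lev p.2) (Set.toFinite _) (by
      obtain ⟨d, hd⟩ := h.comp.1.1
      obtain ⟨e, he, a, ha, haB, hae⟩ := c.exists_Ex B hr d hd
      exact ⟨(a, e), haB, he.2.2.1, hae⟩)
  have hnb : ∀ a ∈ B, ∀ b, c.G.Adj a b → b ∉ B → b ∈ c.P y1 := fun a ha b hab hb =>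
    c.P_chain (hN a ha b hab hb) (hN y hy y1 hadj hy1) (hmax (a, b) ⟨ha, hb, hab⟩)
  have hyr : y ≠ c.r := fun h' => hr (h' ▸ hy)
  obtain ⟨y2, h2r, hP1, hadj2⟩ : ∃ y2, y2 ≠ c.r ∧ c.P y1 ⊆ c.P y2 ∪ c.P y ∧
      (y2 = y ∨ c.G.Adj y2 y) := by
    by_cases h1 : y1 = c.r
    · refine ⟨y, hyr, ?_, Or.inl rfl⟩
      intro a ha
      rw [h1] at ha
      rw [c.P_r ha]
      exact Or.inl (c.r_mem y)
    · exact ⟨y1, h1, Set.subset_union_left, Or.inr hadj.symm⟩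
  have hD : ∀ D, IsComp c.G (c.P y2 ∪ c.P y) D → (D ∩ B).Nonempty → D ⊆ B := by
    rintro D hD ⟨d, hdD, hdB⟩
    refine hD.1.2 B ⟨d, hdB, hdD⟩ ?_
    rintro a ⟨haB, haD⟩ b hbD hab
    by_contra hb
    exact hD.2.1 b hbD (hP1 (hnb a haB b hab hb))
  have hb1 : B.ncard ≤ c.N ∨ (B.ncard ≤ 2 * c.N ∧ c.lab y2 ≠ c.lab y ∧
      ∃ v ∈ B, v ∉ c.P y2 ∪ c.P y ∧ c.lev v = 1) := by
    refine c.bound h2r hyr B hr ?_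
    intro D hDc hDB
    refine ⟨hD D hDc hDB, fun hbad => ?_⟩
    have := h.min y2 y c.r ∅ D ⟨h2r, hyr, hDc, c.r_mem _, c.r_mem _,
      fun _ _ _ _ _ => by rw [c.lev_r]; omega, by simp, by simp, Or.inl ⟨rfl, hadj2⟩⟩ hbad
    have hlt : D.ncard < B.ncard := Set.ncard_lt_ncard ⟨hD D hDc hDB, fun hsub =>
      hDc.2.1 y (hsub hy) (Or.inr (c.P_self y))⟩ (Set.toFinite _)
    omega
  have hb2 := c.bound_out h.hx h.hz h.comp h.bad
  have hc := c.cover (Q := {w | w ≠ c.r ∧ w ∉ B} ∪ B) (fun w hw => by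
    by_cases hB : w ∈ B
    · exact Or.inr hB
    · exact Or.inl ⟨hw, hB⟩)
  have := Set.ncard_union_le {w | w ≠ c.r ∧ w ∉ B} B
  have e1 : B.ncard ≤ 2 * c.N := by rcases hb1 with h | h <;> omega
  have e2 : {w | w ≠ c.r ∧ w ∉ B}.ncard ≤ 2 * c.N := by rcases hb2 with h | h <;> omega
  omega

/-- gate with exits -/
structure Gt (c : Ctx V) (x z s : V) (B : Set V) (b b' e e' : V) : Prop where
  adj : c.G.Adj b b'
  ex : c.Ex B b e
  ex' : c.Ex B b' e'
  one : b ∈ B ∨ b' ∈ B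
  ePx : e ∈ c.P x
  es : c.lev s ≤ c.lev e
  ePz : e' ∈ c.P z
  eNx : e' ∉ c.P x

/-- type L vertices -/
def TL (c : Ctx V) (x z : V) : Set V := {d | ∀ a ∈ c.P d, a ∈ c.P z → a ∈ c.P x}

/-- find a gate in a connected set -/
theorem Cl.gate (h : c.Cl x z s Z B) (D : Set V) (hD : Cn c.G D) (hDB : D ⊆ B) (y y' : V)
    (hy : y ∈ B ∨ y ∈ c.P x) (hy' : y' ∈ B ∨ (y' ∈ c.P z ∧ y' ∉ c.P x))
    (tL : y ∈ c.TL x z) (tR : y' ∉ c.TL x z) (t : Tch c.G {y} D) (t' : Tch c.G {y'} D) :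
    ∃ d d' e e', c.Gt x z s B d d' e e' ∧ d ∈ c.TL x z ∧ d' ∉ c.TL x z ∧ (d ∈ D ∨ d = y) ∧
      (d' ∈ D ∨ d' = y') ∧ (d ∈ D ∨ d' ∈ D) := by
  obtain ⟨q, hq, p, hp, hyp⟩ := t
  obtain ⟨q', hq', p', hp', hyp'⟩ := t'
  rw [show q = y from hq] at hyp
  rw [show q' = y' from hq'] at hyp'
  have hex : ∃ d d', c.G.Adj d d' ∧ d ∈ c.TL x z ∧ d' ∉ c.TL x z ∧ (d ∈ D ∨ d = y) ∧
      (d' ∈ D ∨ d' = y') ∧ (d ∈ D ∨ d' ∈ D) := by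
    by_cases h1 : p ∈ c.TL x z
    · by_cases h2 : p' ∈ c.TL x z
      · exact ⟨p', y', hyp'.symm, h2, tR, Or.inl hp', Or.inr rfl, Or.inl hp'⟩
      · by_contra hno
        have := hD.2 (c.TL x z) ⟨p, h1, hp⟩ (by
          rintro a ⟨ha, haD⟩ b hb hab
          by_contra hbT
          exact hno ⟨a, b, hab, ha, hbT, Or.inl haD, Or.inl hb, Or.inl haD⟩)
        exact h2 (this hp')
    · exact ⟨y, p, hyp, tL, h1, Or.inr rfl, Or.inl hp, Or.inr hp⟩
  obtain ⟨d, d', hadj, hdL, hdR, hd, hd', hone⟩ := hex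
  have hr := h.rB
  have hdB : d ∈ B ∨ d ∈ c.P x := by
    rcases hd with h | rfl
    · exact Or.inl (hDB h)
    · exact hy
  have hdB' : d' ∈ B ∨ (d' ∈ c.P z ∧ d' ∉ c.P x) := by
    rcases hd' with h | rfl
    · exact Or.inl (hDB h)
    · exact hy'
  have honeB : d ∈ B ∨ d' ∈ B := hone.imp (fun h => hDB h) (fun h => hDB h)
  have e1 : ∃ e, c.Ex B d e ∧ e ∈ c.P x ∧ c.lev s ≤ c.lev e := by
    by_cases hdb : d ∈ B
    · obtain ⟨e, he, a, ha, haB, hae⟩ := c.exists_Ex B hr d hdb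
      refine ⟨e, he, ?_, h.nb a haB e hae he.2.2.1⟩
      rcases h.nbC haB hae he.2.2.1 with h' | h'
      · exact h'
      · exact hdL e he.1 h'
    · have hdB := hdB.resolve_left hdb
      exact ⟨d, c.Ex_self hdb, hdB, h.nb d' (honeB.resolve_left hdb) d hadj.symm hdb⟩
  have e2 : ∃ e, c.Ex B d' e ∧ e ∈ c.P z ∧ e ∉ c.P x := by
    by_cases hdb : d' ∈ B
    · obtain ⟨e, he, a, ha, haB, hae⟩ := c.exists_Ex B hr d' hdb
      have : e ∉ c.P x := by
        intro hex
        refine hdR ?_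
        intro q hq hqz
        rcases he.2.1 q hq with h' | h'
        · exact c.P_trans hex h'
        · exact absurd hqz (h.nB h'.1).2
      exact ⟨e, he, (h.nbC haB hae he.2.2.1).resolve_left this, this⟩
    · have hdB := hdB'.resolve_left hdb
      exact ⟨d', c.Ex_self hdb, hdB⟩
  obtain ⟨e, h1, h2, h3⟩ := e1
  obtain ⟨e', h1', h2', h3'⟩ := e2
  exact ⟨d, d', e, e', ⟨hadj, h1, h1', honeB, h2, h3, h2', h3'⟩, hdL, hdR, hd, hd', hone⟩

theorem Mn.exists_gate (h : c.Mn x z s Z B) : ∃ b b' e e', c.Gt x z s B b b' e e' := by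
  have h1 : ∃ a ∈ B, ∃ y, c.G.Adj a y ∧ y ∉ B ∧ y ∈ c.P x := by
    by_contra hno
    refine h.single z fun a ha b hab hb => ?_
    rcases h.nbC ha hab hb with h' | h'
    · exact absurd ⟨a, ha, b, hab, hb, h'⟩ hno
    · exact h'
  have h2 : ∃ a ∈ B, ∃ y, c.G.Adj a y ∧ y ∉ B ∧ y ∈ c.P z ∧ y ∉ c.P x := by
    by_contra hno
    refine h.single x fun a ha b hab hb => ?_
    by_contra hbx
    exact hno ⟨a, ha, b, hab, hb, (h.nbC ha hab hb).resolve_left hbx, hbx⟩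
  obtain ⟨a, ha, y, hay, hyB, hyx⟩ := h1
  obtain ⟨a', ha', y', hay', hyB', hyz', hyx'⟩ := h2
  obtain ⟨d, d', e, e', hg, -⟩ := h.toCl.gate B h.comp.1 subset_rfl y y' (Or.inr hyx)
    (Or.inr ⟨hyz', hyx'⟩) (fun q hq _ => c.P_trans hyx hq)
    (fun hT => hyx' (hT y' (c.P_self _) hyz')) ⟨y, rfl, a, ha, hay.symm⟩ ⟨y', rfl, a', ha', hay'.symm⟩
  exact ⟨d, d', e, e', hg⟩

end
end Ctx
end FF


namespace FF
namespace Ctx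
variable {V : Type} [Fintype V] (c : Ctx V)

theorem P_min {v : V} {S : Set V} (hS : S.Nonempty) : ∃ m ∈ S, ∀ a ∈ S, c.lev m ≤ c.lev a :=
  Set.exists_min_image S c.lev (Set.toFinite _) hS

/-- the part of a gate path outside a down-closed set -/
def Mp (B F : Set V) (b b' : V) : Set V := {a | a ∈ B ∧ (a ∈ c.P b ∨ a ∈ c.P b') ∧ a ∉ F}

theorem Mp_swap (B F : Set V) (b b' : V) : c.Mp B F b b' = c.Mp B F b' b := by
  ext a
  simp only [Mp, Set.mem_ofPred_eq]
  tauto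

theorem Mp_conn {B F : Set V} {b b' e e' : V} (hadj : c.G.Adj b b') (ex : c.Ex B b e)
    (ex' : c.Ex B b' e') (he : ∀ a ∈ c.P e, a ∉ B) (he' : ∀ a ∈ c.P e', a ∉ B)
    (hF : ∀ a ∈ F, c.P a ⊆ F) (hne : (c.Mp B F b b').Nonempty) : Cn c.G (c.Mp B F b b') := by
  have half : ∀ b e, c.Ex B b e → (∀ a ∈ c.P e, a ∉ B) →
      {a | a ∈ B ∧ a ∈ c.P b ∧ a ∉ F}.Nonempty → Cn c.G {a | a ∈ B ∧ a ∈ c.P b ∧ a ∉ F} ∧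
      b ∈ {a | a ∈ B ∧ a ∈ c.P b ∧ a ∉ F} := by
    rintro b e ex he ⟨a, haB, hab, haF⟩
    refine ⟨c.Cn_seg (v := b) (fun a h => h.2.1) ⟨a, haB, hab, haF⟩ ?_, ?_, c.P_self b, ?_⟩
    · rintro p ⟨hp1, hp2, hp3⟩ q ⟨hq1, hq2, hq3⟩ d hd l1 l2
      refine ⟨?_, hd, ?_⟩
      · rcases ex.2.1 d hd with h | h
        · exact absurd hp1 (he p (c.P_trans h (c.P_chain hp2 hd l1)))
        · exact h.1
      · intro h
        exact hp3 (hF d h (c.P_chain hp2 hd l1))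
    · rcases ex.2.2.2 with h | h
      · exact absurd haB (he a (h ▸ hab))
      · exact h.1
    · intro h
      exact haF (hF b h hab)
  have hU : c.Mp B F b b' = {a | a ∈ B ∧ a ∈ c.P b ∧ a ∉ F} ∪ {a | a ∈ B ∧ a ∈ c.P b' ∧ a ∉ F} := by
    ext a
    simp only [Mp, Set.mem_ofPred_eq, Set.mem_union]
    tauto
  rw [hU] at hne ⊢
  rcases Set.eq_empty_or_nonempty {a | a ∈ B ∧ a ∈ c.P b ∧ a ∉ F} with h1 | h1
  · rw [h1, Set.empty_union] at hne ⊢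
    exact (half b' e' ex' he' hne).1
  · obtain ⟨c1, m1⟩ := half b e ex he h1
    rcases Set.eq_empty_or_nonempty {a | a ∈ B ∧ a ∈ c.P b' ∧ a ∉ F} with h2 | h2
    · rw [h2, Set.union_empty]
      exact c1
    · obtain ⟨c2, m2⟩ := half b' e' ex' he' h2
      exact c1.union c2 ⟨b, m1, b', m2, hadj⟩

theorem Mp_tch {B F : Set V} {b b' e e' : V} (hr : c.r ∉ B) (hadj : c.G.Adj b b') (ex : c.Ex B b e)
    (ex' : c.Ex B b' e') (he : ∀ a ∈ c.P e, a ∉ B) (he' : ∀ a ∈ c.P e', a ∉ B)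
    (hF : ∀ a ∈ F, c.P a ⊆ F) (hne : (c.Mp B F b b').Nonempty) :
    ({a | a ∈ B ∧ a ∈ c.P b ∧ a ∈ F}.Nonempty →
      Tch c.G (c.Mp B F b b') {a | a ∈ B ∧ a ∈ c.P b ∧ a ∈ F}) ∧
    (¬ {a | a ∈ B ∧ a ∈ c.P b ∧ a ∈ F}.Nonempty → Tch c.G (c.Mp B F b b') {e}) := by
  rcases Set.eq_empty_or_nonempty {a | a ∈ B ∧ a ∈ c.P b ∧ a ∉ F} with h1 | h1
  · have hb' : b' ∈ c.Mp B F b b' := by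
      obtain ⟨a, haB, hab, haF⟩ := hne
      have hab' : a ∈ c.P b' := by
        rcases hab with h | h
        · have : a ∈ {a | a ∈ B ∧ a ∈ c.P b ∧ a ∉ F} := ⟨haB, h, haF⟩
          rw [h1] at this
          exact absurd this (by simp)
        · exact h
      refine ⟨?_, Or.inr (c.P_self _), fun h => haF (hF _ h hab')⟩
      rcases ex'.2.2.2 with h | h
      · exact absurd haB (he' a (h ▸ hab'))
      · exact h.1
    rcases ex.2.2.2 with h | h
    · refine ⟨?_, fun _ => ⟨b', hb', e, rfl, h ▸ hadj.symm⟩⟩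
      rintro ⟨a, haB, hab, -⟩
      exact absurd haB (he a (h ▸ hab))
    · have hbF : b ∈ F := by
        by_contra hbF
        have : b ∈ {a | a ∈ B ∧ a ∈ c.P b ∧ a ∉ F} := ⟨h.1, c.P_self _, hbF⟩
        rw [h1] at this
        exact absurd this (by simp)
      have hb : b ∈ {a | a ∈ B ∧ a ∈ c.P b ∧ a ∈ F} := ⟨h.1, c.P_self _, hbF⟩
      exact ⟨fun _ => ⟨b', hb', b, hb, hadj.symm⟩, fun h => absurd ⟨b, hb⟩ h⟩
  · obtain ⟨m, ⟨hmB, hmb, hmF⟩, hmin⟩ := c.P_min (v := b) h1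
    have hmr : m ≠ c.r := fun h => hr (h ▸ hmB)
    have hl := c.lev_par m hmr
    have hadjm := c.par_adj m hmr
    have hpb := c.P_par hmb
    have hmM : m ∈ c.Mp B F b b' := ⟨hmB, Or.inl hmb, hmF⟩
    by_cases hpB : c.par m ∈ B
    · have hpF : c.par m ∈ F := by
        by_contra hpF
        have := hmin _ ⟨hpB, hpb, hpF⟩
        omega
      have hb : c.par m ∈ {a | a ∈ B ∧ a ∈ c.P b ∧ a ∈ F} := ⟨hpB, hpb, hpF⟩
      exact ⟨fun _ => ⟨m, hmM, _, hb, hadjm.symm⟩, fun h => absurd ⟨_, hb⟩ h⟩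
    · have hme : c.lev e < c.lev m := by
        rcases ex.2.1 m hmb with h | h
        · exact absurd hmB (he m h)
        · exact h.2
      have hpe : c.par m = e := by
        rcases ex.2.1 _ hpb with h | h
        · exact c.P_eq_of_lev h (by omega)
        · exact absurd h.1 hpB
      refine ⟨?_, fun _ => ⟨m, hmM, e, rfl, hpe ▸ hadjm.symm⟩⟩
      rintro ⟨a, haB, hab, haF⟩
      have h1 : c.lev e < c.lev a := by
        rcases ex.2.1 a hab with h | h
        · exact absurd haB (he a h)
        · exact h.2
      have h2 : c.lev a < c.lev m := by
        by_contra hge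
        exact hmF (hF a haF (c.P_chain hmb hab (by omega)))
      rw [hpe] at hl
      omega

def UL (x z e : V) : Set V := {a | a ∈ c.P x ∧ a ∉ c.P z ∧ c.lev e < c.lev a}
def UR (x z e' : V) : Set V := {a | a ∈ c.P z ∧ a ∉ c.P x ∧ c.lev e' < c.lev a}
def AL (x z s e : V) : Set V :=
  {a | a ∈ c.P x ∧ c.lev s ≤ c.lev a ∧ (c.lev a ≤ c.lev e ∨ a ∈ c.P z)}
def AR (x z e' : V) : Set V := {a | a ∈ c.P z ∧ a ∉ c.P x ∧ c.lev a ≤ c.lev e'}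

section
variable {c} {x z s b b' e e' : V} {Z B : Set V}

theorem Gt.he (g : c.Gt x z s B b b' e e') (h : c.Cl x z s Z B) : ∀ a ∈ c.P e, a ∉ B :=
  fun _ ha haB => (h.nB haB).1 (c.P_trans g.ePx ha)

theorem Gt.he' (g : c.Gt x z s B b b' e e') (h : c.Cl x z s Z B) : ∀ a ∈ c.P e', a ∉ B :=
  fun _ ha haB => (h.nB haB).2 (c.P_trans g.ePz ha)

theorem Gt.b_or (g : c.Gt x z s B b b' e e') {a : V} (ha : a ∈ c.P b) : a ∈ c.P x ∨ a ∈ B :=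
  (g.ex.2.1 a ha).imp (fun h => c.P_trans g.ePx h) (fun h => h.1)

theorem Gt.b'_or (g : c.Gt x z s B b b' e e') {a : V} (ha : a ∈ c.P b') : a ∈ c.P z ∨ a ∈ B :=
  (g.ex'.2.1 a ha).imp (fun h => c.P_trans g.ePz h) (fun h => h.1)

theorem Gt.b_TL (g : c.Gt x z s B b b' e e') (h : c.Cl x z s Z B) {a : V} (ha : a ∈ c.P b)
    (hz : a ∈ c.P z) : a ∈ c.P x :=
  (g.b_or ha).resolve_right fun hB => (h.nB hB).2 hz

theorem Gt.e'_of (g : c.Gt x z s B b b' e e') (h : c.Cl x z s Z B) {a : V} (ha : a ∈ c.P b')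
    (hB : a ∈ B) : e' ∈ c.P a ∧ c.lev e' < c.lev a := by
  rcases g.ex'.2.1 a ha with h' | h'
  · exact absurd hB (g.he' h a h')
  · exact ⟨c.P_chain g.ex'.1 ha h'.2.le, h'.2⟩

theorem Gt.e_of (g : c.Gt x z s B b b' e e') (h : c.Cl x z s Z B) {a : V} (ha : a ∈ c.P b)
    (hB : a ∈ B) : e ∈ c.P a ∧ c.lev e < c.lev a := by
  rcases g.ex.2.1 a ha with h' | h'
  · exact absurd hB (g.he h a h')
  · exact ⟨c.P_chain g.ex.1 ha h'.2.le, h'.2⟩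

theorem Gt.disj (g : c.Gt x z s B b b' e e') (h : c.Cl x z s Z B) {a : V} (ha : a ∈ c.P b)
    (ha' : a ∈ c.P b') : a ∉ B := by
  intro haB
  have h1 := c.P_trans ha (g.e'_of h ha' haB).1
  exact g.eNx (g.b_TL h h1 g.ePz)

theorem Gt.lev_s (g : c.Gt x z s B b b' e e') (h : c.Cl x z s Z B) {a : V} (ha : a ∈ c.P z)
    (hx : a ∉ c.P x) : c.lev s < c.lev a := by
  by_contra hle
  exact hx (c.P_trans h.sx (c.P_chain ha h.sz (by omega)))

theorem Gt.bottom (g : c.Gt x z s B b b' e e') (h : c.Cl x z s Z B) :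
    ∃ t ∈ c.P z, t ∉ c.P x ∧ t ≠ c.r ∧ c.par t ∈ c.P x ∧ c.par t ∈ c.P z ∧
      c.lev s ≤ c.lev (c.par t) ∧ ∀ a ∈ c.P z, a ∉ c.P x → c.lev t ≤ c.lev a := by
  obtain ⟨m, ⟨h1, h2⟩, hm⟩ := c.P_min (v := z) (S := {a | a ∈ c.P z ∧ a ∉ c.P x}) ⟨e', g.ePz, g.eNx⟩
  have hmr : m ≠ c.r := fun h => h2 (h ▸ c.r_mem x)
  have hl := c.lev_par m hmr
  have := g.lev_s h h1 h2
  refine ⟨m, h1, h2, hmr, ?_, c.P_par h1, by omega, fun a h1 h2 => hm a ⟨h1, h2⟩⟩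
  by_contra hno
  have := hm _ ⟨c.P_par h1, hno⟩
  omega

theorem Gt.AL_conn (g : c.Gt x z s B b b' e e') : Cn c.G (c.AL x z s e) := by
  refine c.Cn_seg (v := x) (fun a h => h.1) ⟨e, g.ePx, g.es, Or.inl le_rfl⟩ ?_
  rintro p ⟨p1, p2, p3⟩ q ⟨q1, q2, q3⟩ d hd l1 l2
  refine ⟨hd, by omega, ?_⟩
  rcases q3 with h | h
  · left; omega
  · right; exact c.P_trans h (c.P_chain hd q1 l2)

theorem Gt.AR_conn (g : c.Gt x z s B b b' e e') : Cn c.G (c.AR x z e') := by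
  refine c.Cn_seg (v := z) (fun a h => h.1) ⟨e', g.ePz, g.eNx, le_rfl⟩ ?_
  rintro p ⟨p1, p2, p3⟩ q ⟨q1, q2, q3⟩ d hd l1 l2
  exact ⟨hd, fun h => p2 (c.P_trans h (c.P_chain p1 hd l1)), by omega⟩

theorem Gt.e_AL (g : c.Gt x z s B b b' e e') : e ∈ c.AL x z s e := ⟨g.ePx, g.es, Or.inl le_rfl⟩
theorem Gt.e_AR (g : c.Gt x z s B b b' e e') : e' ∈ c.AR x z e' := ⟨g.ePz, g.eNx, le_rfl⟩

theorem Gt.ALAR (g : c.Gt x z s B b b' e e') (h : c.Cl x z s Z B) :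
    Tch c.G (c.AL x z s e) (c.AR x z e') := by
  obtain ⟨t, h1, h2, h3, h4, h5, h6, h7⟩ := g.bottom h
  exact ⟨c.par t, ⟨h4, h6, Or.inr h5⟩, t, ⟨h1, h2, h7 e' g.ePz g.eNx⟩, c.par_adj t h3⟩

theorem Gt.UL_spec (g : c.Gt x z s B b b' e e') (hne : (c.UL x z e).Nonempty) :
    x ∈ c.UL x z e ∧ Cn c.G (c.UL x z e) ∧ Tch c.G (c.UL x z e) (c.AL x z s e) ∧
      (e ∉ c.P z → Tch c.G (c.UL x z e) {e}) := by
  have hconn : Cn c.G (c.UL x z e) := by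
    refine c.Cn_seg (v := x) (fun a h => h.1) hne ?_
    rintro p ⟨p1, p2, p3⟩ q ⟨q1, q2, q3⟩ d hd l1 l2
    exact ⟨hd, fun h => p2 (c.P_trans h (c.P_chain p1 hd l1)), by omega⟩
  obtain ⟨m, ⟨h1, h2, h3⟩, hm⟩ := c.P_min (v := x) hne
  have hmr : m ≠ c.r := fun h => h2 (h ▸ c.r_mem z)
  have hl := c.lev_par m hmr
  have hp : c.lev (c.par m) = c.lev e ∨ c.par m ∈ c.P z := by
    by_contra hno
    push Not at hno
    have := hm (c.par m) ⟨c.P_par h1, hno.2, by omega⟩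
    omega
  have hes := g.es
  refine ⟨⟨c.P_self x, fun h => h2 (c.P_trans h h1), ?_⟩, hconn, ?_, fun hez => ?_⟩
  · have := c.P_lev h1; omega
  · refine ⟨m, ⟨h1, h2, h3⟩, c.par m, ⟨c.P_par h1, by omega, ?_⟩, (c.par_adj m hmr).symm⟩
    exact hp.imp (fun h => h.le) id
  · have : c.par m = e := by
      rcases hp with h | h
      · exact c.P_inj (c.P_par h1) g.ePx h
      · exact absurd (c.P_trans h (c.P_chain g.ePx (c.P_par h1) (by omega))) hez
    exact ⟨m, ⟨h1, h2, h3⟩, e, rfl, this ▸ (c.par_adj m hmr).symm⟩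

theorem Gt.UL_empty (g : c.Gt x z s B b b' e e') (hne : ¬ (c.UL x z e).Nonempty) :
    x ∈ c.AL x z s e ∧ (e ∉ c.P z → x = e) := by
  have hle := c.P_lev g.ePx
  have hes := g.es
  have hor : c.lev x ≤ c.lev e ∨ x ∈ c.P z := by
    by_contra hno
    push Not at hno
    exact hne ⟨x, c.P_self x, hno.2, hno.1⟩
  refine ⟨⟨c.P_self x, by omega, hor⟩, fun hez => ?_⟩
  rcases hor with h | h
  · exact (c.P_eq_of_lev g.ePx h).symm
  · exact absurd (c.P_trans h g.ePx) hez

theorem Gt.z_nx (g : c.Gt x z s B b b' e e') : z ∉ c.P x := fun h => g.eNx (c.P_trans h g.ePz)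

theorem Gt.UR_spec (g : c.Gt x z s B b b' e e') (hne : (c.UR x z e').Nonempty) :
    z ∈ c.UR x z e' ∧ Cn c.G (c.UR x z e') ∧ Tch c.G (c.UR x z e') {e'} := by
  have hconn : Cn c.G (c.UR x z e') := by
    refine c.Cn_seg (v := z) (fun a h => h.1) hne ?_
    rintro p ⟨p1, p2, p3⟩ q ⟨q1, q2, q3⟩ d hd l1 l2
    exact ⟨hd, fun h => p2 (c.P_trans h (c.P_chain p1 hd l1)), by omega⟩
  obtain ⟨m, ⟨h1, h2, h3⟩, hm⟩ := c.P_min (v := z) hne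
  have hmr : m ≠ c.r := fun h => h2 (h ▸ c.r_mem x)
  have hl := c.lev_par m hmr
  refine ⟨⟨c.P_self z, g.z_nx, ?_⟩, hconn, ?_⟩
  · have := c.P_lev h1; omega
  · have : c.par m = e' := by
      refine c.P_inj (c.P_par h1) g.ePz ?_
      by_contra hno
      have := hm (c.par m) ⟨c.P_par h1, fun hx =>
        g.eNx (c.P_trans hx (c.P_chain g.ePz (c.P_par h1) (by omega))), by omega⟩
      omega
    exact ⟨m, ⟨h1, h2, h3⟩, e', rfl, this ▸ (c.par_adj m hmr).symm⟩

theorem Gt.UR_empty (g : c.Gt x z s B b b' e e') (hne : ¬ (c.UR x z e').Nonempty) : z = e' := by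
  by_contra hno
  refine hne ⟨z, c.P_self z, g.z_nx, ?_⟩
  by_contra hle
  exact hno (c.P_eq_of_lev g.ePz (by omega)).symm

theorem Gt.U_spec (g : c.Gt x z s B b b' e e') (h : c.Cl x z s Z B)
    (hne : (c.UL x z e ∪ c.UR x z e').Nonempty) :
    Cn c.G (c.UL x z e ∪ c.UR x z e' ∪ Z) ∧ Tch c.G (c.UL x z e ∪ c.UR x z e' ∪ Z) {e'} ∧
      Tch c.G (c.UL x z e ∪ c.UR x z e' ∪ Z) (c.AL x z s e) ∧
      (e ∉ c.P z → Tch c.G (c.UL x z e ∪ c.UR x z e' ∪ Z) {e}) := by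
  have sing : ∀ {S T : Set V} {v : V}, Tch c.G S {v} → v ∈ T → Tch c.G S T := by
    rintro S T v ⟨a, ha, b, rfl, hab⟩ hv
    exact ⟨a, ha, b, hv, hab⟩
  have key : ∀ Y : Set V, Cn c.G Y → (x ∈ Y ∨ Tch c.G Y {x}) → (z ∈ Y ∨ Tch c.G Y {z}) →
      Y ⊆ c.UL x z e ∪ c.UR x z e' ∪ Z → Z ⊆ Y → (x ∈ Y → x ∈ c.UL x z e) →
      (z ∈ Y → z ∈ c.UR x z e') →
      Cn c.G (c.UL x z e ∪ c.UR x z e' ∪ Z) ∧ Tch c.G (c.UL x z e ∪ c.UR x z e' ∪ Z) {e'} ∧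
      Tch c.G (c.UL x z e ∪ c.UR x z e' ∪ Z) (c.AL x z s e) ∧
      (e ∉ c.P z → Tch c.G (c.UL x z e ∪ c.UR x z e' ∪ Z) {e}) := by
    intro Y hY hYx hYz hYU hZY hxx hzz
    have hY2 : Cn c.G (c.UL x z e ∪ Y) := by
      by_cases h1 : (c.UL x z e).Nonempty
      · obtain ⟨k1, k2, -⟩ := g.UL_spec h1
        rcases hYx with h | h
        · exact k2.union_of_inter hY ⟨x, k1, h⟩
        · exact k2.union hY (sing h k1).symm
      · rw [Set.not_nonempty_iff_eq_empty.1 h1, Set.empty_union]; exact hY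
    have hY3 : Cn c.G (c.UR x z e' ∪ (c.UL x z e ∪ Y)) := by
      by_cases h1 : (c.UR x z e').Nonempty
      · obtain ⟨k1, k2, -⟩ := g.UR_spec h1
        rcases hYz with h | h
        · exact k2.union_of_inter hY2 ⟨z, k1, Or.inr h⟩
        · exact k2.union hY2 ((sing h k1).mono Set.subset_union_right subset_rfl).symm
      · rw [Set.not_nonempty_iff_eq_empty.1 h1, Set.empty_union]; exact hY2
    have hEq : c.UR x z e' ∪ (c.UL x z e ∪ Y) = c.UL x z e ∪ c.UR x z e' ∪ Z := by
      ext a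
      have h1 := @hYU a
      have h2 := @hZY a
      simp only [Set.mem_union] at h1 ⊢
      tauto
    rw [hEq] at hY3
    have sL : c.UL x z e ⊆ c.UL x z e ∪ c.UR x z e' ∪ Z := fun a ha => Or.inl (Or.inl ha)
    have sR : c.UR x z e' ⊆ c.UL x z e ∪ c.UR x z e' ∪ Z := fun a ha => Or.inl (Or.inr ha)
    refine ⟨hY3, ?_, ?_, fun hez => ?_⟩
    · by_cases h1 : (c.UR x z e').Nonempty
      · exact (g.UR_spec h1).2.2.mono sR subset_rfl
      · have := g.UR_empty h1
        rcases hYz with h | h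
        · exact absurd ⟨z, hzz h⟩ h1
        · exact (sing h (show z ∈ ({e'} : Set V) from this)).mono hYU subset_rfl
    · by_cases h1 : (c.UL x z e).Nonempty
      · exact (g.UL_spec h1).2.2.1.mono sL subset_rfl
      · rcases hYx with h | h
        · exact absurd ⟨x, hxx h⟩ h1
        · exact (sing h (g.UL_empty h1).1).mono hYU subset_rfl
    · by_cases h1 : (c.UL x z e).Nonempty
      · exact ((g.UL_spec h1).2.2.2 hez).mono sL subset_rfl
      · rcases hYx with h | h
        · exact absurd ⟨x, hxx h⟩ h1
        · exact (sing h (show x ∈ ({e} : Set V) from (g.UL_empty h1).2 hez)).mono hYU subset_rfl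
  rcases h.Zc with ⟨hZ, hxz⟩ | ⟨hZ1, hZ2, hZ3⟩
  · have hxz : c.G.Adj x z := hxz.resolve_left fun h => g.z_nx (h ▸ c.P_self x)
    by_cases h1 : (c.UL x z e).Nonempty
    · have hx := (g.UL_spec h1).1
      refine key (c.UL x z e) (g.UL_spec h1).2.1 (Or.inl hx) (Or.inr ⟨x, hx, z, rfl, hxz⟩)
        (fun a ha => Or.inl (Or.inl ha)) (by simp [hZ]) (fun h => h) (fun h => ?_)
      exact absurd (c.P_self z) h.2.1
    · have h2 : (c.UR x z e').Nonempty := by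
        rcases hne with ⟨a, ha | ha⟩
        · exact absurd ⟨a, ha⟩ h1
        · exact ⟨a, ha⟩
      have hz := (g.UR_spec h2).1
      refine key (c.UR x z e') (g.UR_spec h2).2.1 (Or.inr ⟨z, hz, x, rfl, hxz.symm⟩) (Or.inl hz)
        (fun a ha => Or.inl (Or.inr ha)) (by simp [hZ]) (fun h => ?_) (fun h => h)
      exact absurd (c.P_self x) h.2.1
  · refine key Z hZ1 (Or.inr hZ2) (Or.inr hZ3) (fun a ha => Or.inr ha) subset_rfl (fun hh => ?_)
      (fun hh => ?_)
    · have := h.Zp x hh (Or.inl (c.P_self x))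
      have := c.P_lev h.sx
      omega
    · have := h.Zp z hh (Or.inr (c.P_self z))
      have := c.P_lev h.sz
      omega

end
end Ctx
end FF


namespace FF
namespace Ctx
variable {V : Type} [Fintype V]

section
variable {c : Ctx V} {x z s b b' e e' : V} {Z B : Set V}

theorem Gt.W_ne (g : c.Gt x z s B b b' e e') : (c.Mp B ∅ b b').Nonempty := by
  rcases g.one with h | h
  · exact ⟨b, h, Or.inl (c.P_self _), by simp⟩
  · exact ⟨b', h, Or.inr (c.P_self _), by simp⟩

theorem Gt.W_conn (g : c.Gt x z s B b b' e e') (h : c.Cl x z s Z B) : Cn c.G (c.Mp B ∅ b b') :=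
  c.Mp_conn g.adj g.ex g.ex' (g.he h) (g.he' h) (by simp) g.W_ne

theorem Gt.W_e (g : c.Gt x z s B b b' e e') (h : c.Cl x z s Z B) :
    Tch c.G (c.Mp B ∅ b b') {e} :=
  (c.Mp_tch h.rB g.adj g.ex g.ex' (g.he h) (g.he' h) (by simp) g.W_ne).2 (by
    rintro ⟨a, -, -, h⟩; simp at h)

theorem Gt.W_e' (g : c.Gt x z s B b b' e e') (h : c.Cl x z s Z B) :
    Tch c.G (c.Mp B ∅ b b') {e'} := by
  have hne := g.W_ne
  rw [c.Mp_swap] at hne ⊢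
  exact (c.Mp_tch h.rB g.adj.symm g.ex' g.ex (g.he' h) (g.he h) (by simp) hne).2 (by
    rintro ⟨a, -, -, h⟩; simp at h)

theorem Gt.T1 (g : c.Gt x z s B b b' e e') (h : c.Cl x z s Z B) (D : Set V) (hD : Cn c.G D)
    (hDB : D ⊆ B) (hDb : ∀ a ∈ D, a ∉ c.P b ∧ a ∉ c.P b') (tW : Tch c.G D (c.Mp B ∅ b b'))
    (tU : Tch c.G D (c.UL x z e ∪ c.UR x z e')) :
    (∀ a ∈ D, ∀ f, c.G.Adj a f → f ∈ c.P z → f ∉ c.P x → c.lev e' ≤ c.lev f) ∧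
    (e ∉ c.P z → ∀ a ∈ D, ∀ f, c.G.Adj a f → f ∈ c.P x → c.lev e ≤ c.lev f) := by
  have hUne : (c.UL x z e ∪ c.UR x z e').Nonempty := by
    obtain ⟨_, _, u, hu, _⟩ := tU; exact ⟨u, hu⟩
  obtain ⟨U1, U2, U3, U4⟩ := g.U_spec h hUne
  have tU' : Tch c.G D (c.UL x z e ∪ c.UR x z e' ∪ Z) := tU.mono subset_rfl Set.subset_union_left
  obtain ⟨t, h1, h2, h3, h4, h5, h6, h7⟩ := g.bottom h
  have hte := h7 e' g.ePz g.eNx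
  have hl := c.lev_par t h3
  have her : e' ≠ c.r := fun h => g.eNx (h ▸ c.r_mem x)
  have hle := c.lev_par e' her
  have hpz := c.P_par g.ePz
  have hWc := g.W_conn h
  have hWe := g.W_e h
  have hWe' := g.W_e' h
  have hpar : c.par e' ∈ c.P x → c.par e' ∈ c.P z → t = e' := by
    intro hp1 hp2
    by_contra hne
    have hlt : c.lev t ≤ c.lev (c.par e') := by
      by_contra hh
      exact hne (c.P_inj h1 g.ePz (by omega))
    exact h2 (c.P_trans hp1 (c.P_chain h1 hp2 hlt))
  have hsing : ∀ {S T : Set V} {v : V}, Tch c.G S {v} → v ∈ T → Tch c.G S T := by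
    rintro S T v ⟨a, ha, b, rfl, hab⟩ hv
    exact ⟨a, ha, b, hv, hab⟩
  have nB : ∀ a ∈ B, a ∉ c.P x ∧ a ∉ c.P z := fun a ha => h.nB ha
  have hZB := h.ZB
  have hZp := h.Zp
  have hDB' : ∀ a ∈ D, a ∈ B := hDB
  have ls : ∀ a ∈ c.P z, a ∉ c.P x → c.lev s < c.lev a := fun a => g.lev_s h
  have hes := g.es
  have hex := g.ePx
  have hez' := g.ePz
  have henx := g.eNx
  have heB := g.ex.2.2.1
  have heB' := g.ex'.2.2.1
  by_cases hez : e ∈ c.P z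
  · refine ⟨?_, fun h => absurd hez h⟩
    intro a ha f haf hfz hfx
    by_contra hlt
    have hS : Cn c.G {q | q ∈ c.P z ∧ q ∉ c.P x ∧ c.lev q < c.lev e'} := by
      refine c.Cn_seg (v := z) (fun a h => h.1) ⟨f, hfz, hfx, by omega⟩ ?_
      rintro p ⟨p1, p2, p3⟩ q ⟨q1, q2, q3⟩ d hd l1 l2
      exact ⟨hd, fun h => p2 (c.P_trans h (c.P_chain p1 hd l1)), by omega⟩
    have htlt := h7 f hfz hfx
    refine c.k33 (c.AL x z s e) {e'} D (c.Mp B ∅ b b')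
      {q | q ∈ c.P z ∧ q ∉ c.P x ∧ c.lev q < c.lev e'} (c.UL x z e ∪ c.UR x z e' ∪ Z)
      g.AL_conn (Cn.singleton _) hD hWc hS U1 ?_ (hsing hWe g.e_AL).symm
      ⟨c.par t, ⟨h4, h6, Or.inr h5⟩, t, ⟨h1, h2, by omega⟩, c.par_adj t h3⟩ U3.symm
      hWe'.symm ⟨e', rfl, c.par e', ⟨hpz, fun hp => ?_, by omega⟩, (c.par_adj e' her).symm⟩
      U2.symm tW ⟨a, ha, f, ⟨hfz, hfx, by omega⟩, haf⟩ tU'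
    · clear U1 U2 U3 U4 tU' tU hUne hWc hWe hWe' hS tW hD hsing hpar
      apply pw6 <;> intro a ha hb <;>
        (try simp only [AL, UL, UR, Mp, Set.mem_ofPred_eq, Set.mem_union, Set.mem_singleton_iff, Set.mem_empty_iff_false, not_false_eq_true, and_true] at ha) <;>
        (try simp only [AL, UL, UR, Mp, Set.mem_ofPred_eq, Set.mem_union, Set.mem_singleton_iff, Set.mem_empty_iff_false, not_false_eq_true, and_true] at hb) <;>
        grind
    · have := hpar hp hpz
      rw [this] at htlt
      omega
  · have her0 : e ≠ c.r := fun h => hez (h ▸ c.r_mem z)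
    have hle0 := c.lev_par e her0
    have hse : c.lev s < c.lev e := by
      by_contra hh
      exact hez (c.P_trans h.sz (c.P_chain hex h.sx (by omega)))
    have hpt : c.lev (c.par t) < c.lev e := by
      by_contra hh
      exact hez (c.P_trans h5 (c.P_chain hex h4 (by omega)))
    have hXc : Cn c.G {q | q ∈ c.P x ∧ c.lev s ≤ c.lev q ∧ c.lev q < c.lev e} := by
      refine c.Cn_seg (v := x) (fun a h => h.1) ⟨c.par t, h4, h6, hpt⟩ ?_
      rintro p ⟨p1, p2, p3⟩ q ⟨q1, q2, q3⟩ d hd l1 l2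
      exact ⟨hd, by omega, by omega⟩
    have hYc : Cn c.G ({q | q ∈ c.P x ∧ c.lev s ≤ c.lev q ∧ c.lev q < c.lev e} ∪
        {q | q ∈ c.P z ∧ q ∉ c.P x ∧ c.lev q < c.lev e'}) := by
      by_cases hne : {q | q ∈ c.P z ∧ q ∉ c.P x ∧ c.lev q < c.lev e'}.Nonempty
      · refine hXc.union (c.Cn_seg (v := z) (fun a h => h.1) hne ?_) ?_
        · rintro p ⟨p1, p2, p3⟩ q ⟨q1, q2, q3⟩ d hd l1 l2
          exact ⟨hd, fun h => p2 (c.P_trans h (c.P_chain p1 hd l1)), by omega⟩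
        · obtain ⟨q, hq1, hq2, hq3⟩ := hne
          have := h7 q hq1 hq2
          exact ⟨c.par t, ⟨h4, h6, hpt⟩, t, ⟨h1, h2, by omega⟩, c.par_adj t h3⟩
      · rw [Set.not_nonempty_iff_eq_empty.1 hne, Set.union_empty]; exact hXc
    have main : ¬ Tch c.G D ({q | q ∈ c.P x ∧ c.lev s ≤ c.lev q ∧ c.lev q < c.lev e} ∪
        {q | q ∈ c.P z ∧ q ∉ c.P x ∧ c.lev q < c.lev e'}) := by
      intro tD
      refine c.k33 {e} {e'} D (c.Mp B ∅ b b')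
        ({q | q ∈ c.P x ∧ c.lev s ≤ c.lev q ∧ c.lev q < c.lev e} ∪
          {q | q ∈ c.P z ∧ q ∉ c.P x ∧ c.lev q < c.lev e'}) (c.UL x z e ∪ c.UR x z e' ∪ Z)
        (Cn.singleton _) (Cn.singleton _) hD hWc hYc U1 ?_ hWe.symm
        ⟨e, rfl, c.par e, Or.inl ⟨c.P_par hex, by omega, by omega⟩, (c.par_adj e her0).symm⟩
        (U4 hez).symm hWe'.symm ⟨e', rfl, c.par e', ?_, (c.par_adj e' her).symm⟩
        U2.symm tW tD tU'
      · clear U1 U2 U3 U4 tU' tU hUne hWc hWe hWe' hXc hYc tW hD hsing hpar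
        apply pw6 <;> intro a ha hb <;>
          (try simp only [AL, UL, UR, Mp, Set.mem_ofPred_eq, Set.mem_union, Set.mem_singleton_iff, Set.mem_empty_iff_false, not_false_eq_true, and_true] at ha) <;>
          (try simp only [AL, UL, UR, Mp, Set.mem_ofPred_eq, Set.mem_union, Set.mem_singleton_iff, Set.mem_empty_iff_false, not_false_eq_true, and_true] at hb) <;>
          grind
      · by_cases hp : c.par e' ∈ c.P x
        · have := hpar hp hpz
          rw [← this]
          exact Or.inl ⟨h4, h6, hpt⟩
        · exact Or.inr ⟨hpz, hp, by omega⟩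
    constructor
    · intro a ha f haf hfz hfx
      by_contra hlt
      exact main ⟨a, ha, f, Or.inr ⟨hfz, hfx, by omega⟩, haf⟩
    · intro _ a ha f haf hfx
      by_contra hlt
      refine main ⟨a, ha, f, Or.inl ⟨hfx, ?_, by omega⟩, haf⟩
      exact h.nb a (hDB ha) f haf fun hf => (nB f hf).1 hfx

end
end Ctx
end FF


namespace FF

theorem IsComp.split {V : Type} {G : SimpleGraph V} {X X2 D N T : Set V} (hD : IsComp G X D)
    (hN : N.Nonempty) (hND : ∀ a, a ∈ N ↔ a ∈ D ∧ a ∈ X2) (t : Tch G D T) :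
    Tch G N T ∨ ∃ F, IsComp G (X ∪ X2) F ∧ F ⊆ D ∧ Tch G F N ∧ Tch G F T := by
  obtain ⟨a, ha, u, hu, hau⟩ := t
  by_cases haX : a ∈ X2
  · exact Or.inl ⟨a, (hND a).2 ⟨ha, haX⟩, u, hu, hau⟩
  right
  obtain ⟨F, hF, haF⟩ := exists_comp G (X ∪ X2) a (by
    rintro (h | h)
    · exact hD.2.1 a ha h
    · exact haX h)
  have hFD : F ⊆ D := hD.sub hF.1 (fun q hq h => hF.2.1 q hq (Or.inl h)) ⟨a, haF, ha⟩
  refine ⟨F, hF, hFD, ?_, a, haF, u, hu, hau⟩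
  by_contra hno
  have hsub := hD.1.2 F ⟨a, haF, ha⟩ (by
    rintro p ⟨hp, -⟩ q hq hpq
    refine hF.2.2 p hp q hpq ?_
    rintro (h | h)
    · exact hD.2.1 q hq h
    · exact hno ⟨p, hp, q, (hND q).2 ⟨hq, h⟩, hpq⟩)
  obtain ⟨n, hn⟩ := hN
  have := (hND n).1 hn
  exact hF.2.1 n (hsub this.1) (Or.inr this.2)

namespace Ctx
variable {V : Type} [Fintype V] {c : Ctx V} {x z s b b' e e' d d' f f' : V} {Z B : Set V}

theorem A1_spec (hr : c.r ∉ B) (ex : c.Ex B b e) (ex2 : c.Ex B d f) (he : ∀ a ∈ c.P e, a ∉ B)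
    (hf : ∀ a ∈ c.P f, a ∉ B)
    (hne : {a | a ∈ B ∧ a ∈ c.P b ∧ a ∈ c.P d}.Nonempty) :
    e = f ∧ Cn c.G {a | a ∈ B ∧ a ∈ c.P b ∧ a ∈ c.P d} ∧
      Tch c.G {a | a ∈ B ∧ a ∈ c.P b ∧ a ∈ c.P d} {e} := by
  have key : ∀ {b e}, c.Ex B b e → (∀ a ∈ c.P e, a ∉ B) → ∀ a ∈ B, a ∈ c.P b →
      e ∈ c.P a ∧ c.lev e < c.lev a := by
    intro b e ex he a haB hab
    rcases ex.2.1 a hab with h' | h'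
    · exact absurd haB (he a h')
    · exact ⟨c.P_chain ex.1 hab h'.2.le, h'.2⟩
  have hef : e = f := by
    obtain ⟨a, h1, h2, h3⟩ := hne
    have k1 := key ex he a h1 h2
    have k2 := key ex2 hf a h1 h3
    have l1 := ex.2.1 f (c.P_trans h2 k2.1)
    have l2 := ex2.2.1 e (c.P_trans h3 k1.1)
    refine c.P_inj k1.1 k2.1 (le_antisymm ?_ ?_)
    · rcases l2 with h | h
      · exact c.P_lev h
      · exact absurd h.1 ex.2.2.1
    · rcases l1 with h | h
      · exact c.P_lev h
      · exact absurd h.1 ex2.2.2.1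
  refine ⟨hef, ?_, ?_⟩
  · refine c.Cn_seg (v := b) (fun a h => h.2.1) hne ?_
    rintro p ⟨p1, p2, p3⟩ q ⟨q1, q2, q3⟩ w hw l1 l2
    refine ⟨?_, hw, c.P_trans q3 (c.P_chain hw q2 l2)⟩
    rcases ex.2.1 w hw with h' | h'
    · have := c.P_lev h'
      have := (key ex he p p1 p2).2
      omega
    · exact h'.1
  · obtain ⟨m, ⟨h1, h2, h3⟩, hm⟩ := c.P_min (v := b) hne
    have hmr : m ≠ c.r := fun h => hr (h ▸ h1)
    have hl := c.lev_par m hmr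
    have hk := key ex he m h1 h2
    have hp : c.par m ∉ B := fun h => by
      have := hm (c.par m) ⟨h, c.P_par h2, c.P_par h3⟩
      omega
    have hpe : c.par m ∈ c.P e := (ex.2.1 _ (c.P_par h2)).resolve_right fun h => hp h.1
    have : c.par m = e := c.P_eq_of_lev hpe (by omega)
    exact ⟨m, ⟨h1, h2, h3⟩, e, rfl, this ▸ (c.par_adj m hmr).symm⟩

/-- the closed vertex set of a gate -/
def Xg (c : Ctx V) (x z b b' : V) : Set V := c.P x ∪ c.P z ∪ (c.P b ∪ c.P b')

theorem Gt.comp_tch (g : c.Gt x z s B b b' e e') (h : c.Cl x z s Z B) {D : Set V}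
    (hD : IsComp c.G (c.Xg x z b b') D) (hDB : D ⊆ B) : Tch c.G D (c.Mp B ∅ b b') := by
  by_contra hno
  obtain ⟨w, hw⟩ := hD.1.1
  have hsub := h.comp.1.2 D ⟨w, hw, hDB hw⟩ (by
    rintro p ⟨hp, -⟩ q hq hpq
    refine hD.2.2 p hp q hpq ?_
    rintro (h' | h')
    · exact h.comp.2.1 q hq h'
    · exact hno ⟨p, hp, q, ⟨hq, h', by simp⟩, hpq⟩)
  obtain ⟨n, hn⟩ := g.W_ne
  exact hD.2.1 n (hsub hn.1) (Or.inr hn.2.1)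

theorem Gt.cross_disj (g : c.Gt x z s B b b' e e') (h : c.Cl x z s Z B)
    (g2 : c.Gt x z s B d d' f f') {a : V} (ha : a ∈ c.P b) (ha' : a ∈ c.P d') : a ∉ B := by
  intro haB
  have h1 := c.P_trans ha (g2.e'_of h ha' haB).1
  exact g2.eNx (g.b_TL h h1 g2.ePz)

/-- the touching facts of the difference of two gates -/
theorem Gt.diff (g : c.Gt x z s B b b' e e') (h : c.Cl x z s Z B) (g2 : c.Gt x z s B d d' f f')
    (hne : (c.Mp B (c.P d ∪ c.P d') b b').Nonempty) :
    Cn c.G (c.Mp B (c.P d ∪ c.P d') b b') ∧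
    ({a | a ∈ B ∧ a ∈ c.P b ∧ a ∈ c.P d}.Nonempty →
      Tch c.G (c.Mp B (c.P d ∪ c.P d') b b') {a | a ∈ B ∧ a ∈ c.P b ∧ a ∈ c.P d}) ∧
    (¬ {a | a ∈ B ∧ a ∈ c.P b ∧ a ∈ c.P d}.Nonempty →
      Tch c.G (c.Mp B (c.P d ∪ c.P d') b b') {e}) ∧
    ({a | a ∈ B ∧ a ∈ c.P b' ∧ a ∈ c.P d'}.Nonempty →
      Tch c.G (c.Mp B (c.P d ∪ c.P d') b b') {a | a ∈ B ∧ a ∈ c.P b' ∧ a ∈ c.P d'}) ∧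
    (¬ {a | a ∈ B ∧ a ∈ c.P b' ∧ a ∈ c.P d'}.Nonempty →
      Tch c.G (c.Mp B (c.P d ∪ c.P d') b b') {e'}) := by
  have hF : ∀ a ∈ c.P d ∪ c.P d', c.P a ⊆ c.P d ∪ c.P d' := by
    rintro a (ha | ha)
    · exact (c.P_trans ha).trans Set.subset_union_left
    · exact (c.P_trans ha).trans Set.subset_union_right
  have e1 : {a | a ∈ B ∧ a ∈ c.P b ∧ a ∈ c.P d ∪ c.P d'} =
      {a | a ∈ B ∧ a ∈ c.P b ∧ a ∈ c.P d} := by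
    ext a
    constructor
    · rintro ⟨h1, h2, h3⟩
      exact ⟨h1, h2, h3.resolve_right fun h4 => g.cross_disj h g2 h2 h4 h1⟩
    · rintro ⟨h1, h2, h3⟩
      exact ⟨h1, h2, Or.inl h3⟩
  have e2 : {a | a ∈ B ∧ a ∈ c.P b' ∧ a ∈ c.P d ∪ c.P d'} =
      {a | a ∈ B ∧ a ∈ c.P b' ∧ a ∈ c.P d'} := by
    ext a
    constructor
    · rintro ⟨h1, h2, h3⟩
      exact ⟨h1, h2, h3.resolve_left fun h4 => g2.cross_disj h g h4 h2 h1⟩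
    · rintro ⟨h1, h2, h3⟩
      exact ⟨h1, h2, Or.inr h3⟩
  have m1 := c.Mp_tch h.rB g.adj g.ex g.ex' (g.he h) (g.he' h) hF hne
  have m2 := c.Mp_tch h.rB g.adj.symm g.ex' g.ex (g.he' h) (g.he h) hF (c.Mp_swap _ _ _ _ ▸ hne)
  rw [e1] at m1
  rw [e2, c.Mp_swap] at m2
  exact ⟨c.Mp_conn g.adj g.ex g.ex' (g.he h) (g.he' h) hF hne, m1.1, m1.2, m2.1, m2.2⟩

end Ctx
end FF


namespace FF
namespace Ctx
variable {V : Type} [Fintype V] {c : Ctx V} {x z s b b' e e' d d' f f' : V} {Z B : Set V}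

set_option maxHeartbeats 2000000 in
theorem Gt.cross (h : c.Cl x z s Z B) (g : c.Gt x z s B b b' e e') (g2 : c.Gt x z s B d d' f f')
    {D E : Set V} (hD : IsComp c.G (c.Xg x z b b') D) (hDB : D ⊆ B)
    (tD : Tch c.G D (c.UL x z e ∪ c.UR x z e'))
    (hE : IsComp c.G (c.Xg x z d d') E) (hEB : E ⊆ B)
    (tE : Tch c.G E (c.UL x z f ∪ c.UR x z f'))
    (hN : (c.Mp B (c.P b ∪ c.P b') d d').Nonempty) (hND : c.Mp B (c.P b ∪ c.P b') d d' ⊆ D)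
    (hM : (c.Mp B (c.P d ∪ c.P d') b b').Nonempty) (hME : c.Mp B (c.P d ∪ c.P d') b b' ⊆ E)
    (hf' : c.lev e' ≤ c.lev f') (hf : e ∉ c.P z → c.lev e ≤ c.lev f) : False := by
  obtain ⟨cM, M1, M2, M3, M4⟩ := g.diff h g2 hM
  obtain ⟨cN, N1, N2, N3, N4⟩ := g2.diff h g hN
  have eA : {a | a ∈ B ∧ a ∈ c.P d ∧ a ∈ c.P b} = {a | a ∈ B ∧ a ∈ c.P b ∧ a ∈ c.P d} := by
    exact Set.ext fun a => ⟨fun h => ⟨h.1, h.2.2, h.2.1⟩, fun h => ⟨h.1, h.2.2, h.2.1⟩⟩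
  have eA' : {a | a ∈ B ∧ a ∈ c.P d' ∧ a ∈ c.P b'} = {a | a ∈ B ∧ a ∈ c.P b' ∧ a ∈ c.P d'} := by
    exact Set.ext fun a => ⟨fun h => ⟨h.1, h.2.2, h.2.1⟩, fun h => ⟨h.1, h.2.2, h.2.1⟩⟩
  rw [eA] at N1 N2
  rw [eA'] at N3 N4
  clear eA eA'
  have S1 := A1_spec h.rB g.ex g2.ex (g.he h) (g2.he h)
  have S2 := A1_spec h.rB g.ex' g2.ex' (g.he' h) (g2.he' h)
  have hEb : ∀ a ∈ E, a ∉ c.P d ∧ a ∉ c.P d' := fun a ha =>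
    ⟨fun h' => hE.2.1 a ha (Or.inr (Or.inl h')), fun h' => hE.2.1 a ha (Or.inr (Or.inr h'))⟩
  have hDb : ∀ a ∈ D, a ∉ c.P b ∧ a ∉ c.P b' := fun a ha =>
    ⟨fun h' => hD.2.1 a ha (Or.inr (Or.inl h')), fun h' => hD.2.1 a ha (Or.inr (Or.inr h'))⟩
  have T := g2.T1 h E hE.1 hEB hEb (g2.comp_tch h hE hEB) tE
  have hee' : e' = f' := by
    by_contra hne
    obtain ⟨a, ha, _, rfl, hae⟩ := M4 fun hA => hne (S2 hA).1
    have := T.1 a (hME ha) _ hae g.ePz g.eNx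
    exact hne (c.P_inj g.ePz g2.ePz (by omega))
  have hee : e = f ∨ (e ∈ c.P z ∧ f ∈ c.P z) := by
    by_contra hno
    push Not at hno
    obtain ⟨hne, hno⟩ := hno
    obtain ⟨a, ha, _, rfl, hae⟩ := M2 fun hA => hne (S1 hA).1
    rename_i e
    by_cases hez : e ∈ c.P z
    · have h1 := T.2 (hno hez) a (hME ha) e hae g.ePx
      exact hno hez (c.P_trans hez (c.P_chain g2.ePx g.ePx h1))
    · have h2 := hf hez
      by_cases hfz : f ∈ c.P z
      · exact hez (c.P_trans hfz (c.P_chain g.ePx g2.ePx h2))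
      · have h1 := T.2 hfz a (hME ha) e hae g.ePx
        exact hne (c.P_inj g.ePx g2.ePx (by omega))
  subst hee'
  have hUL : c.UL x z f = c.UL x z e := by
    rcases hee with rfl | ⟨h1, h2⟩
    · rfl
    · have : ∀ a ∈ c.P x, a ∉ c.P z → c.lev e < c.lev a ∧ c.lev f < c.lev a := by
        intro a hax haz
        constructor
        · by_contra hle
          exact haz (c.P_trans h1 (c.P_chain hax g.ePx (by omega)))
        · by_contra hle
          exact haz (c.P_trans h2 (c.P_chain hax g2.ePx (by omega)))
      ext a
      constructor
      · rintro ⟨p, q, _⟩; exact ⟨p, q, (this a p q).1⟩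
      · rintro ⟨p, q, _⟩; exact ⟨p, q, (this a p q).2⟩
  rw [hUL] at tE
  have hfAL : f ∈ c.AL x z s e := by
    rcases hee with rfl | ⟨h1, h2⟩
    · exact g.e_AL
    · exact ⟨g2.ePx, g2.es, Or.inr h2⟩
  have heAL := g.e_AL
  have heAR := g.e_AR
  have hsing : ∀ {S T : Set V} {v : V}, Tch c.G S {v} → v ∈ T → Tch c.G S T := by
    rintro S T v ⟨a, ha, b, rfl, hab⟩ hv
    exact ⟨a, ha, b, hv, hab⟩
  have hUne : (c.UL x z e ∪ c.UR x z e').Nonempty := by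
    obtain ⟨_, _, u, hu, _⟩ := tD; exact ⟨u, hu⟩
  obtain ⟨U1, U2, U3, -⟩ := g.U_spec h hUne
  have U2 := hsing U2 heAR
  have cAL := g.AL_conn
  have cAR := g.AR_conn
  have ALAR := g.ALAR h
  have nB : ∀ a ∈ B, a ∉ c.P x ∧ a ∉ c.P z := fun a ha => h.nB ha
  -- pointwise facts
  have hZB := h.ZB
  have hZp := h.Zp
  have ls : ∀ a ∈ c.P z, a ∉ c.P x → c.lev s < c.lev a := fun a => g.lev_s h
  have hes := g.es
  have x1 : ∀ a ∈ c.P b, a ∈ c.P b' → a ∉ B := fun a => g.disj h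
  have x2 : ∀ a ∈ c.P b, a ∈ c.P d' → a ∉ B := fun a => g.cross_disj h g2
  have x3 : ∀ a ∈ c.P d, a ∈ c.P b' → a ∉ B := fun a => g2.cross_disj h g
  have x4 : ∀ a ∈ c.P d, a ∈ c.P d' → a ∉ B := fun a => g2.disj h
  set M := c.Mp B (c.P d ∪ c.P d') b b' with hMdef
  set N := c.Mp B (c.P b ∪ c.P b') d d' with hNdef
  have mM : ∀ a, a ∈ M ↔ a ∈ B ∧ (a ∈ c.P b ∨ a ∈ c.P b') ∧ a ∉ c.P d ∧ a ∉ c.P d' := by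
    intro a; simp only [hMdef, Mp, Set.mem_ofPred_eq, Set.mem_union, not_or]
  have mN : ∀ a, a ∈ N ↔ a ∈ B ∧ (a ∈ c.P d ∨ a ∈ c.P d') ∧ a ∉ c.P b ∧ a ∉ c.P b' := by
    intro a; simp only [hNdef, Mp, Set.mem_ofPred_eq, Set.mem_union, not_or]
  have hDN : ∀ a, a ∈ N ↔ a ∈ D ∧ a ∈ c.Xg x z d d' := by
    intro a
    constructor
    · intro ha; exact ⟨hND ha, Or.inr ((mN a).1 ha).2.1⟩
    · rintro ⟨h1, h2⟩
      refine (mN a).2 ⟨hDB h1, h2.resolve_left fun h3 => h.comp.2.1 a (hDB h1) h3, hDb a h1⟩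
  have hEM : ∀ a, a ∈ M ↔ a ∈ E ∧ a ∈ c.Xg x z b b' := by
    intro a
    constructor
    · intro ha; exact ⟨hME ha, Or.inr ((mM a).1 ha).2.1⟩
    · rintro ⟨h1, h2⟩
      refine (mM a).2 ⟨hEB h1, h2.resolve_left fun h3 => h.comp.2.1 a (hEB h1) h3, hEb a h1⟩
  clear_value M N
  set A1 := {a | a ∈ B ∧ a ∈ c.P b ∧ a ∈ c.P d} with hA1
  set A2 := {a | a ∈ B ∧ a ∈ c.P b' ∧ a ∈ c.P d'} with hA2
  have mA1 : ∀ a, a ∈ A1 ↔ a ∈ B ∧ a ∈ c.P b ∧ a ∈ c.P d := fun a => Iff.rfl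
  have mA2 : ∀ a, a ∈ A2 ↔ a ∈ B ∧ a ∈ c.P b' ∧ a ∈ c.P d' := fun a => Iff.rfl
  clear_value A1 A2
  have mAL : ∀ a, a ∈ c.AL x z s e ↔
      a ∈ c.P x ∧ c.lev s ≤ c.lev a ∧ (c.lev a ≤ c.lev e ∨ a ∈ c.P z) := fun a => Iff.rfl
  have mAR : ∀ a, a ∈ c.AR x z e' ↔ a ∈ c.P z ∧ a ∉ c.P x ∧ c.lev a ≤ c.lev e' := fun a => Iff.rfl
  have mUL : ∀ a, a ∈ c.UL x z e ↔ a ∈ c.P x ∧ a ∉ c.P z ∧ c.lev e < c.lev a := fun a => Iff.rfl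
  have mUR : ∀ a, a ∈ c.UR x z e' ↔ a ∈ c.P z ∧ a ∉ c.P x ∧ c.lev e' < c.lev a := fun a => Iff.rfl
  set AL := c.AL x z s e
  set AR := c.AR x z e'
  set U0 := c.UL x z e ∪ c.UR x z e' with hU0
  have mU : ∀ a, a ∈ U0 ↔ (a ∈ c.P x ∧ a ∉ c.P z ∧ c.lev e < c.lev a) ∨
    (a ∈ c.P z ∧ a ∉ c.P x ∧ c.lev e' < c.lev a) := fun a => Iff.rfl
  clear_value AL AR U0
  have LU : ∀ {S}, Tch c.G S U0 → Tch c.G S (U0 ∪ Z) := fun t => t.mono subset_rfl Set.subset_union_left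
  -- A and A'
  have cA : Cn c.G (AL ∪ A1) := by
    by_cases hne : A1.Nonempty
    · exact cAL.union (S1 hne).2.1 (hsing (S1 hne).2.2 heAL).symm
    · rw [Set.not_nonempty_iff_eq_empty.1 hne, Set.union_empty]; exact cAL
  have cA' : Cn c.G (AR ∪ A2) := by
    by_cases hne : A2.Nonempty
    · exact cAR.union (S2 hne).2.1 (hsing (S2 hne).2.2 heAR).symm
    · rw [Set.not_nonempty_iff_eq_empty.1 hne, Set.union_empty]; exact cAR
  have MA : Tch c.G M (AL ∪ A1) := by
    by_cases hne : A1.Nonempty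
    · exact (M1 hne).mono subset_rfl Set.subset_union_right
    · exact hsing (M2 hne) (Or.inl heAL)
  have NA : Tch c.G N (AL ∪ A1) := by
    by_cases hne : A1.Nonempty
    · exact (N1 hne).mono subset_rfl Set.subset_union_right
    · exact hsing (N2 hne) (Or.inl hfAL)
  have MA' : Tch c.G M (AR ∪ A2) := by
    by_cases hne : A2.Nonempty
    · exact (M3 hne).mono subset_rfl Set.subset_union_right
    · exact hsing (M4 hne) (Or.inl heAR)
  have NA' : Tch c.G N (AR ∪ A2) := by
    by_cases hne : A2.Nonempty
    · exact (N3 hne).mono subset_rfl Set.subset_union_right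
    · exact hsing (N4 hne) (Or.inl heAR)
  have UA : Tch c.G (AL ∪ A1) (U0 ∪ Z) := U3.symm.mono Set.subset_union_left subset_rfl
  have UA' : Tch c.G (AR ∪ A2) (U0 ∪ Z) := U2.symm.mono Set.subset_union_left subset_rfl
  have hDB' : ∀ a ∈ D, a ∈ B := hDB
  have hEB' : ∀ a ∈ E, a ∈ B := hEB
  -- no component touches everything
  have noF : ∀ F, IsComp c.G (c.Xg x z b b' ∪ c.Xg x z d d') F → F ⊆ B → Tch c.G F M →
      Tch c.G F N → Tch c.G F U0 → False := by
    intro F hF hFB t1 t2 t3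
    have hFX : ∀ a ∈ F, a ∈ B ∧ a ∉ c.P b ∧ a ∉ c.P b' ∧ a ∉ c.P d ∧ a ∉ c.P d' := by
      intro a ha
      have := hF.2.1 a ha
      simp only [Xg, Set.mem_union, not_or] at this
      exact ⟨hFB ha, this.1.2.1, this.1.2.2, this.2.2.1, this.2.2.2⟩
    refine c.k33 F (AL ∪ A1) (AR ∪ A2) M N (U0 ∪ Z) hF.1 cA cA' cM cN U1 ?_ t1 t2 (LU t3)
      MA.symm NA.symm UA MA'.symm NA'.symm UA'
    clear hEM hDN hF cM M1 M2 M3 M4 cN N1 N2 N3 N4 S1 S2 T tD tE hD hE U1 U2 U3 hsing ALAR cA cA' cAL cAR MA NA MA' NA' UA UA' LU t1 t2 t3 hUL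
    apply pw6 <;> intro a ha hb <;> (try simp only [Set.mem_union] at ha hb) <;> grind
  have getD : ∃ D', N ⊆ D' ∧ D' ⊆ D ∧ Cn c.G D' ∧ Tch c.G D' U0 ∧ ∀ a ∈ D', a ∈ N ∨
      ∃ F, IsComp c.G (c.Xg x z b b' ∪ c.Xg x z d d') F ∧ a ∈ F ∧ F ⊆ D ∧ Tch c.G F N ∧
        Tch c.G F U0 := by
    rcases hD.split hN hDN tD with t | ⟨F, hF, hFD, t1, t2⟩
    · exact ⟨N, subset_rfl, hND, cN, t, fun a ha => Or.inl ha⟩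
    · refine ⟨N ∪ F, Set.subset_union_left, Set.union_subset hND hFD, cN.union hF.1 t1.symm,
        t2.mono Set.subset_union_right subset_rfl, ?_⟩
      rintro a (ha | ha)
      · exact Or.inl ha
      · exact Or.inr ⟨F, hF, ha, hFD, t1, t2⟩
  have getE : ∃ E', M ⊆ E' ∧ E' ⊆ E ∧ Cn c.G E' ∧ Tch c.G E' U0 ∧ ∀ a ∈ E', a ∈ M ∨
      ∃ F, IsComp c.G (c.Xg x z b b' ∪ c.Xg x z d d') F ∧ a ∈ F ∧ F ⊆ E ∧ Tch c.G F M ∧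
        Tch c.G F U0 := by
    rcases hE.split hM hEM tE with t | ⟨F, hF, hFD, t1, t2⟩
    · exact ⟨M, subset_rfl, hME, cM, t, fun a ha => Or.inl ha⟩
    · rw [Set.union_comm] at hF
      refine ⟨M ∪ F, Set.subset_union_left, Set.union_subset hME hFD, cM.union hF.1 t1.symm,
        t2.mono Set.subset_union_right subset_rfl, ?_⟩
      rintro a (ha | ha)
      · exact Or.inl ha
      · exact Or.inr ⟨F, hF, ha, hFD, t1, t2⟩
  obtain ⟨D', d1, d2, d3, d4, d5⟩ := getD
  obtain ⟨E', e1, e2, e3, e4, e5⟩ := getE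
  have dE : ∀ a ∈ D', a ∉ E' := by
    intro a haD haE
    rcases d5 a haD with h1 | ⟨F, hF, haF, hFD, t1, t2⟩
    · exact hE.2.1 a (e2 haE) (Or.inr ((mN a).1 h1).2.1)
    rcases e5 a haE with h1 | ⟨F', hF', haF', hFD', t1', t2'⟩
    · exact hD.2.1 a (d2 haD) (Or.inr ((mM a).1 h1).2.1)
    have := hF.eq_of_mem hF' haF haF'
    subst this
    exact noF F hF (hFD.trans hDB) t1' t1 t2
  have hD' : ∀ a ∈ D', a ∈ B ∧ a ∉ c.P b ∧ a ∉ c.P b' := fun a ha => ⟨hDB (d2 ha), hDb a (d2 ha)⟩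
  have hE' : ∀ a ∈ E', a ∈ B ∧ a ∉ c.P d ∧ a ∉ c.P d' := fun a ha => ⟨hEB (e2 ha), hEb a (e2 ha)⟩
  by_cases h1 : A1.Nonempty
  · refine c.k33 D' E' AL A1 (AR ∪ A2) (U0 ∪ Z) d3 e3 cAL (S1 h1).2.1 cA' U1 ?_
      ((N1 h1).mono d1 subset_rfl) (NA'.mono d1 subset_rfl) (LU d4)
      ((M1 h1).mono e1 subset_rfl) (MA'.mono e1 subset_rfl) (LU e4)
      (hsing (S1 h1).2.2 heAL).symm (ALAR.mono subset_rfl Set.subset_union_left) U3.symm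
    clear d1 d2 e1 e2 d5 e5 noF hEM hDN cM M1 M2 M3 M4 cN N1 N2 N3 N4 S1 S2 T tD tE hD hE U1 U2 U3 hsing ALAR cA cA' cAL cAR MA NA MA' NA' UA UA' LU hUL
    apply pw6 <;> intro a ha hb <;> (try simp only [Set.mem_union] at ha hb) <;> grind
  by_cases h2 : A2.Nonempty
  · refine c.k33 D' E' AR A2 (AL ∪ A1) (U0 ∪ Z) d3 e3 cAR (S2 h2).2.1 cA U1 ?_
      ((N3 h2).mono d1 subset_rfl) (NA.mono d1 subset_rfl) (LU d4)
      ((M3 h2).mono e1 subset_rfl) (MA.mono e1 subset_rfl) (LU e4)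
      (hsing (S2 h2).2.2 heAR).symm (ALAR.symm.mono subset_rfl Set.subset_union_left) U2.symm
    clear d1 d2 e1 e2 d5 e5 noF hEM hDN cM M1 M2 M3 M4 cN N1 N2 N3 N4 S1 S2 T tD tE hD hE U1 U2 U3 hsing ALAR cA cA' cAL cAR MA NA MA' NA' UA UA' LU hUL
    apply pw6 <;> intro a ha hb <;> (try simp only [Set.mem_union] at ha hb) <;> grind
  have tDM : Tch c.G D M := by
    obtain ⟨a, ha, w, hw, haw⟩ := g.comp_tch h hD hDB
    refine ⟨a, ha, w, (mM w).2 ⟨hw.1, hw.2.1, ?_, ?_⟩, haw⟩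
    · intro hwd
      rcases hw.2.1 with hb | hb
      · exact h1 ⟨w, (mA1 w).2 ⟨hw.1, hb, hwd⟩⟩
      · exact x3 w hwd hb hw.1
    · intro hwd
      rcases hw.2.1 with hb | hb
      · exact x2 w hb hwd hw.1
      · exact h2 ⟨w, (mA2 w).2 ⟨hw.1, hb, hwd⟩⟩
  have getD2 : ∃ D2, N ⊆ D2 ∧ D2 ⊆ D ∧ Cn c.G D2 ∧ Tch c.G D2 U0 ∧ Tch c.G D2 M ∧
      ∀ a ∈ D2, a ∉ E' := by
    rcases hD.split hN hDN tDM with t | ⟨F, hF, hFD, t1, t2⟩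
    · exact ⟨D', d1, d2, d3, d4, t.mono d1 subset_rfl, dE⟩
    · refine ⟨D' ∪ F, d1.trans Set.subset_union_left, Set.union_subset d2 hFD,
        d3.union hF.1 (t1.symm.mono d1 subset_rfl), d4.mono Set.subset_union_left subset_rfl,
        t2.mono Set.subset_union_right subset_rfl, ?_⟩
      rintro a (ha | ha)
      · exact dE a ha
      · intro haE
        rcases e5 a haE with h1 | ⟨F', hF', haF', hFD', t1', t2'⟩
        · exact hD.2.1 a (hFD ha) (Or.inr ((mM a).1 h1).2.1)
        have := hF.eq_of_mem hF' ha haF'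
        subst this
        exact noF F hF (hFD.trans hDB) t1' t1 t2'
  obtain ⟨D2, q1, q2, q3, q4, q5, q6⟩ := getD2
  have q2' : ∀ a ∈ D2, a ∈ B := fun a ha => hDB (q2 ha)
  refine c.k5 AL AR (U0 ∪ Z) D2 E' cAL cAR U1 q3 e3 ?_ ALAR U3.symm
    ((hsing (N2 h1) hfAL).mono q1 subset_rfl).symm ((hsing (M2 h1) heAL).mono e1 subset_rfl).symm
    U2.symm ((hsing (N4 h2) heAR).mono q1 subset_rfl).symm
    ((hsing (M4 h2) heAR).mono e1 subset_rfl).symm (LU q4).symm (LU e4).symm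
    (q5.mono subset_rfl e1)
  clear q1 q2 q5 d1 d2 e1 e2 d5 e5 noF hEM hDN cM M1 M2 M3 M4 cN N1 N2 N3 N4 S1 S2 T tD tE hD hE U1 U2 U3 hsing ALAR cA cA' cAL cAR MA NA MA' NA' UA UA' LU hUL
  apply pw5 <;> intro a ha hb <;> (try simp only [Set.mem_union] at ha hb) <;> grind

end Ctx
end FF


namespace FF
namespace Ctx
variable {V : Type} [Fintype V] {c : Ctx V} {x z s b b' e e' d d' f f' : V} {Z B : Set V}

/-- vertices of `B` above the gate -/
def Up (c : Ctx V) (x z : V) (B : Set V) (b b' e e' : V) : Set V :=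
  {w | ∃ D, IsComp c.G (c.Xg x z b b') D ∧ w ∈ D ∧ D ⊆ B ∧ Tch c.G D (c.UL x z e ∪ c.UR x z e')}

/-- component resolved by a gate -/
def Res (c : Ctx V) (x b b' : V) (D : Set V) : Prop :=
  (∀ a ∈ D, ∀ q, c.G.Adj a q → q ∉ D → q ∈ c.P b ∪ c.P b') ∨
  (∀ a ∈ D, ∀ q, c.G.Adj a q → q ∉ D → q ∈ c.P x ∪ c.P b) ∨
  (∀ a ∈ D, ∀ q, c.G.Adj a q → q ∉ D → q ∉ c.P x ∪ c.P b)

theorem Gt.nbU (g : c.Gt x z s B b b' e e') {y : V} (hy : y ∈ c.P x ∪ c.P z) (h1 : y ∉ c.P b)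
    (h2 : y ∉ c.P b') : y ∈ c.UL x z e ∪ c.UR x z e' := by
  have hz : y ∈ c.P z → c.lev e' < c.lev y := by
    intro hz
    by_contra hle
    exact h2 (c.P_trans g.ex'.1 (c.P_chain hz g.ePz (by omega)))
  by_cases hx : y ∈ c.P x
  · refine Or.inl ⟨hx, fun h3 => ?_, ?_⟩
    · exact g.eNx (c.P_trans hx (c.P_chain g.ePz h3 (hz h3).le))
    · by_contra hle
      exact h1 (c.P_trans g.ex.1 (c.P_chain hx g.ePx (by omega)))
  · have hyz := hy.resolve_left hx
    exact Or.inr ⟨hyz, hx, hz hyz⟩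

theorem Gt.downL (g : c.Gt x z s B b b' e e') (h : c.Cl x z s Z B) {D : Set V}
    (hD : IsComp c.G (c.Xg x z b b') D) (hDB : D ⊆ B) : ∀ k, ∀ v, c.lev v = k → v ∈ c.TL x z →
    (v ∈ D ∨ v ∈ c.P b ∨ v ∈ c.P x) → ∀ a ∈ c.P v, a ∈ B → a ∈ D ∨ a ∈ c.P b := by
  have triv : ∀ v, (v ∈ c.P b ∨ v ∈ c.P x) → ∀ a ∈ c.P v, a ∈ B → a ∈ D ∨ a ∈ c.P b := by
    rintro v (hv | hv) a ha haB
    · exact Or.inr (c.P_trans hv ha)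
    · exact absurd (c.P_trans hv ha) (h.nB haB).1
  intro k
  induction k with
  | zero =>
    intro v hv _ _ a ha haB
    rw [c.lev_eq_zero.1 hv] at ha
    exact absurd (c.P_r ha ▸ haB) h.rB
  | succ k ih =>
    intro v hv hT hor a ha haB
    rcases hor with hvD | hor
    · rcases c.P_cases ha with rfl | ⟨hvr, ha⟩
      · exact Or.inl hvD
      have hT' : c.par v ∈ c.TL x z := fun q hq => hT q (c.P_trans (c.P_par (c.P_self v)) hq)
      have hl := c.lev_par v hvr
      refine ih (c.par v) (by omega) hT' ?_ a ha haB
      by_cases hpX : c.par v ∈ c.Xg x z b b'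
      · rcases hpX with (h1 | h1) | (h1 | h1)
        · exact Or.inr (Or.inr h1)
        · exact Or.inr (Or.inr (hT' _ (c.P_self _) h1))
        · exact Or.inr (Or.inl h1)
        · rcases g.b'_or h1 with h2 | h2
          · exact Or.inr (Or.inr (hT' _ (c.P_self _) h2))
          · exact absurd (hT' _ (g.e'_of h h1 h2).1 g.ePz) g.eNx
      · exact Or.inl (hD.2.2 v hvD _ (c.par_adj v hvr).symm hpX)
    · exact triv v hor a ha haB

theorem Gt.downR (g : c.Gt x z s B b b' e e') (h : c.Cl x z s Z B) {D : Set V}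
    (hD : IsComp c.G (c.Xg x z b b') D) (hDB : D ⊆ B) : ∀ k, ∀ v, c.lev v = k → v ∉ c.TL x z →
    (v ∈ D ∨ v ∈ c.P b' ∨ v ∈ c.P z) → ∀ a ∈ c.P v, a ∈ B → a ∈ D ∨ a ∈ c.P b' := by
  have triv : ∀ v, (v ∈ c.P b' ∨ v ∈ c.P z) → ∀ a ∈ c.P v, a ∈ B → a ∈ D ∨ a ∈ c.P b' := by
    rintro v (hv | hv) a ha haB
    · exact Or.inr (c.P_trans hv ha)
    · exact absurd (c.P_trans hv ha) (h.nB haB).2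
  intro k
  induction k with
  | zero =>
    intro v hv _ _ a ha haB
    rw [c.lev_eq_zero.1 hv] at ha
    exact absurd (c.P_r ha ▸ haB) h.rB
  | succ k ih =>
    intro v hv hT hor a ha haB
    rcases hor with hvD | hor
    · rcases c.P_cases ha with rfl | ⟨hvr, ha⟩
      · exact Or.inl hvD
      have hT0 : ∃ q ∈ c.P v, q ∈ c.P z ∧ q ∉ c.P x := by
        by_contra hno
        refine hT fun q hq hz => ?_
        by_contra hx
        exact hno ⟨q, hq, hz, hx⟩
      obtain ⟨q, hq, hqz, hqx⟩ := hT0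
      have hq' : q ∈ c.P (c.par v) := by
        rcases c.P_cases hq with rfl | ⟨-, h'⟩
        · exact absurd hqz (h.nB (hDB hvD)).2
        · exact h'
      have hT' : c.par v ∉ c.TL x z := fun hh => hqx (hh q hq' hqz)
      have hl := c.lev_par v hvr
      refine ih (c.par v) (by omega) hT' ?_ a ha haB
      by_cases hpX : c.par v ∈ c.Xg x z b b'
      · rcases hpX with (h1 | h1) | (h1 | h1)
        · exact absurd (c.P_trans h1 hq') hqx
        · exact Or.inr (Or.inr h1)
        · exact absurd (g.b_TL h (c.P_trans h1 hq') hqz) hqx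
        · exact Or.inr (Or.inl h1)
      · exact Or.inl (hD.2.2 v hvD _ (c.par_adj v hvr).symm hpX)
    · exact triv v hor a ha haB

theorem Gt.descend (g : c.Gt x z s B b b' e e') (h : c.Cl x z s Z B) {D : Set V}
    (hD : IsComp c.G (c.Xg x z b b') D) (hDB : D ⊆ B) (hres : ¬ c.Res x b b' D) :
    ∃ d d' f f', c.Gt x z s B d d' f f' ∧
      (c.Up x z B d d' f f').ncard < (c.Up x z B b b' e e').ncard := by
  unfold Res at hres
  push Not at hres
  obtain ⟨⟨a0, ha0, y, hy0, hyD, hyb⟩, ⟨a2, ha2, y2, hy2, hyD2, hyb2⟩,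
    ⟨a1, ha1, y1, hy1, hyD1, hyb1⟩⟩ := hres
  have inX : ∀ a ∈ D, ∀ q, c.G.Adj a q → q ∉ D → q ∈ c.Xg x z b b' := by
    intro a ha q haq hq
    by_contra hX
    exact hq (hD.2.2 a ha q haq hX)
  have hDb : ∀ a ∈ D, a ∉ c.P b ∧ a ∉ c.P b' := fun a ha =>
    ⟨fun h' => hD.2.1 a ha (Or.inr (Or.inl h')), fun h' => hD.2.1 a ha (Or.inr (Or.inr h'))⟩
  have tD : Tch c.G D (c.UL x z e ∪ c.UR x z e') :=
    ⟨a0, ha0, y, g.nbU ((inX a0 ha0 y hy0 hyD).resolve_right hyb) (fun h => hyb (Or.inl h))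
      (fun h => hyb (Or.inr h)), hy0⟩
  have T := g.T1 h D hD.1 hDB hDb (g.comp_tch h hD hDB) tD
  have k2 : y2 ∈ c.P z ∨ y2 ∈ c.P b' := by
    rcases inX a2 ha2 y2 hy2 hyD2 with (h' | h') | (h' | h')
    · exact absurd (Or.inl h') hyb2
    · exact Or.inl h'
    · exact absurd (Or.inr h') hyb2
    · exact Or.inr h'
  have n2 : y2 ∉ c.P x := fun h => hyb2 (Or.inl h)
  obtain ⟨d, d', f, f', g2, dL, dR, hd, hd', hone⟩ := h.gate D hD.1 hDB y1 y2
    (by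
      rcases hyb1 with h' | h'
      · exact Or.inr h'
      · exact (g.b_or h').symm)
    (by
      rcases k2 with h' | h'
      · exact Or.inr ⟨h', n2⟩
      · rcases g.b'_or h' with h'' | h''
        · exact Or.inr ⟨h'', n2⟩
        · exact Or.inl h'')
    (by
      intro q hq hqz
      rcases hyb1 with h' | h'
      · exact c.P_trans h' hq
      · exact g.b_TL h (c.P_trans h' hq) hqz)
    (by
      intro hT
      have hz : y2 ∉ c.P z := fun hz => n2 (hT y2 (c.P_self _) hz)
      have hb := k2.resolve_left hz
      have hB := (g.b'_or hb).resolve_left hz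
      exact g.eNx (hT e' (g.e'_of h hb hB).1 g.ePz))
    ⟨y1, rfl, a1, ha1, hy1.symm⟩ ⟨y2, rfl, a2, ha2, hy2.symm⟩
  have pL : ∀ a ∈ c.P d, a ∈ B → a ∈ D ∨ a ∈ c.P b := by
    refine g.downL h hD hDB _ d rfl dL ?_
    rcases hd with h' | rfl
    · exact Or.inl h'
    · rcases hyb1 with h' | h'
      · exact Or.inr (Or.inr h')
      · exact Or.inr (Or.inl h')
  have pR : ∀ a ∈ c.P d', a ∈ B → a ∈ D ∨ a ∈ c.P b' := by
    refine g.downR h hD hDB _ d' rfl dR ?_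
    rcases hd' with h' | rfl
    · exact Or.inl h'
    · rcases k2 with h' | h'
      · exact Or.inr (Or.inr h')
      · exact Or.inr (Or.inl h')
  have hf : e ∉ c.P z → c.lev e ≤ c.lev f := by
    intro hez
    rcases g2.ex.2.2.2 with h' | ⟨-, a, ha, haB, haf⟩
    · subst h'
      have : d = y1 := hd.resolve_left fun h' => g2.ex.2.2.1 (hDB h')
      exact T.2 hez a1 ha1 d (this ▸ hy1) g2.ePx
    · rcases pL a ha haB with h' | h'
      · exact T.2 hez a h' f haf g2.ePx
      · rw [(A1_spec h.rB g.ex g2.ex (g.he h) (g2.he h) ⟨a, haB, h', ha⟩).1]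
  have hf' : c.lev e' ≤ c.lev f' := by
    rcases g2.ex'.2.2.2 with h' | ⟨-, a, ha, haB, haf⟩
    · subst h'
      have : d' = y2 := hd'.resolve_left fun h' => g2.ex'.2.2.1 (hDB h')
      exact T.1 a2 ha2 d' (this ▸ hy2) g2.ePz g2.eNx
    · rcases pR a ha haB with h' | h'
      · exact T.1 a h' f' haf g2.ePz g2.eNx
      · rw [(A1_spec h.rB g.ex' g2.ex' (g.he' h) (g2.he' h) ⟨a, haB, h', ha⟩).1]
  have hN : (c.Mp B (c.P b ∪ c.P b') d d').Nonempty := by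
    rcases hone with h' | h'
    · exact ⟨d, hDB h', Or.inl (c.P_self _), fun h'' => hD.2.1 d h' (Or.inr h'')⟩
    · exact ⟨d', hDB h', Or.inr (c.P_self _), fun h'' => hD.2.1 d' h' (Or.inr h'')⟩
  have hND : c.Mp B (c.P b ∪ c.P b') d d' ⊆ D := by
    rintro a ⟨haB, ha | ha, hn⟩
    · exact (pL a ha haB).resolve_right fun h' => hn (Or.inl h')
    · exact (pR a ha haB).resolve_right fun h' => hn (Or.inr h')
  refine ⟨d, d', f, f', g2, Set.ncard_lt_ncard ⟨?_, ?_⟩ (Set.toFinite _)⟩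
  · rintro w ⟨E, hE, hwE, hEB, tE⟩
    have hEX : ∀ a ∈ E, a ∉ c.Xg x z b b' := by
      intro a ha haX
      have haB := hEB ha
      have hab : a ∈ c.P b ∪ c.P b' := haX.resolve_left (h.comp.2.1 a haB)
      have haM : a ∈ c.Mp B (c.P d ∪ c.P d') b b' :=
        ⟨haB, hab, fun h' => hE.2.1 a ha (Or.inr h')⟩
      refine Gt.cross h g g2 hD hDB tD hE hEB tE hN hND ⟨a, haM⟩ ?_ hf' hf
      refine hE.sub (g.diff h g2 ⟨a, haM⟩).1 ?_ ⟨a, haM, ha⟩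
      rintro q ⟨q1, q2, q3⟩ (h' | h')
      · exact h.comp.2.1 q q1 h'
      · exact q3 h'
    obtain ⟨D2, hD2, hwD2⟩ := exists_comp c.G (c.Xg x z b b') w (hEX w hwE)
    have hsub : E ⊆ D2 := hD2.sub hE.1 hEX ⟨w, hwE, hwD2⟩
    refine ⟨D2, hD2, hwD2, ?_, ?_⟩
    · exact h.comp.sub hD2.1 (fun a ha h' => hD2.2.1 a ha (Or.inl h')) ⟨w, hwD2, hEB hwE⟩
    · refine tE.mono hsub ?_
      rintro q (⟨q1, q2, q3⟩ | ⟨q1, q2, q3⟩)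
      · refine Or.inl ⟨q1, q2, ?_⟩
        by_cases hez : e ∈ c.P z
        · by_contra hle
          exact q2 (c.P_trans hez (c.P_chain q1 g.ePx (by omega)))
        · have := hf hez; omega
      · exact Or.inr ⟨q1, q2, by omega⟩
  · intro hsub
    obtain ⟨n, hn⟩ := hN
    obtain ⟨E, hE, hnE, -, -⟩ := hsub (⟨D, hD, hND hn, hDB, tD⟩ : n ∈ c.Up x z B b b' e e')
    exact hE.2.1 n hnE (Or.inr hn.2.1)

theorem Mn.top_gate (h : c.Mn x z s Z B) : ∃ b b' e e', c.Gt x z s B b b' e e' ∧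
    ∀ D, IsComp c.G (c.Xg x z b b') D → D ⊆ B → c.Res x b b' D := by
  obtain ⟨b, b', e, e', g⟩ := h.exists_gate
  obtain ⟨⟨b, b', e, e'⟩, hg, hmin⟩ := Set.exists_min_image
    {p : V × V × V × V | c.Gt x z s B p.1 p.2.1 p.2.2.1 p.2.2.2}
    (fun p => (c.Up x z B p.1 p.2.1 p.2.2.1 p.2.2.2).ncard) (Set.toFinite _) ⟨(b, b', e, e'), g⟩
  refine ⟨b, b', e, e', hg, fun D hD hDB => ?_⟩
  by_contra hres
  obtain ⟨d, d', f, f', g2, hlt⟩ := Gt.descend hg h.toCl hD hDB hres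
  exact absurd hlt (not_lt.2 (hmin (d, d', f, f') g2))

end Ctx
end FF


namespace FF
namespace Ctx
variable {V : Type} [Fintype V] {c : Ctx V} {x z s b b' e e' : V} {Z B : Set V}

theorem Gt.lev_W (g : c.Gt x z s B b b' e e') (h : c.Cl x z s Z B) {q : V} (hq : q ∈ B)
    (hb : q ∈ c.P b ∨ q ∈ c.P b') : c.lev s ≤ c.lev q := by
  rcases hb with hb | hb
  · have := (g.e_of h hb hq).2
    have := g.es
    omega
  · have := (g.e'_of h hb hq).2
    have := g.lev_s h g.ePz g.eNx
    omega

theorem Gt.b_ne (g : c.Gt x z s B b b' e e') (h : c.Cl x z s Z B) : b ≠ c.r := by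
  intro hb
  have hB : b' ∈ B := g.one.resolve_left fun h' => h.rB (hb ▸ h')
  have h1 := c.adj_r.1 (hb ▸ g.adj)
  have h2 := (g.e'_of h (c.P_self b') hB).2
  have h3 : c.lev e' = 0 := by omega
  exact g.eNx (c.lev_eq_zero.1 h3 ▸ c.r_mem x)

theorem Gt.b'_ne (g : c.Gt x z s B b b' e e') : b' ≠ c.r := by
  intro hb
  have h1 := g.ex'.1
  rw [hb] at h1
  exact g.eNx (c.P_r h1 ▸ c.r_mem x)

theorem Gt.s_b (g : c.Gt x z s B b b' e e') (h : c.Cl x z s Z B) : s ∈ c.P b :=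
  c.P_trans g.ex.1 (c.P_chain h.sx g.ePx g.es)

theorem Gt.s_b' (g : c.Gt x z s B b b' e e') (h : c.Cl x z s Z B) : s ∈ c.P b' :=
  c.P_trans g.ex'.1 (c.P_chain h.sz g.ePz (g.lev_s h g.ePz g.eNx).le)

theorem Gt.nbs (g : c.Gt x z s B b b' e e') (h : c.Cl x z s Z B) {D : Set V}
    (hD : IsComp c.G (c.Xg x z b b') D) (hDB : D ⊆ B) :
    ∀ a ∈ D, ∀ q, c.G.Adj a q → q ∉ D → c.lev s ≤ c.lev q := by
  intro a ha q haq hq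
  by_cases hB : q ∈ B
  · refine g.lev_W h hB ?_
    by_contra hno
    refine hq (hD.2.2 a ha q haq ?_)
    rintro (h' | h')
    · exact h.comp.2.1 q hB h'
    · exact hno h'
  · exact h.nb a (hDB ha) q haq hB

theorem Gt.low (g : c.Gt x z s B b b' e e') (h : c.Cl x z s Z B) {D : Set V}
    (hD : IsComp c.G (c.Xg x z b b') D) (hDB : D ⊆ B)
    (hl : ∀ a ∈ D, ∀ q, c.G.Adj a q → q ∉ D → q ∈ c.P b ∪ c.P b') :
    c.Cl b b' s ∅ D := by
  refine ⟨g.b_ne h, g.b'_ne, ⟨hD.1, fun a ha h' => hD.2.1 a ha (Or.inr h'), ?_⟩, g.s_b h, g.s_b' h,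
    g.nbs h hD hDB, by simp, by simp, Or.inl ⟨rfl, Or.inr g.adj⟩⟩
  intro a ha q haq hq
  by_contra hqD
  exact hq (hl a ha q haq hqD)

theorem Gt.left (g : c.Gt x z s B b b' e e') (h : c.Cl x z s Z B) {D : Set V}
    (hD : IsComp c.G (c.Xg x z b b') D) (hDB : D ⊆ B)
    (hl : ∀ a ∈ D, ∀ q, c.G.Adj a q → q ∉ D → q ∈ c.P x ∪ c.P b) :
    ∃ Z', c.Cl x b s Z' D := by
  have hmem : ∀ a, a ∈ {a | a ∈ B ∧ a ∈ c.P b' ∧ a ∈ c.P b'} ↔ a ∈ B ∧ a ∈ c.P b' :=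
    fun a => ⟨fun h => ⟨h.1, h.2.1⟩, fun h => ⟨h.1, h.2, h.2⟩⟩
  set W := {a | a ∈ B ∧ a ∈ c.P b' ∧ a ∈ c.P b'} with hW
  have cR : Cn c.G {a | a ∈ c.P z ∧ a ∉ c.P x} := by
    refine c.Cn_seg (v := z) (fun a h => h.1) ⟨e', g.ePz, g.eNx⟩ ?_
    rintro p ⟨p1, p2⟩ q ⟨q1, q2⟩ d hd l1 l2
    exact ⟨hd, fun h => p2 (c.P_trans h (c.P_chain p1 hd l1))⟩
  have cRW : Cn c.G ({a | a ∈ c.P z ∧ a ∉ c.P x} ∪ W) := by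
    by_cases hne : W.Nonempty
    · obtain ⟨-, h1, p, hp, q, hq, hpq⟩ := A1_spec h.rB g.ex' g.ex' (g.he' h) (g.he' h) hne
      rw [show q = e' from hq] at hpq
      exact cR.union h1 ⟨e', ⟨g.ePz, g.eNx⟩, p, hp, hpq.symm⟩
    · rw [Set.not_nonempty_iff_eq_empty.1 hne, Set.union_empty]; exact cR
  have hz : z ∈ {a | a ∈ c.P z ∧ a ∉ c.P x} ∪ W := Or.inl ⟨c.P_self z, g.z_nx⟩
  have hb' : b' ∈ {a | a ∈ c.P z ∧ a ∉ c.P x} ∪ W := by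
    rcases g.ex'.2.2.2 with h' | h'
    · exact Or.inl (h' ▸ ⟨g.ePz, g.eNx⟩)
    · exact Or.inr ((hmem b').2 ⟨h'.1, c.P_self _⟩)
  refine ⟨{a | a ∈ c.P z ∧ a ∉ c.P x} ∪ W ∪ Z, h.hx, g.b_ne h,
    ⟨hD.1, ?_, ?_⟩, h.sx, g.s_b h, g.nbs h hD hDB, ?_, ?_, Or.inr ⟨?_, ?_, ?_⟩⟩
  · rintro a ha (h' | h')
    · exact (h.nB (hDB ha)).1 h'
    · exact hD.2.1 a ha (Or.inr (Or.inl h'))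
  · intro a ha q haq hq
    by_contra hqD
    exact hq (hl a ha q haq hqD)
  · rintro a ((h' | h') | h') haD
    · exact (h.nB (hDB haD)).2 h'.1
    · exact hD.2.1 a haD (Or.inr (Or.inr ((hmem a).1 h').2))
    · exact h.ZB a h' (hDB haD)
  · rintro a ((h' | h') | h') (h2 | h2)
    · exact absurd h2 h'.2
    · exact absurd (g.b_TL h h2 h'.1) h'.2
    · exact absurd h2 (h.nB h'.1).1
    · exact absurd h'.1 (g.disj h h2 h'.2.1)
    · exact h.Zp a h' (Or.inl h2)
    · rcases g.b_or h2 with h3 | h3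
      · exact h.Zp a h' (Or.inl h3)
      · exact absurd h3 (h.ZB a h')
  · rcases h.Zc with ⟨h1, -⟩ | ⟨h1, -, p, hp, q, hq, hpq⟩
    · rw [h1, Set.union_empty]; exact cRW
    · rw [show q = z from hq] at hpq
      exact cRW.union h1 ⟨z, hz, p, hp, hpq.symm⟩
  · rcases h.Zc with ⟨-, h1⟩ | ⟨-, h1, -⟩
    · rcases h1 with h1 | h1
      · exact absurd (h1 ▸ c.P_self x) g.z_nx
      · exact ⟨z, Or.inl hz, x, rfl, h1.symm⟩
    · exact h1.mono Set.subset_union_right subset_rfl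
  · exact ⟨b', Or.inl hb', b, rfl, g.adj.symm⟩

theorem Gt.right (g : c.Gt x z s B b b' e e') (h : c.Cl x z s Z B) {D : Set V}
    (hD : IsComp c.G (c.Xg x z b b') D) (hDB : D ⊆ B)
    (hl : ∀ a ∈ D, ∀ q, c.G.Adj a q → q ∉ D → q ∉ c.P x ∪ c.P b) :
    ∃ t Z', c.Cl z b' t Z' D := by
  obtain ⟨t, t1, t2, -, -, -, -, t7⟩ := g.bottom h
  have hmem : ∀ a, a ∈ {a | a ∈ B ∧ a ∈ c.P b ∧ a ∈ c.P b} ↔ a ∈ B ∧ a ∈ c.P b :=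
    fun a => ⟨fun h => ⟨h.1, h.2.1⟩, fun h => ⟨h.1, h.2, h.2⟩⟩
  set W := {a | a ∈ B ∧ a ∈ c.P b ∧ a ∈ c.P b} with hW
  have cR : Cn c.G {a | a ∈ c.P x ∧ c.lev s ≤ c.lev a} := by
    refine c.Cn_seg (v := x) (fun a h => h.1) ⟨e, g.ePx, g.es⟩ ?_
    rintro p ⟨p1, p2⟩ q ⟨q1, q2⟩ d hd l1 l2
    exact ⟨hd, by omega⟩
  have cRW : Cn c.G ({a | a ∈ c.P x ∧ c.lev s ≤ c.lev a} ∪ W) := by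
    by_cases hne : W.Nonempty
    · obtain ⟨-, h1, p, hp, q, hq, hpq⟩ := A1_spec h.rB g.ex g.ex (g.he h) (g.he h) hne
      rw [show q = e from hq] at hpq
      exact cR.union h1 ⟨e, ⟨g.ePx, g.es⟩, p, hp, hpq.symm⟩
    · rw [Set.not_nonempty_iff_eq_empty.1 hne, Set.union_empty]; exact cR
  have hx : x ∈ {a | a ∈ c.P x ∧ c.lev s ≤ c.lev a} ∪ W := Or.inl ⟨c.P_self x, c.P_lev h.sx⟩
  have hb' : b ∈ {a | a ∈ c.P x ∧ c.lev s ≤ c.lev a} ∪ W := by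
    rcases g.ex.2.2.2 with h' | h'
    · exact Or.inl (h' ▸ ⟨g.ePx, g.es⟩)
    · exact Or.inr ((hmem b).2 ⟨h'.1, c.P_self _⟩)
  have inX : ∀ a ∈ D, ∀ q, c.G.Adj a q → q ∉ D → q ∈ c.P z ∪ c.P b' := by
    intro a ha q haq hq
    have hn := hl a ha q haq hq
    by_contra hX
    refine hq (hD.2.2 a ha q haq ?_)
    rintro ((h' | h') | (h' | h'))
    · exact hn (Or.inl h')
    · exact hX (Or.inl h')
    · exact hn (Or.inr h')
    · exact hX (Or.inr h')
  have hst := g.lev_s h t1 t2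
  have hte := t7 e' g.ePz g.eNx
  refine ⟨t, {a | a ∈ c.P x ∧ c.lev s ≤ c.lev a} ∪ W ∪ Z, h.hz, g.b'_ne,
    ⟨hD.1, ?_, ?_⟩, t1, c.P_trans g.ex'.1 (c.P_chain t1 g.ePz hte), ?_, ?_, ?_, Or.inr ⟨?_, ?_, ?_⟩⟩
  · rintro a ha (h' | h')
    · exact (h.nB (hDB ha)).2 h'
    · exact hD.2.1 a ha (Or.inr (Or.inr h'))
  · intro a ha q haq hq
    by_contra hqD
    exact hq (inX a ha q haq hqD)
  · intro a ha q haq hq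
    have hn := hl a ha q haq hq
    have hz : q ∈ c.P z → c.lev t ≤ c.lev q := fun h' => t7 q h' fun h'' => hn (Or.inl h'')
    rcases inX a ha q haq hq with h' | h'
    · exact hz h'
    · rcases g.b'_or h' with h2 | h2
      · exact hz h2
      · have := (g.e'_of h h' h2).2
        omega
  · rintro a ((h' | h') | h') haD
    · exact (h.nB (hDB haD)).1 h'.1
    · exact hD.2.1 a haD (Or.inr (Or.inl ((hmem a).1 h').2))
    · exact h.ZB a h' (hDB haD)
  · have hz : ∀ a ∈ c.P x, a ∈ c.P z → c.lev a < c.lev t := by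
      intro a hax haz
      by_contra hle
      exact t2 (c.P_trans hax (c.P_chain t1 haz (by omega)))
    rintro a ((h' | h') | h') (h2 | h2)
    · exact hz a h'.1 h2
    · rcases g.b'_or h2 with h3 | h3
      · exact hz a h'.1 h3
      · exact absurd h'.1 (h.nB h3).1
    · exact absurd h2 (h.nB h'.1).2
    · exact absurd h'.1 (g.disj h h'.2.1 h2)
    · have := h.Zp a h' (Or.inr h2); omega
    · rcases g.b'_or h2 with h3 | h3
      · have := h.Zp a h' (Or.inr h3); omega
      · exact absurd h3 (h.ZB a h')
  · rcases h.Zc with ⟨h1, -⟩ | ⟨h1, ⟨p, hp, q, hq, hpq⟩, -⟩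
    · rw [h1, Set.union_empty]; exact cRW
    · rw [show q = x from hq] at hpq
      exact cRW.union h1 ⟨x, hx, p, hp, hpq.symm⟩
  · rcases h.Zc with ⟨-, h1⟩ | ⟨-, -, h1⟩
    · rcases h1 with h1 | h1
      · exact absurd (h1 ▸ c.P_self x) g.z_nx
      · exact ⟨x, Or.inl hx, z, rfl, h1⟩
    · exact h1.mono Set.subset_union_right subset_rfl
  · exact ⟨b, Or.inl hb', b', rfl, g.adj⟩

theorem absurd_ctx (c : Ctx V) : False := by
  obtain ⟨x, z, s, Z, B, h⟩ := c.exists_Mn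
  obtain ⟨b, b', e, e', g, hres⟩ := h.top_gate
  have hC := h.toCl
  have hr := hC.rB
  let Low : Set V → Prop := fun D => ∀ a ∈ D, ∀ q, c.G.Adj a q → q ∉ D → q ∈ c.P b ∪ c.P b'
  let Lft : Set V → Prop := fun D => ∀ a ∈ D, ∀ q, c.G.Adj a q → q ∉ D → q ∈ c.P x ∪ c.P b
  let Rgt : Set V → Prop := fun D => ∀ a ∈ D, ∀ q, c.G.Adj a q → q ∉ D → q ∉ c.P x ∪ c.P b
  let Q1 : Set V := {w | w ≠ c.r ∧ w ∉ B}
  let Q2 : Set V := {w | w ∈ B ∧ (w ∈ c.P b ∪ c.P b' ∨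
    ∃ D, IsComp c.G (c.Xg x z b b') D ∧ D ⊆ B ∧ w ∈ D ∧ Low D)}
  let Q3 : Set V := {w | w ∈ B ∧
    ∃ D, IsComp c.G (c.Xg x z b b') D ∧ D ⊆ B ∧ w ∈ D ∧ ¬ Low D ∧ Lft D}
  let Q4 : Set V := {w | w ∈ B ∧
    ∃ D, IsComp c.G (c.Xg x z b b') D ∧ D ⊆ B ∧ w ∈ D ∧ ¬ Low D ∧ ¬ Lft D ∧ Rgt D}
  have nbad : ∀ {x' z' s' : V} {Z' D : Set V}, IsComp c.G (c.Xg x z b b') D → D ⊆ B →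
      c.Cl x' z' s' Z' D → ¬ c.Bad x' z' D := by
    intro x' z' s' Z' D hD hDB hCl hbad
    have h1 := h.min _ _ _ _ _ hCl hbad
    have h2 : D.ncard < B.ncard := by
      refine Set.ncard_lt_ncard ⟨hDB, fun hsub => ?_⟩ (Set.toFinite _)
      obtain ⟨n, hn⟩ := g.W_ne
      exact hD.2.1 n (hsub hn.1) (Or.inr hn.2.1)
    omega
  have b1 : Q1.ncard ≤ c.N ∨ (Q1.ncard ≤ 2 * c.N ∧ c.lab x ≠ c.lab z ∧
      ∃ v ∈ Q1, v ∉ c.P x ∪ c.P z ∧ c.lev v = 1) := c.bound_out hC.hx hC.hz hC.comp h.bad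
  have b2 : Q2.ncard ≤ c.N ∨ (Q2.ncard ≤ 2 * c.N ∧ c.lab b ≠ c.lab b' ∧
      ∃ v ∈ Q2, v ∉ c.P b ∪ c.P b' ∧ c.lev v = 1) := c.bound (g.b_ne hC) g.b'_ne Q2 (fun h => hr h.1) (by
    rintro K hK ⟨w, hwK, hwB, h1 | ⟨D, hD, hDB, hwD, hL⟩⟩
    · exact absurd h1 (hK.2.1 w hwK)
    · have hCl := g.low hC hD hDB hL
      have : K = D := hK.eq_of_mem hCl.comp hwK hwD
      subst this
      exact ⟨fun a ha => ⟨hDB ha, Or.inr ⟨K, hD, hDB, ha, hL⟩⟩, nbad hD hDB hCl⟩)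
  have b3 : Q3.ncard ≤ c.N ∨ (Q3.ncard ≤ 2 * c.N ∧ c.lab x ≠ c.lab b ∧
      ∃ v ∈ Q3, v ∉ c.P x ∪ c.P b ∧ c.lev v = 1) := c.bound hC.hx (g.b_ne hC) Q3 (fun h => hr h.1) (by
    rintro K hK ⟨w, hwK, hwB, D, hD, hDB, hwD, hnL, hL⟩
    obtain ⟨Z', hCl⟩ := g.left hC hD hDB hL
    have : K = D := hK.eq_of_mem hCl.comp hwK hwD
    subst this
    exact ⟨fun a ha => ⟨hDB ha, K, hD, hDB, ha, hnL, hL⟩, nbad hD hDB hCl⟩)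
  have b4 : Q4.ncard ≤ c.N ∨ (Q4.ncard ≤ 2 * c.N ∧ c.lab z ≠ c.lab b' ∧
      ∃ v ∈ Q4, v ∉ c.P z ∪ c.P b' ∧ c.lev v = 1) := c.bound hC.hz g.b'_ne Q4 (fun h => hr h.1) (by
    rintro K hK ⟨w, hwK, hwB, D, hD, hDB, hwD, hnL, hnL', hL⟩
    obtain ⟨t, Z', hCl⟩ := g.right hC hD hDB hL
    have : K = D := hK.eq_of_mem hCl.comp hwK hwD
    subst this
    exact ⟨fun a ha => ⟨hDB ha, K, hD, hDB, ha, hnL, hnL', hL⟩, nbad hD hDB hCl⟩)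
  have hcov := c.cover (Q := Q1 ∪ Q2 ∪ Q3 ∪ Q4) (by
    intro w hw
    by_cases hB : w ∈ B
    · by_cases hP : w ∈ c.P b ∪ c.P b'
      · exact Or.inl (Or.inl (Or.inr ⟨hB, Or.inl hP⟩))
      obtain ⟨D, hD, hwD⟩ := exists_comp c.G (c.Xg x z b b') w (by
        rintro (h' | h')
        · exact hC.comp.2.1 w hB h'
        · exact hP h')
      have hDB : D ⊆ B :=
        hC.comp.sub hD.1 (fun a ha h' => hD.2.1 a ha (Or.inl h')) ⟨w, hwD, hB⟩
      by_cases hL : Low D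
      · exact Or.inl (Or.inl (Or.inr ⟨hB, Or.inr ⟨D, hD, hDB, hwD, hL⟩⟩))
      by_cases hL' : Lft D
      · exact Or.inl (Or.inr ⟨hB, D, hD, hDB, hwD, hL, hL'⟩)
      have hR : Rgt D := ((hres D hD hDB).resolve_left hL).resolve_left hL'
      exact Or.inr ⟨hB, D, hD, hDB, hwD, hL, hL', hR⟩
    · exact Or.inl (Or.inl (Or.inl ⟨hw, hB⟩)))
  have u1 := Set.ncard_union_le (Q1 ∪ Q2 ∪ Q3) Q4
  have u2 := Set.ncard_union_le (Q1 ∪ Q2) Q3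
  have u3 := Set.ncard_union_le Q1 Q2
  -- witnesses
  have w1 : ∀ v ∈ Q1, v ∉ c.P x ∪ c.P z → v ∉ c.Xg x z b b' := by
    rintro v ⟨-, hvB⟩ hv (h' | (h' | h'))
    · exact hv h'
    · exact (g.b_or h').elim (fun h => hv (Or.inl h)) hvB
    · exact (g.b'_or h').elim (fun h => hv (Or.inr h)) hvB
  have w2 : ∀ v ∈ Q2, v ∉ c.P b ∪ c.P b' → v ∉ c.Xg x z b b' := by
    rintro v ⟨hvB, -⟩ hv (h' | h')
    · exact hC.comp.2.1 v hvB h'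
    · exact hv h'
  have w3 : ∀ v ∈ Q3, v ∉ c.Xg x z b b' := by
    rintro v ⟨-, D, hD, -, hvD, -⟩
    exact hD.2.1 v hvD
  have w4 : ∀ v ∈ Q4, v ∉ c.Xg x z b b' := by
    rintro v ⟨-, D, hD, -, hvD, -⟩
    exact hD.2.1 v hvD
  have d12 : ∀ v ∈ Q1, v ∉ Q2 := fun v h1 h2 => h1.2 h2.1
  have d13 : ∀ v ∈ Q1, v ∉ Q3 := fun v h1 h2 => h1.2 h2.1
  have d14 : ∀ v ∈ Q1, v ∉ Q4 := fun v h1 h2 => h1.2 h2.1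
  have d23 : ∀ v ∈ Q2, v ∉ Q3 := by
    rintro v ⟨-, h1 | ⟨D, hD, -, hvD, hL⟩⟩ ⟨-, D', hD', -, hvD', hL', -⟩
    · exact hD'.2.1 v hvD' (Or.inr h1)
    · exact hL' (hD.eq_of_mem hD' hvD hvD' ▸ hL)
  have d24 : ∀ v ∈ Q2, v ∉ Q4 := by
    rintro v ⟨-, h1 | ⟨D, hD, -, hvD, hL⟩⟩ ⟨-, D', hD', -, hvD', hL', -⟩
    · exact hD'.2.1 v hvD' (Or.inr h1)
    · exact hL' (hD.eq_of_mem hD' hvD hvD' ▸ hL)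
  have d34 : ∀ v ∈ Q3, v ∉ Q4 := by
    rintro v ⟨-, D, hD, -, hvD, -, hL⟩ ⟨-, D', hD', -, hvD', -, hL', -⟩
    exact hL' (hD.eq_of_mem hD' hvD hvD' ▸ hL)
  have fin : ∀ {l l' v1 v2 v3 : V}, l ≠ c.r → l' ≠ c.r → c.P l ⊆ c.Xg x z b b' →
      c.P l' ⊆ c.Xg x z b b' → c.lab l ≠ c.lab l' → v1 ∉ c.Xg x z b b' → v2 ∉ c.Xg x z b b' →
      v3 ∉ c.Xg x z b b' → c.lev v1 = 1 → c.lev v2 = 1 → c.lev v3 = 1 → v1 ≠ v2 → v1 ≠ v3 →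
      v2 ≠ v3 → False := by
    intro l l' v1 v2 v3 hl hl' hP hP' hne n1 n2 n3 l1 l2 l3 m1 m2 m3
    have hx1 := hP (c.lab_mem l)
    have hx2 := hP' (c.lab_mem l')
    refine c.no_five (c.lab_lev hl) (c.lab_lev hl') l1 l2 l3 ?_
    simp only [List.nodup_cons, List.mem_cons, List.not_mem_nil, or_false, not_or,
      List.nodup_nil, and_true, not_false_eq_true]
    refine ⟨⟨hne, ?_, ?_, ?_⟩, ⟨?_, ?_, ?_⟩, ⟨m1, m2⟩, m3⟩
    · rintro rfl; exact n1 hx1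
    · rintro rfl; exact n2 hx1
    · rintro rfl; exact n3 hx1
    · rintro rfl; exact n1 hx2
    · rintro rfl; exact n2 hx2
    · rintro rfl; exact n3 hx2
  have pX : c.P x ⊆ c.Xg x z b b' := fun a ha => Or.inl (Or.inl ha)
  have pZ : c.P z ⊆ c.Xg x z b b' := fun a ha => Or.inl (Or.inr ha)
  have pb : c.P b ⊆ c.Xg x z b b' := fun a ha => Or.inr (Or.inl ha)
  have pb' : c.P b' ⊆ c.Xg x z b b' := fun a ha => Or.inr (Or.inr ha)
  have ne : ∀ {S T : Set V} {v w : V}, (∀ v ∈ S, v ∉ T) → v ∈ S → w ∈ T → v ≠ w := by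
    rintro S T v w hd hv hw rfl
    exact hd v hv hw
  clear_value Q1 Q2 Q3 Q4
  rcases b1 with b1 | ⟨b1, L1, v1, q1, n1, k1⟩ <;> rcases b2 with b2 | ⟨b2, L2, v2, q2, n2, k2⟩ <;>
    rcases b3 with b3 | ⟨b3, L3, v3, q3, n3, k3⟩ <;>
    rcases b4 with b4 | ⟨b4, L4, v4, q4, n4, k4⟩ <;> first
    | omega
    | exact fin hC.hx hC.hz pX pZ L1 (w1 v1 q1 n1) (w2 v2 q2 n2) (w3 v3 q3) k1 k2 k3
        (ne d12 q1 q2) (ne d13 q1 q3) (ne d23 q2 q3)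
    | exact fin hC.hx hC.hz pX pZ L1 (w1 v1 q1 n1) (w2 v2 q2 n2) (w4 v4 q4) k1 k2 k4
        (ne d12 q1 q2) (ne d14 q1 q4) (ne d24 q2 q4)
    | exact fin hC.hx hC.hz pX pZ L1 (w1 v1 q1 n1) (w3 v3 q3) (w4 v4 q4) k1 k3 k4
        (ne d13 q1 q3) (ne d14 q1 q4) (ne d34 q3 q4)
    | exact fin (g.b_ne hC) g.b'_ne pb pb' L2 (w2 v2 q2 n2) (w3 v3 q3) (w4 v4 q4) k2 k3 k4
        (ne d23 q2 q3) (ne d24 q2 q4) (ne d34 q3 q4)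

end Ctx
end FF


namespace FF

theorem exists_pred {V : Type} {G : SimpleGraph V} (hc : G.Connected) (r v : V) (hv : v ≠ r) :
    ∃ u, G.Adj u v ∧ G.dist r u + 1 = G.dist r v := by
  obtain ⟨p, hp⟩ := (hc v r).exists_walk_length_eq_dist
  cases p with
  | nil => exact absurd rfl hv
  | cons h q =>
    rename_i u
    refine ⟨u, h.symm, ?_⟩
    have h1 := SimpleGraph.dist_le q
    have h2 := hc.dist_triangle (u := v) (v := u) (w := r)
    have h3 : G.dist v u = 1 := SimpleGraph.dist_eq_one_iff_adj.2 h
    rw [SimpleGraph.Walk.length_cons] at hp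
    rw [SimpleGraph.dist_comm (u := r) (v := u), SimpleGraph.dist_comm (u := r) (v := v)]
    omega

theorem via_lev {V : Type} {G : SimpleGraph V} {lev : V → ℕ} {w v : V} (h : Via G lev w v) :
    w = v ∨ lev w < lev v := by
  induction h with
  | base => exact Or.inl rfl
  | step u v _ _ h ih =>
    right
    rcases ih with rfl | ih <;> omega

theorem exists_via {V : Type} {G : SimpleGraph V} (hc : G.Connected) (r : V) :
    ∀ n v, G.dist r v = n → v ≠ r → ∃ w, G.Adj r w ∧ Via G (G.dist r) w v := by
  intro n
  induction n with
  | zero =>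
    intro v h hv
    exact absurd ((hc r v).dist_eq_zero_iff.1 h).symm hv
  | succ n ih =>
    intro v h hv
    obtain ⟨u, hu, hd⟩ := exists_pred hc r v hv
    by_cases hur : u = r
    · subst hur
      exact ⟨v, hu, Via.base⟩
    · obtain ⟨w, hw, hV⟩ := ih u (by omega) hur
      exact ⟨w, hw, Via.step u v hV hu hd.symm⟩

theorem exists_par {V : Type} {G : SimpleGraph V} (hc : G.Connected) (r : V) (rank : V → ℕ)
    (v : V) : ∃ u, (v = r → u = r) ∧ (v ≠ r → G.Adj u v ∧ G.dist r u + 1 = G.dist r v ∧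
      (u ≠ r → ∀ w, G.Adj r w → Via G (G.dist r) w v →
        ∃ w', G.Adj r w' ∧ Via G (G.dist r) w' u ∧ rank w' ≤ rank w)) := by
  by_cases hv : v = r
  · exact ⟨r, fun _ => rfl, fun h => absurd hv h⟩
  by_cases ha : G.Adj r v
  · refine ⟨r, fun _ => rfl, fun _ => ⟨ha, ?_, fun h => absurd rfl h⟩⟩
    rw [SimpleGraph.dist_eq_one_iff_adj.2 ha, SimpleGraph.dist_self]
  obtain ⟨w₀, hw₀⟩ := exists_via hc r _ v rfl hv
  obtain ⟨w, ⟨hw, hV⟩, hmin⟩ := exists_minimalFor_of_wellFoundedLT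
    (fun w => G.Adj r w ∧ Via G (G.dist r) w v) rank ⟨w₀, hw₀⟩
  cases hV with
  | base => exact absurd hw ha
  | step u v hVu hu hd =>
    refine ⟨u, fun h => absurd h hv, fun _ => ⟨hu, hd.symm, fun _ w' h1 h2 => ⟨w, hw, hVu, ?_⟩⟩⟩
    rcases le_total (rank w) (rank w') with h | h
    · exact h
    · exact hmin ⟨h1, h2⟩ h

theorem final {V : Type} [Fintype V] [DecidableEq V] (G : SimpleGraph V)
    [DecidableRel G.Adj] (hc : G.Connected) (D : PlaneEmbedding G) (r : V)
    (hr : G.degree r = 4)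
    (hnbr : ((G.neighborFinset r).filter fun w => 5 < G.degree w).card ≤ 1)
    (hbig : 6 * sn G (fun _ => 2) r + 1 < Fintype.card V) : False := by
  classical
  have hdeg : ∀ v, {w | G.Adj v w}.ncard = G.degree v := by
    intro v
    rw [← SimpleGraph.card_neighborFinset_eq_degree, ← Set.ncard_coe_finset]
    congr 1
    ext w
    simp
  let e := Fintype.equivFin V
  let rank : V → ℕ := fun w => if 5 < G.degree w then Fintype.card V else e w
  choose par hp1 hp2 using exists_par hc r rank
  have hpref : ∀ n v w, G.dist r v = n → v ≠ r → G.Adj r w → Via G (G.dist r) w v →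
      rank (par^[G.dist r v - 1] v) ≤ rank w := by
    intro n
    induction n with
    | zero =>
      intro v w h hv
      exact absurd ((hc r v).dist_eq_zero_iff.1 h).symm hv
    | succ n ih =>
      intro v w h hv hw hV
      obtain ⟨ha, hd, hP⟩ := hp2 v hv
      by_cases hpr : par v = r
      · rw [hpr, SimpleGraph.dist_self] at hd
        have hw1 := SimpleGraph.dist_eq_one_iff_adj.2 hw
        rcases via_lev hV with rfl | h'
        · rw [← hd]; exact le_rfl
        · omega
      · obtain ⟨w', h1, h2, h3⟩ := hP hpr w hw hV
        have h4 := ih (par v) w' (by omega) hpr h1 h2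
        have h5 : 0 < G.dist r (par v) := by
          rcases Nat.eq_zero_or_pos (G.dist r (par v)) with h | h
          · exact absurd ((hc r _).dist_eq_zero_iff.1 h).symm hpr
          · exact h
        have h6 : G.dist r v - 1 = (G.dist r (par v) - 1) + 1 := by omega
        rw [h6, Function.iterate_succ_apply]
        exact h4.trans h3
  refine Ctx.absurd_ctx
    { G := G, r := r, N := sn G (fun _ => 2) r, lev := G.dist r, par := par, rank := rank
      k33 := noK33_of_planar D
      k5 := noK5_of_planar D
      lev_r := SimpleGraph.dist_self
      par_r := hp1 r rfl
      lev_pos := fun v hv => Nat.pos_of_ne_zero fun h =>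
        hv ((hc r v).dist_eq_zero_iff.1 h).symm
      par_adj := fun v hv => (hp2 v hv).1
      lev_par := fun v hv => (hp2 v hv).2.1
      lev_adj := ?_
      four := (hdeg r).trans hr
      rank_inj := ?_
      deg := ?_
      pref := fun v w => hpref _ v w rfl
      save := ?_
      big := hbig }
  · intro a b h
    have h2 := hc.dist_triangle (u := r) (v := a) (w := b)
    have h3 : G.dist a b = 1 := SimpleGraph.dist_eq_one_iff_adj.2 h
    omega
  · intro a b ha hb hab
    have la := (e a).2
    have lb := (e b).2
    simp only [rank] at hab
    split_ifs at hab with h1 h2 h2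
    · exact Finset.card_le_one.1 hnbr a (by simp [ha, h1]) b (by simp [hb, h2])
    · omega
    · omega
    · exact e.injective (Fin.ext hab)
  · intro a b ha hb hab
    rw [hdeg]
    have lb := (e b).2
    simp only [rank] at hab
    split_ifs at hab <;> omega
  · intro f hf hd S hS
    have h1 : S.ncard ≤ Nat.card {w : V | ∀ t, w ∉ burnedSet G r f t} := by
      rw [Nat.card_coe_set_eq]
      exact Set.ncard_le_ncard hS (Set.toFinite _)
    refine h1.trans (le_csSup ⟨Nat.card V, ?_⟩ ⟨f, fun t => ⟨Set.toFinite _, hf t, hd t⟩, rfl⟩)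
    rintro m ⟨P, -, rfl⟩
    exact Nat.card_le_card_of_injective _ Subtype.val_injective

end FF

/-- Lemma 3.2: if the fire starts at a vertex of degree 4 with at most one neighbour of
degree greater than 5, in a connected planar graph on `n ≥ 5` vertices, two firefighters
can save more than `n/6 - 1` vertices. -/
theorem sn_two_of_degree_eq_four {V : Type} [Fintype V] [DecidableEq V] (G : SimpleGraph V)
    [DecidableRel G.Adj] (hconn : G.Connected) (hplanar : IsPlanar G)
    (hn : 5 ≤ Fintype.card V) (r : V) (hr : G.degree r = 4)
    (hnbr : ((G.neighborFinset r).filter fun w => 5 < G.degree w).card ≤ 1) :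
    ((sn G (fun _ => 2) r : ℝ)) > (Fintype.card V : ℝ) / 6 - 1 := by
  obtain ⟨D⟩ := hplanar
  by_contra hcon
  refine FF.final G hconn D r hr hnbr ?_
  have h1 : (6 * (sn G (fun _ => 2) r : ℝ) + 6) ≤ Fintype.card V := by linarith
  have h2 : 6 * sn G (fun _ => 2) r + 6 ≤ Fintype.card V := by exact_mod_cast h1
  omega
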